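/- Let C be an absolutely irreducible plane algebraic curve of degree 4 over F_q with simple tangency. Then there exist constants c, ε > 0 such that, after possibly replacing F_q by a finite extension, the set P := C(F_q) of F_q-points of C has cq + O(√q) elements, spans at least ε q^2 lines containing exactly 4 points of P (4-rich lines), and contains no five collinear points. -/

import Mathlib

open MvPolynomial Filter

namespace IncidenceProb

variable {K : Type} [Field K] {ι κ : Type} [Fintype ι] [Fintype κ]

/-- The common zero set in `K^ι` of a family of polynomials. -/
def zeroLocus (S : Set (MvPolynomial ι K)) : Set (ι → K) :=
  {x | ∀ p ∈ S, eval x p = 0}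

/-- The ideal of all polynomials vanishing on a subset of `K^ι`. -/
def vanishingIdeal (V : Set (ι → K)) : Ideal (MvPolynomial ι K) where
  carrier := {p | ∀ x ∈ V, eval x p = 0}
  add_mem' := by
    intro a b ha hb x hx
    simp only [Set.mem_setOf_eq] at ha hb ⊢
    simp [map_add, ha x hx, hb x hx]
  zero_mem' := by intro x hx; simp
  smul_mem' := by
    intro c p hp x hx
    simp only [Set.mem_setOf_eq] at hp ⊢
    simp [smul_eq_mul, hp x hx]

lemma mem_vanishingIdeal {V : Set (ι → K)} {p : MvPolynomial ι K} :
    p ∈ vanishingIdeal V ↔ ∀ x ∈ V, eval x p = 0 := Iff.rfl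

/-- A subset of `K^ι` is an (affine) algebraic set if it is the zero locus of a
family of polynomials. -/
def IsAlgebraicSet (V : Set (ι → K)) : Prop :=
  ∃ S : Set (MvPolynomial ι K), V = zeroLocus S

/-- The coordinate ring of a subset of affine space. -/
abbrev coordRing (V : Set (ι → K)) : Type :=
  MvPolynomial ι K ⧸ vanishingIdeal V

/-- The Zariski topology on affine space `K^ι`: the open sets are generated by the
complements of hypersurfaces. -/
def zariskiTopology (K ι : Type) [Field K] : TopologicalSpace (ι → K) :=
  TopologicalSpace.generateFrom
    {U | ∃ p : MvPolynomial ι K, U = {x | eval x p ≠ 0}}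

/-- Irreducibility of a subset of affine space with respect to the Zariski topology. -/
def IsIrreducibleSet (V : Set (ι → K)) : Prop :=
  letI := zariskiTopology K ι
  IsIrreducible V

/-- The irreducible components of a subset of affine space: the maximal irreducible
subsets (with respect to the Zariski topology). -/
def irreducibleComponentsOf (V : Set (ι → K)) : Set (Set (ι → K)) :=
  letI := zariskiTopology K ι
  {Z | Maximal (fun T => T ⊆ V ∧ IsIrreducible T) Z}

end IncidenceProb

namespace IncidenceProb

/-- The projective plane over `K`. -/
abbrev P2 (K : Type) [Field K] : Type := Projectivization K (Fin 3 → K)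

variable {K : Type} [Field K]

/-- A point of the projective plane lies on the curve cut out by the homogeneous
polynomial `Q`. -/
def OnCurve (Q : MvPolynomial (Fin 3) K) (x : P2 K) : Prop :=
  MvPolynomial.eval x.rep Q = 0

/-- Incidence between a point `L` of the dual projective plane (i.e. a line) and a
point `x` of the projective plane. -/
def Incid (L x : P2 K) : Prop :=
  ∑ i, L.rep i * x.rep i = 0

/-- The probability that a random line of `ℙ²(K)` meets the plane curve `{Q = 0}` in
exactly `k` points: the number of such lines divided by `q² + q + 1`, the total number
of lines of `ℙ²(K)` (where `q = |K|`). -/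
noncomputable def probLine (K : Type) [Field K] [Fintype K]
    (Q : MvPolynomial (Fin 3) K) (k : ℕ) : ℝ :=
  (Nat.card {L : P2 K // Nat.card {x : P2 K // OnCurve Q x ∧ Incid L x} = k} : ℝ) /
    ((Fintype.card K : ℝ) ^ 2 + (Fintype.card K : ℝ) + 1)

/-- Simple tangency for the plane curve of degree `d` cut out by `Q` (to be applied over
an algebraically closed field): there is a line meeting the curve in exactly `d - 1`
points, all of them smooth points of the curve, which is transversal at all of them
except exactly one, where it is tangent.  (At a smooth point, the line `a` is tangent to
the curve exactly when the gradient of `Q` there is proportional to `a`; the tangency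
point then has intersection multiplicity `2`, since the total intersection multiplicity
is `d`.) -/
def SimpleTangencyPlane (d : ℕ) (Q : MvPolynomial (Fin 3) K) : Prop :=
  ∃ a : Fin 3 → K, a ≠ 0 ∧
    Nat.card {x : P2 K // OnCurve Q x ∧ (∑ i, a i * x.rep i = 0)} = d - 1 ∧
    (∀ x : P2 K, OnCurve Q x → (∑ i, a i * x.rep i = 0) →
      (fun r => MvPolynomial.eval x.rep (MvPolynomial.pderiv r Q)) ≠ 0) ∧
    ∃ x₀ : P2 K, (OnCurve Q x₀ ∧ (∑ i, a i * x₀.rep i = 0)) ∧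
      (∃ c : K, (fun r => MvPolynomial.eval x₀.rep (MvPolynomial.pderiv r Q)) = c • a) ∧
      ∀ x : P2 K, OnCurve Q x → (∑ i, a i * x.rep i = 0) →
        (∃ c : K, (fun r => MvPolynomial.eval x.rep (MvPolynomial.pderiv r Q)) = c • a) →
        x = x₀

end IncidenceProb

/-! The lines through a rational point `v` of a quartic `C` meet it residually in a one-parameter
family of cubics, and such a line is four-rich when its residual cubic splits completely with
distinct roots. The parameters are sorted by the quadratic resolvent of the cubic: a separable
cubic with three, one or no rational roots has a resolvent with two, none or at most two. Adding
up over the pencil, twice the number of points of `C` plus the number of points of the resolvent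
curve is at most `2 q + 6 s + O(1)`, where `s` counts the four-rich lines through `v`. Both curves
have `q + O(√q)` points by Stepanov's method, provided the resolvent curve is absolutely
irreducible, and then `s ≥ q / 12` for large `q`.

Irreducibility of the resolvent is where simple tangency enters. A root of the resolvent, polynomial
in the parameter, would make the discriminant divide an explicit obstruction polynomial. If `v` is a
transversal point of the tangent line, then at the parameter of this line the discriminant vanishes
and the obstruction does not; neither fact is special to odd characteristic. Non-divisibility is an
open condition on `v`, so it holds for all but finitely many points of `C`, and double counting
incidences between these points and the four-rich lines concludes. -/

namespace IncidenceProb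

open scoped Polynomial Matrix

/-! ### Filtered algebras and the Stepanov method -/

/-- An exhaustive filtration of a `k`-algebra by subspaces of dimension `width * (n + 1)`,
multiplicative up to the constant `shift`. It plays the role of the Riemann–Roch spaces `L(nD)` of
a divisor `D` at infinity on an affine curve. -/
structure LinearFiltration (k A : Type*) [Field k] [CommRing A] [Algebra k A] where
  piece : ℕ → Submodule k A
  width : ℕ
  shift : ℕ
  mono : Monotone piece
  exhaustive : ∀ a, ∃ n, a ∈ piece n
  mul_mem : ∀ {m n a b}, a ∈ piece m → b ∈ piece n → a * b ∈ piece (m + n + shift)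
  finiteDimensional : ∀ n, FiniteDimensional k (piece n)
  finrank_piece : ∀ n, Module.finrank k (piece n) = width * (n + 1)

theorem surjective_pi_of_injective_algHom {k A ι : Type*} [Field k] [CommRing A] [Algebra k A]
    [Finite ι] {ψ : ι → A →ₐ[k] k} (hψ : Function.Injective ψ) :
    Function.Surjective (LinearMap.pi fun i => (ψ i).toLinearMap : A →ₗ[k] ι → k) := by
  classical
  have := Fintype.ofFinite ι
  rw [← LinearMap.range_eq_top]
  by_contra hne
  obtain ⟨f, hf0, hf⟩ := Submodule.exists_le_ker_of_lt_top _ (lt_top_iff_ne_top.2 hne)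
  have hli := Fintype.linearIndependent_iff.1
    ((linearIndependent_algHom_toLinearMap k A k).comp ψ hψ) (fun i => f (Pi.single i 1)) <| by
      ext a
      have hfa : f (fun i => ψ i a) = 0 := hf ⟨a, rfl⟩
      rw [LinearMap.pi_apply_eq_sum_univ f] at hfa
      have hsingle : ∀ i : ι, (fun j => if i = j then (1 : k) else 0) = Pi.single i 1 := fun i => by
        ext j; simp [Pi.single_apply, eq_comm]
      simpa [hsingle, mul_comm] using hfa
  exact hf0 (LinearMap.pi_ext' fun i => LinearMap.ext_ring (hli i))

theorem exists_eq_X_pow_mul_constantCoeff_ne_zero {k M : Type*} [Field k] [Finite M]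
    {g : M → PowerSeries k} (hg : ∃ i, g i ≠ 0) :
    ∃ (s : ℕ) (u : M → PowerSeries k), (∀ i, g i = PowerSeries.X ^ s * u i) ∧
      ∃ i, PowerSeries.constantCoeff (u i) ≠ 0 := by
  obtain ⟨j, hj⟩ := hg
  have : Nonempty M := ⟨j⟩
  obtain ⟨i₀, hi₀⟩ := Finite.exists_min fun i => (g i).order
  have hne : g i₀ ≠ 0 := by
    intro h
    have hle := hi₀ j
    rw [h, PowerSeries.order_zero, top_le_iff, PowerSeries.order_eq_top] at hle
    exact hj hle
  have hfin : ((g i₀).order.toNat : ℕ∞) = (g i₀).order :=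
    ENat.natCast_toNat (mt PowerSeries.order_eq_top.1 hne)
  have hdvd : ∀ i, PowerSeries.X ^ (g i₀).order.toNat ∣ g i := fun i =>
    PowerSeries.X_pow_dvd_iff.2 fun n hn => PowerSeries.coeff_of_lt_order _ <|
      (show (n : ℕ∞) < (g i₀).order by rw [← hfin]; exact_mod_cast hn).trans_le (hi₀ i)
  choose u hu using hdvd
  refine ⟨_, u, hu, i₀, fun h => PowerSeries.coeff_order hne ?_⟩
  conv_lhs => rw [hu i₀]
  rw [PowerSeries.coeff_X_pow_mul', if_pos (by rw [← hu i₀])]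
  simpa [← hu i₀] using h

theorem X_pow_char_pow_dvd_sum_of_sum_mul_pow_eq_zero {k M : Type*} [Field k]
    [Fintype M] (p b : ℕ) [Fact p.Prime] [CharP k p] {g u : M → PowerSeries k}
    (hsum : ∑ j, g j * u j ^ p ^ b = 0) :
    PowerSeries.X ^ p ^ b ∣ ∑ j, PowerSeries.constantCoeff (u j) ^ p ^ b • g j := by
  have : CharP (PowerSeries k) p :=
    charP_of_injective_algebraMap (algebraMap k (PowerSeries k)).injective p
  choose w hw using fun j => PowerSeries.X_dvd_iff.2 (show PowerSeries.constantCoeff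
    (u j - algebraMap k _ (PowerSeries.constantCoeff (u j))) = 0 by simp)
  have hpow : ∀ j, u j ^ p ^ b = algebraMap k _ (PowerSeries.constantCoeff (u j) ^ p ^ b) +
      PowerSeries.X ^ p ^ b * w j ^ p ^ b := fun j => by
    conv_lhs => rw [← sub_add_cancel (u j) (algebraMap k _ (PowerSeries.constantCoeff (u j))),
      hw j, add_pow_char_pow, mul_pow, ← map_pow, add_comm]
  rw [show (∑ j, PowerSeries.constantCoeff (u j) ^ p ^ b • g j) =
      -(PowerSeries.X ^ p ^ b * ∑ j, g j * w j ^ p ^ b) by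
    rw [eq_neg_iff_add_eq_zero, ← hsum, Finset.mul_sum, ← Finset.sum_add_distrib]
    refine Finset.sum_congr rfl fun j _ => ?_
    rw [hpow, Algebra.smul_def]
    ring]
  exact (dvd_mul_right _ _).neg_right

namespace LinearFiltration

variable {k A : Type*} [Field k] [CommRing A] [Algebra k A] (S : LinearFiltration k A)

theorem pow_mem {m t : ℕ} {f : A} (hf : f ∈ S.piece m) (ht : t ≠ 0) :
    f ^ t ∈ S.piece (t * (m + S.shift)) := by
  obtain ⟨t, rfl⟩ := Nat.exists_eq_succ_of_ne_zero ht
  clear ht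
  induction t with
  | zero => simpa using S.mono (Nat.le_add_right m S.shift) hf
  | succ t ih =>
    rw [pow_succ, show (t + 1).succ * (m + S.shift) = t.succ * (m + S.shift) + m + S.shift by
      simp only [Nat.succ_eq_add_one]; ring]
    exact S.mul_mem ih hf

theorem exists_forall_ge_surjective_domRestrict {R : Type*} [AddCommGroup R] [Module k R]
    [FiniteDimensional k R] {π : A →ₗ[k] R} (hπ : Function.Surjective π) :
    ∃ n₀, ∀ n ≥ n₀, Function.Surjective (π.domRestrict (S.piece n)) := by
  let image : ℕ →o Submodule k R :=
    ⟨fun n => (S.piece n).map π, fun _ _ h => Submodule.map_mono (S.mono h)⟩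
  obtain ⟨n₀, hn₀⟩ :=
    (monotone_stabilizes_iff_noetherian (R := k) (M := R)).2 inferInstance image
  refine ⟨n₀, fun n hn r => ?_⟩
  obtain ⟨a, rfl⟩ := hπ r
  obtain ⟨j, hj⟩ := S.exhaustive a
  have hmem : π a ∈ image (max j n₀) := ⟨a, S.mono (le_max_left _ _) hj, rfl⟩
  rw [← hn₀ _ (le_max_right _ _), hn₀ n hn] at hmem
  obtain ⟨b, hb, hba⟩ := hmem
  exact ⟨⟨b, hb⟩, hba⟩

theorem exists_ne_zero_forall_sum_mul_eq_zero {ι M : Type*} [Fintype M] {l n N : ℕ}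
    {s : M → A} (hs : ∀ j, s j ∈ S.piece l) {ψ φψ : ι → A →ₐ[k] k} {W : Submodule k (ι → k)}
    [FiniteDimensional k W]
    (hW : ∀ {f g}, f ∈ S.piece l → g ∈ S.piece n → (fun i => ψ i f * φψ i g) ∈ W)
    (hWN : Module.finrank k W ≤ N) (hN : N < Fintype.card M * (S.width * (n + 1))) :
    ∃ g : M → S.piece n, g ≠ 0 ∧ ∀ i, ∑ j, ψ i (s j) * φψ i (g j) = 0 := by
  have := S.finiteDimensional
  let Φ : (M → S.piece n) →ₗ[k] W := LinearMap.codRestrict W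
    (∑ j, LinearMap.pi fun i => ψ i (s j) •
      ((φψ i).toLinearMap.comp ((S.piece n).subtype.comp (LinearMap.proj j))))
    fun g => by
      rw [LinearMap.sum_apply]
      exact Submodule.sum_mem _ fun j _ => hW (hs j) (g j).2
  have hker : LinearMap.ker Φ ≠ ⊥ := by
    apply LinearMap.ker_ne_bot_of_finrank_lt
    simpa [Module.finrank_pi_fintype, S.finrank_piece] using hWN.trans_lt hN
  obtain ⟨g, hg, hg0⟩ := (Submodule.ne_bot_iff _).1 hker
  refine ⟨g, hg0, fun i => ?_⟩
  simpa [Φ] using congrFun (congrArg Subtype.val (LinearMap.mem_ker.1 hg)) i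

variable [IsDomain A]

/-- An element of degree `m` generates an ideal of codimension at most `width * (m + shift)`:
compare dimensions along multiplication by `h` in a sufficiently large piece. -/
theorem finrank_le_of_mul_mem_ker {R : Type*} [AddCommGroup R] [Module k R]
    [FiniteDimensional k R] {π : A →ₗ[k] R} (hπ : Function.Surjective π) {m : ℕ} {h : A}
    (hm : h ∈ S.piece m) (h0 : h ≠ 0) (hker : ∀ a, π (h * a) = 0) :
    Module.finrank k R ≤ S.width * (m + S.shift) := by
  obtain ⟨n, hn⟩ := S.exists_forall_ge_surjective_domRestrict hπ
  have := S.finiteDimensional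
  set π' := π.domRestrict (S.piece (m + n + S.shift))
  have hπ' : Function.Surjective π' := hn _ (by omega)
  let mulByH : S.piece n →ₗ[k] LinearMap.ker π' :=
    (((LinearMap.mulLeft k h).domRestrict (S.piece n)).codRestrict _
      fun a => S.mul_mem hm a.2).codRestrict _ fun a => hker a
  have hinj : Function.Injective mulByH := fun a b hab => Subtype.ext <| mul_left_cancel₀ h0 <|
    congrArg (fun z : LinearMap.ker π' => ((z : S.piece (m + n + S.shift)) : A)) hab
  have hle := LinearMap.finrank_le_finrank_of_injective hinj
  have hrank := LinearMap.finrank_range_add_finrank_ker π'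
  rw [LinearMap.range_eq_top.2 hπ', finrank_top] at hrank
  rw [S.finrank_piece] at hle hrank
  linarith

theorem card_le_of_forall_apply_eq_zero {ι : Type*} [Fintype ι] {ψ : ι → A →ₐ[k] k}
    (hψ : Function.Injective ψ) {m : ℕ} {h : A} (hm : h ∈ S.piece m) (h0 : h ≠ 0)
    (hzero : ∀ i, ψ i h = 0) : Fintype.card ι ≤ S.width * (m + S.shift) := by
  simpa using S.finrank_le_of_mul_mem_ker (surjective_pi_of_injective_algHom hψ) hm h0
    (fun a => by ext i; simp [hzero])

variable {e : A →ₐ[k] PowerSeries k} {x : A}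

theorem le_of_X_pow_dvd (hx : e x = PowerSeries.X) {m r : ℕ} {h : A} (hm : h ∈ S.piece m)
    (h0 : h ≠ 0) (hdvd : PowerSeries.X ^ r ∣ e h) : r ≤ S.width * (m + S.shift) := by
  let jet : A →ₗ[k] Fin r → k :=
    LinearMap.pi fun i => (PowerSeries.coeff (R := k) (i : ℕ)).comp e.toLinearMap
  have hsurj : Function.Surjective jet := fun w =>
    ⟨∑ i, w i • x ^ (i : ℕ), by ext j; simp [jet, hx, PowerSeries.coeff_X_pow, Fin.val_inj]⟩
  have hker : ∀ a, jet (h * a) = 0 := fun a => funext fun i => by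
    have hcoeff := PowerSeries.X_pow_dvd_iff.1 (hdvd.mul_right (e a)) i i.2
    simpa [jet] using hcoeff
  simpa using S.finrank_le_of_mul_mem_ker hsurj hm h0 hker

theorem injective_of_apply_eq_X (S : LinearFiltration k A) (hx : e x = PowerSeries.X) :
    Function.Injective e := by
  refine (injective_iff_map_eq_zero e).2 fun y hy => by_contra fun hy0 => ?_
  obtain ⟨m, hm⟩ := S.exhaustive y
  have := S.le_of_X_pow_dvd hx (r := S.width * (m + S.shift) + 1) hm hy0 (hy ▸ dvd_zero _)
  omega

theorem sum_mul_pow_ne_zero (p : ℕ) [Fact p.Prime] [CharP k p] (hx : e x = PowerSeries.X)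
    {l b : ℕ} (hlb : S.width * (l + S.shift) < p ^ b) {M : Type*} [Fintype M]
    {s : M → S.piece l} (hs : LinearIndependent k s) {h : M → A} (hh : ∃ j, h j ≠ 0) :
    ∑ j, (s j : A) * h j ^ p ^ b ≠ 0 := by
  intro hsum
  have hinj := S.injective_of_apply_eq_X hx
  obtain ⟨r, u, hu, i₀, hi₀⟩ := exists_eq_X_pow_mul_constantCoeff_ne_zero (g := fun j => e (h j))
    (hh.imp fun j hj => (map_ne_zero_iff e hinj).2 hj)
  have hunit : ∑ j, e (s j : A) * u j ^ p ^ b = 0 := by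
    have hmul : (PowerSeries.X ^ r) ^ p ^ b * ∑ j, e (s j : A) * u j ^ p ^ b = 0 := by
      rw [← map_zero e, ← hsum, map_sum, Finset.mul_sum]
      refine Finset.sum_congr rfl fun j _ => ?_
      rw [map_mul, map_pow, hu, mul_pow]
      ring
    exact (mul_eq_zero.1 hmul).resolve_left
      (pow_ne_zero _ (pow_ne_zero _ PowerSeries.X_ne_zero))
  set G := ∑ j, PowerSeries.constantCoeff (u j) ^ p ^ b • s j with hG
  have hG0 : (G : A) ≠ 0 := fun hGz => hi₀ <| eq_zero_of_pow_eq_zero <|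
    Fintype.linearIndependent_iff.1 hs _ (Subtype.ext hGz) i₀
  have hdvd : PowerSeries.X ^ p ^ b ∣ e (G : A) := by
    simpa [hG] using X_pow_char_pow_dvd_sum_of_sum_mul_pow_eq_zero p b hunit
  exact hlb.not_ge (S.le_of_X_pow_dvd hx G.2 hG0 hdvd)

/-- The Stepanov–Bombieri bound. The auxiliary function is `∑ sⱼ hⱼ ^ p ^ b` with `sⱼ` a basis of
`piece l` and `hⱼ` the `p ^ (a + b)`-th roots of `φ gⱼ`: its `p ^ a`-th power vanishes at every
`ψ i` once the `gⱼ` solve `∑ ψ i (sⱼ ^ p ^ a) * ψ i (φ gⱼ) = 0`, and these linear conditions are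
fewer than the unknowns. -/
theorem card_le_of_frobenius (p : ℕ) [Fact p.Prime] [CharP k p] (hx : e x = PowerSeries.X)
    {a b : ℕ} {φ : A →ₐ[k] A}
    (hφ : ∀ n, ∀ g ∈ S.piece n, ∃ h ∈ S.piece n, φ g = h ^ (p ^ a * p ^ b) ∧ (h = 0 → g = 0))
    {ι : Type*} [Fintype ι] {ψ : ι → A →ₐ[k] k} (hψ : Function.Injective ψ)
    {W : ℕ → Submodule k (ι → k)} {r : ℕ}
    (hW : ∀ n, Module.finrank k (W n) ≤ S.width * r * (n + 1))
    (hWmul : ∀ {m n f g}, f ∈ S.piece m → g ∈ S.piece n →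
      (fun i => ψ i f * ψ i (φ g)) ∈ W (m + n + S.shift))
    {l n : ℕ} (hlb : S.width * (l + S.shift) < p ^ b)
    (hln : S.width * r * (p ^ a * (l + S.shift) + n + S.shift + 1) <
      S.width * (l + 1) * (S.width * (n + 1))) :
    Fintype.card ι ≤ S.width * (l + p ^ b * (n + S.shift) + 2 * S.shift) := by
  have := S.finiteDimensional
  have : CharP A p := charP_of_injective_algebraMap (algebraMap k A).injective p
  have hpos : ∀ t, p ^ t ≠ 0 := fun t => pow_ne_zero t (Fact.out : p.Prime).ne_zero
  let s := Module.finBasis k (S.piece l)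
  obtain ⟨g, hg0, hg⟩ := S.exists_ne_zero_forall_sum_mul_eq_zero (n := n)
    (fun j => S.pow_mem (s j).2 (hpos a)) (ψ := ψ) (φψ := fun i => (ψ i).comp φ)
    (W := W (p ^ a * (l + S.shift) + n + S.shift)) (fun hf hg => hWmul hf hg) (hW _)
    (by simpa [S.finrank_piece] using hln)
  choose h hhn hhφ hh0 using fun j => hφ n (g j) (g j).2
  set H := ∑ j, (s j : A) * h j ^ p ^ b with hH
  have hHmem : H ∈ S.piece (l + p ^ b * (n + S.shift) + S.shift) :=
    Submodule.sum_mem _ fun j _ => S.mul_mem (s j).2 (S.pow_mem (hhn j) (hpos b))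
  have hHzero : ∀ i, ψ i H = 0 := fun i => by
    have hpow : ψ i H ^ p ^ a = 0 := by
      rw [← map_pow, hH, sum_pow_char_pow, map_sum, ← hg i]
      refine Finset.sum_congr rfl fun j _ => ?_
      rw [AlgHom.comp_apply, hhφ, mul_pow, map_mul, ← pow_mul, mul_comm (p ^ b)]
    exact eq_zero_of_pow_eq_zero hpow
  obtain ⟨j₀, hj₀⟩ := Function.ne_iff.1 hg0
  have hH0 : H ≠ 0 := S.sum_mul_pow_ne_zero p hx hlb s.linearIndependent
    ⟨j₀, fun hz => hj₀ (Subtype.ext (hh0 j₀ hz))⟩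
  refine (S.card_le_of_forall_apply_eq_zero hψ hHmem hH0 hHzero).trans (le_of_eq ?_)
  ring

end LinearFiltration

/-- The constant of the error term in the Stepanov bound for a filtration of the given `width` and
`shift`, evaluation spaces of relative dimension `r` and characteristic `p`. -/
def stepanovConstant (width shift r p : ℕ) : ℕ :=
  let E := shift * r + r ^ 2 + 1
  let B := r * (E + shift + 1) + (shift + 1) * width * E
  p * (B + 1) + width * (shift + 2) + 1 + width * (E + shift) + 2 * width * shift

theorem exists_stepanov_parameters {D c r p P P' : ℕ} (hD : 0 < D) (hPP' : P ≤ P')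
    (hP'P : P' ≤ p * P) (hC : stepanovConstant D c r p ≤ P') :
    ∃ l n : ℕ, D * (l + c) < P' ∧
      D * r * (P * (l + c) + n + c + 1) < D * (l + 1) * (D * (n + 1)) ∧
      D * (l + P' * (n + c) + 2 * c) ≤ r * (P * P') + stepanovConstant D c r p * P' := by
  simp only [stepanovConstant] at *
  set E := c * r + r ^ 2 + 1 with hE
  set B := r * (E + c + 1) + (c + 1) * D * E with hB
  have hBP : B + 1 ≤ P := by
    by_contra! hlt
    have : p * (P + 1) ≤ p * (B + 1) := Nat.mul_le_mul_left p (by omega)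
    nlinarith
  -- `l` and `n` are `P' / D` and `r * P / D` up to additive constants.
  have hu := Nat.div_add_mod P' D
  have hv := Nat.mod_lt P' hD
  have hw := Nat.div_add_mod (r * P) D
  have hz := Nat.mod_lt (r * P) hD
  set w := r * P / D
  have huc : c + 1 ≤ P' / D := by
    rw [Nat.le_div_iff_mul_le hD]
    nlinarith
  obtain ⟨l, hl⟩ := Nat.exists_eq_add_of_le' huc
  rw [hl, ← add_assoc, mul_add_one] at hu
  refine ⟨l, w + E, by omega, ?_, ?_⟩
  · have hw' : w ≤ r * P := Nat.div_le_self _ _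
    have hn : r * P + D * E + 1 ≤ D * (w + E + 1) := by nlinarith
    have hPE : P * E ≤ (l + 1) * D * E + (c + 1) * D * E := by
      rw [← add_mul, ← add_mul]
      exact Nat.mul_le_mul_right _ (by nlinarith)
    have hln := Nat.mul_le_mul_left (l + 1) hn
    have hrw := Nat.mul_le_mul_left r hw'
    have hPE' : P * E = P * c * r + P * r ^ 2 + P := by rw [hE]; ring
    have key : r * (P * (l + c) + (w + E) + c + 1) < (l + 1) * (D * (w + E + 1)) := by nlinarith
    simpa only [mul_assoc] using Nat.mul_lt_mul_of_pos_left key hD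
  · have hwP : D * w * P' ≤ r * P * P' := Nat.mul_le_mul_right _ (by omega)
    have hP' : 2 * D * c * 1 ≤ 2 * D * c * P' := Nat.mul_le_mul_left _ (by omega)
    have hl' : D * l ≤ P' := (Nat.mul_le_mul_left D (l.le_add_right c)).trans (by omega)
    calc D * (l + P' * (w + E + c) + 2 * c)
        = D * l + D * w * P' + D * (E + c) * P' + 2 * D * c * 1 := by ring
      _ ≤ P' + r * P * P' + D * (E + c) * P' + 2 * D * c * P' := by gcongr
      _ = r * (P * P') + (1 + D * (E + c) + 2 * D * c) * P' := by ring
      _ ≤ _ := by gcongr; omega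

theorem LinearFiltration.card_le_add_stepanovConstant {k A ι : Type*} [Field k] [CommRing A]
    [Algebra k A] [IsDomain A] [Fintype ι] (S : LinearFiltration k A) (p : ℕ) [Fact p.Prime]
    [CharP k p] {e : A →ₐ[k] PowerSeries k} {x : A} (hx : e x = PowerSeries.X) {a b r : ℕ}
    {φ : A →ₐ[k] A} (hφ : ∀ n, ∀ g ∈ S.piece n, ∃ h ∈ S.piece n,
      φ g = h ^ (p ^ a * p ^ b) ∧ (h = 0 → g = 0))
    {ψ : ι → A →ₐ[k] k} (hψ : Function.Injective ψ) {W : ℕ → Submodule k (ι → k)}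
    (hW : ∀ n, Module.finrank k (W n) ≤ S.width * r * (n + 1))
    (hWmul : ∀ {m n f g}, f ∈ S.piece m → g ∈ S.piece n →
      (fun i => ψ i f * ψ i (φ g)) ∈ W (m + n + S.shift))
    (hwidth : 0 < S.width) (hab : a ≤ b) (hba : b ≤ a + 1)
    (hC : stepanovConstant S.width S.shift r p ≤ p ^ b) :
    Fintype.card ι ≤ r * (p ^ a * p ^ b) + stepanovConstant S.width S.shift r p * p ^ b := by
  have hp := (Fact.out : p.Prime).pos
  obtain ⟨l, n, hlb, hln, hbound⟩ := exists_stepanov_parameters hwidth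
    (Nat.pow_le_pow_right hp hab)
    ((Nat.pow_le_pow_right hp hba).trans_eq (pow_succ' p a)) hC
  exact (S.card_le_of_frobenius p hx hφ hψ hW hWmul hlb hln).trans hbound

/-! ### The coordinate ring of an affine plane curve -/

section CoordinateRing

variable {k : Type*} [Field k] {f : k[X][X]}

theorem exists_forall_natDegree_coeff_le {R : Type*} [Semiring R] (G : R[X][X]) :
    ∃ e, ∀ i, (G.coeff i).natDegree ≤ e :=
  ⟨G.support.sup fun i => (G.coeff i).natDegree, fun i => by
    by_cases hi : i ∈ G.support
    · exact Finset.le_sup (f := fun i => (G.coeff i).natDegree) hi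
    · simp [Polynomial.notMem_support_iff.1 hi]⟩

theorem natDegree_pos_of_prime_of_monic {R : Type*} [CommRing R] {f : R[X]}
    (hf : f.Monic) (hprime : Prime f) : 0 < f.natDegree := by
  rw [Nat.pos_iff_ne_zero]
  intro h
  exact hprime.not_isUnit (by rw [hf.natDegree_eq_zero.1 h]; exact isUnit_one)

/-- The classes of the polynomials `G(X, Y)` that are reduced modulo the `Y`-monic polynomial `f`
and have degree at most `n` in `X`. -/
noncomputable def degreePiece (hf : f.Monic) (n : ℕ) : Submodule k (AdjoinRoot f) where
  carrier := {a | ∀ i, ((AdjoinRoot.modByMonicHom hf a).coeff i).natDegree ≤ n}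
  zero_mem' := by simp
  add_mem' ha hb i := by
    rw [map_add, Polynomial.coeff_add]
    exact Polynomial.natDegree_add_le_of_degree_le (ha i) (hb i)
  smul_mem' c a ha i := by
    rw [← algebraMap_smul k[X] c a, map_smul, Polynomial.coeff_smul, smul_eq_mul]
    exact (Polynomial.natDegree_C_mul_le c _).trans (ha i)

theorem mem_degreePiece {hf : f.Monic} {n : ℕ} {a : AdjoinRoot f} : a ∈ degreePiece hf n ↔
    ∀ i, ((AdjoinRoot.modByMonicHom hf a).coeff i).natDegree ≤ n :=
  Iff.rfl

theorem mk_mem_degreePiece (hf : f.Monic) {G : k[X][X]} (hG : G.degree < f.degree) {n : ℕ} :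
    AdjoinRoot.mk f G ∈ degreePiece hf n ↔ ∀ i, (G.coeff i).natDegree ≤ n := by
  rw [mem_degreePiece, AdjoinRoot.modByMonicHom_mk, (Polynomial.modByMonic_eq_self_iff hf).2 hG]

theorem exists_mk_eq_of_mem_degreePiece {hf : f.Monic} {n : ℕ} {a : AdjoinRoot f}
    (ha : a ∈ degreePiece hf n) :
    ∃ G : k[X][X], G.degree < f.degree ∧ (∀ i, (G.coeff i).natDegree ≤ n) ∧
      AdjoinRoot.mk f G = a := by
  obtain ⟨G, rfl⟩ := AdjoinRoot.mk_surjective a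
  refine ⟨G %ₘ f, Polynomial.degree_modByMonic_lt _ hf, fun i => ?_, ?_⟩
  · simpa using ha i
  · simpa using AdjoinRoot.mk_leftInverse hf (AdjoinRoot.mk f G)

theorem degreePiece_mono (hf : f.Monic) : Monotone (degreePiece hf) :=
  fun _ _ hmn _ ha i => (ha i).trans hmn

theorem exists_mem_degreePiece (hf : f.Monic) (a : AdjoinRoot f) : ∃ n, a ∈ degreePiece hf n :=
  exists_forall_natDegree_coeff_le _

theorem of_mul_mem_degreePiece {hf : f.Monic} {n t : ℕ} {a : AdjoinRoot f}
    (ha : a ∈ degreePiece hf n) {g : k[X]} (hg : g.natDegree ≤ t) :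
    AdjoinRoot.of f g * a ∈ degreePiece hf (n + t) := fun i => by
  rw [← AdjoinRoot.algebraMap_eq, ← Algebra.smul_def, map_smul, Polynomial.coeff_smul, smul_eq_mul,
    add_comm]
  exact Polynomial.natDegree_mul_le_of_le hg (ha i)

theorem root_pow_mem_degreePiece (hf : f.Monic) {j : ℕ} (hj : j < f.natDegree) :
    AdjoinRoot.root f ^ j ∈ degreePiece hf 0 := by
  rw [← AdjoinRoot.mk_X, ← map_pow, mk_mem_degreePiece]
  · intro i
    rw [Polynomial.coeff_X_pow]
    split_ifs <;> simp
  · rw [Polynomial.degree_X_pow]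
    exact Polynomial.coe_lt_degree.2 hj

theorem powerBasisAux'_apply (hf : f.Monic) (j : Fin f.natDegree) :
    AdjoinRoot.powerBasisAux' hf j = AdjoinRoot.root f ^ (j : ℕ) :=
  (AdjoinRoot.powerBasis' hf).basis_eq_pow j

theorem eq_sum_of_mul_root_pow (hf : f.Monic) (a : AdjoinRoot f) :
    a = ∑ j : Fin f.natDegree,
      AdjoinRoot.of f ((AdjoinRoot.modByMonicHom hf a).coeff j) * AdjoinRoot.root f ^ (j : ℕ) := by
  conv_lhs => rw [← (AdjoinRoot.powerBasisAux' hf).sum_repr a]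
  simp only [powerBasisAux'_apply, AdjoinRoot.powerBasisAux'_repr_apply_to_fun, Algebra.smul_def,
    AdjoinRoot.algebraMap_eq]

/-- The element of `AdjoinRoot f` with given coefficients of degree at most `n` with respect to
the basis `1, y, y², …`. -/
noncomputable def ofDegreeLT (hf : f.Monic) (n : ℕ) :
    (Fin f.natDegree → Polynomial.degreeLT k (n + 1)) →ₗ[k] AdjoinRoot f :=
  ((AdjoinRoot.powerBasisAux' hf).equivFun.symm.restrictScalars k).toLinearMap ∘ₗ
    (Polynomial.degreeLT k (n + 1)).subtype.compLeft (Fin f.natDegree)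

theorem injective_ofDegreeLT (hf : f.Monic) (n : ℕ) : Function.Injective (ofDegreeLT hf n) :=
  ((AdjoinRoot.powerBasisAux' hf).equivFun.symm.injective.comp
    (Subtype.val_injective.comp_left) :)

theorem range_ofDegreeLT (hf : f.Monic) (n : ℕ) :
    LinearMap.range (ofDegreeLT hf n) = degreePiece hf n := by
  have hmem : ∀ g : k[X], g ∈ Polynomial.degreeLT k (n + 1) ↔ g.natDegree ≤ n := fun g => by
    rw [Polynomial.degreeLT_succ_eq_degreeLE, Polynomial.mem_degreeLE,
      Polynomial.natDegree_le_iff_degree_le]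
  refine le_antisymm ?_ fun a ha => ⟨fun j => ⟨_, (hmem _).2 (ha j)⟩,
    (AdjoinRoot.powerBasisAux' hf).equivFun.symm_apply_apply a⟩
  rintro _ ⟨g, rfl⟩
  have hg : ofDegreeLT hf n g = ∑ j, AdjoinRoot.of f (g j) * AdjoinRoot.root f ^ (j : ℕ) := by
    refine ((AdjoinRoot.powerBasisAux' hf).equivFun_symm_apply _).trans ?_
    simp only [powerBasisAux'_apply, Algebra.smul_def, AdjoinRoot.algebraMap_eq]
    rfl
  rw [hg]
  refine Submodule.sum_mem _ fun j _ => ?_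
  simpa using of_mul_mem_degreePiece (root_pow_mem_degreePiece hf j.2) ((hmem _).1 (g j).2)

instance finiteDimensional_degreePiece (hf : f.Monic) (n : ℕ) :
    FiniteDimensional k (degreePiece hf n) := by
  have := Module.Finite.equiv (Polynomial.degreeLTEquiv k (n + 1)).symm
  rw [← range_ofDegreeLT]
  infer_instance

theorem finrank_degreePiece (hf : f.Monic) (n : ℕ) :
    Module.finrank k (degreePiece hf n) = f.natDegree * (n + 1) := by
  rw [← range_ofDegreeLT, LinearMap.finrank_range_of_inj (injective_ofDegreeLT hf n),
    Module.finrank_pi_fintype]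
  simp [(Polynomial.degreeLTEquiv k (n + 1)).finrank_eq]

theorem root_pow_natDegree_mem_degreePiece (hf : f.Monic) {e : ℕ}
    (he : ∀ i, (f.coeff i).natDegree ≤ e) :
    AdjoinRoot.root f ^ f.natDegree ∈ degreePiece hf e := by
  have hsum := (congrArg (AdjoinRoot.mk f) hf.as_sum).symm.trans AdjoinRoot.mk_self
  simp only [map_add, map_pow, map_sum, map_mul, AdjoinRoot.mk_X, AdjoinRoot.mk_C] at hsum
  rw [eq_neg_iff_add_eq_zero.2 hsum]
  refine Submodule.neg_mem _ (Submodule.sum_mem _ fun i hi => ?_)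
  simpa using of_mul_mem_degreePiece
    (root_pow_mem_degreePiece hf (Finset.mem_range.1 hi)) (he i)

theorem root_mul_mem_degreePiece {hf : f.Monic} {e : ℕ} (he : ∀ i, (f.coeff i).natDegree ≤ e)
    {n : ℕ} {a : AdjoinRoot f} (ha : a ∈ degreePiece hf n) :
    AdjoinRoot.root f * a ∈ degreePiece hf (n + e) := by
  rw [eq_sum_of_mul_root_pow hf a, Finset.mul_sum]
  refine Submodule.sum_mem _ fun i _ => ?_
  rw [mul_left_comm, ← pow_succ', add_comm n e]
  refine of_mul_mem_degreePiece ?_ (ha i)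
  rcases (Nat.succ_le_of_lt i.2).lt_or_eq with hlt | heq
  · exact degreePiece_mono hf (Nat.zero_le _) (root_pow_mem_degreePiece hf hlt)
  · rw [← Nat.succ_eq_add_one, heq]
    exact root_pow_natDegree_mem_degreePiece hf he

theorem root_pow_mul_mem_degreePiece {hf : f.Monic} {e : ℕ} (he : ∀ i, (f.coeff i).natDegree ≤ e)
    {n : ℕ} {a : AdjoinRoot f} (ha : a ∈ degreePiece hf n) (j : ℕ) :
    AdjoinRoot.root f ^ j * a ∈ degreePiece hf (n + j * e) := by
  induction j with
  | zero => simpa using ha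
  | succ j ih =>
    rw [pow_succ', mul_assoc, add_one_mul, ← add_assoc]
    exact root_mul_mem_degreePiece he ih

theorem mul_mem_degreePiece {hf : f.Monic} {e : ℕ} (he : ∀ i, (f.coeff i).natDegree ≤ e)
    {m n : ℕ} {a b : AdjoinRoot f} (ha : a ∈ degreePiece hf m) (hb : b ∈ degreePiece hf n) :
    a * b ∈ degreePiece hf (m + n + f.natDegree * e) := by
  rw [eq_sum_of_mul_root_pow hf a, Finset.sum_mul]
  refine Submodule.sum_mem _ fun i _ => ?_
  rw [mul_assoc]
  refine degreePiece_mono hf ?_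
    (of_mul_mem_degreePiece (root_pow_mul_mem_degreePiece he hb i) (ha i))
  have hi : i * e ≤ f.natDegree * e := Nat.mul_le_mul_right _ i.2.le
  omega

/-- The filtration of the coordinate ring of the `Y`-monic curve `f = 0` by the degree in `X`.
The shift is one `e` larger than multiplicativity requires, which makes room for the factors
`rootQuotient`. -/
noncomputable def coordinateFiltration (hf : f.Monic) {e : ℕ}
    (he : ∀ i, (f.coeff i).natDegree ≤ e) : LinearFiltration k (AdjoinRoot f) where
  piece := degreePiece hf
  width := f.natDegree
  shift := (f.natDegree + 1) * e
  mono := degreePiece_mono hf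
  exhaustive := exists_mem_degreePiece hf
  mul_mem ha hb := degreePiece_mono hf (by nlinarith) (mul_mem_degreePiece he ha hb)
  finiteDimensional := finiteDimensional_degreePiece hf
  finrank_piece := finrank_degreePiece hf

/-- Evaluation at a point of the curve, as a `k`-algebra homomorphism. -/
noncomputable def evalPoint {x y : k} (h : f.evalEval x y = 0) : AdjoinRoot f →ₐ[k] k :=
  { AdjoinRoot.evalEval h with
    commutes' := fun r => by
      change AdjoinRoot.evalEval h (AdjoinRoot.of f (Polynomial.C r)) = r
      rw [← AdjoinRoot.mk_C, AdjoinRoot.evalEval_mk]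
      simp }

@[simp]
theorem evalPoint_mk {x y : k} (h : f.evalEval x y = 0) (G : k[X][X]) :
    evalPoint h (AdjoinRoot.mk f G) = G.evalEval x y :=
  AdjoinRoot.evalEval_mk h G

@[simp]
theorem evalPoint_of {x y : k} (h : f.evalEval x y = 0) (g : k[X]) :
    evalPoint h (AdjoinRoot.of f g) = g.eval x := by
  rw [← AdjoinRoot.mk_C, evalPoint_mk, Polynomial.evalEval_C]

@[simp]
theorem evalPoint_root {x y : k} (h : f.evalEval x y = 0) :
    evalPoint h (AdjoinRoot.root f) = y := by
  rw [← AdjoinRoot.mk_X, evalPoint_mk, Polynomial.evalEval_X]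

theorem injective_evalPoint {T : Finset (k × k)} (hT : ∀ z ∈ T, f.evalEval z.1 z.2 = 0) :
    Function.Injective fun z : T => evalPoint (hT z z.2) := by
  intro z z' hz
  refine Subtype.ext (Prod.ext ?_ ?_)
  · simpa using DFunLike.congr_fun hz (AdjoinRoot.of f Polynomial.X)
  · simpa using DFunLike.congr_fun hz (AdjoinRoot.root f)

theorem card_le_of_evalEval_eq_zero (hprime : Prime f) {hf : f.Monic} {e : ℕ}
    (he : ∀ i, (f.coeff i).natDegree ≤ e) {G : k[X][X]} (hG : ¬f ∣ G) {m : ℕ}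
    (hm : AdjoinRoot.mk f G ∈ degreePiece hf m) {T : Finset (k × k)}
    (hfT : ∀ z ∈ T, f.evalEval z.1 z.2 = 0) (hGT : ∀ z ∈ T, G.evalEval z.1 z.2 = 0) :
    T.card ≤ f.natDegree * (m + (f.natDegree + 1) * e) := by
  have := AdjoinRoot.isDomain_of_prime hprime
  have hcard := (coordinateFiltration hf he).card_le_of_forall_apply_eq_zero
    (injective_evalPoint hfT) hm (mt AdjoinRoot.mk_eq_zero.1 hG) fun z => by
      simpa using hGT z z.2
  simpa [coordinateFiltration] using hcard

theorem finite_setOf_evalEval_eq_zero (hf : f.Monic) (hprime : Prime f) {G : k[X][X]}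
    (hG : ¬f ∣ G) : {z : k × k | f.evalEval z.1 z.2 = 0 ∧ G.evalEval z.1 z.2 = 0}.Finite := by
  obtain ⟨e, he⟩ := exists_forall_natDegree_coeff_le f
  obtain ⟨m, hm⟩ := exists_mem_degreePiece hf (AdjoinRoot.mk f G)
  by_contra hinf
  obtain ⟨T, hT, hcard⟩ := Set.Infinite.exists_subset_card_eq hinf
    (f.natDegree * (m + (f.natDegree + 1) * e) + 1)
  have hle := card_le_of_evalEval_eq_zero hprime he hG hm (fun z hz => (hT hz).1)
    fun z hz => (hT hz).2
  omega

theorem not_dvd_derivative {R : Type*} [CommRing R] [IsDomain R] {f : R[X]}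
    (hf : f.derivative ≠ 0) : ¬f ∣ f.derivative := fun h =>
  (Polynomial.natDegree_le_of_dvd h hf).not_gt <| Polynomial.natDegree_derivative_lt fun h₀ =>
    hf (Polynomial.derivative_of_natDegree_zero h₀)

theorem exists_algHom_powerSeries_eq_X (hf : f.Monic) {x₀ y₀ : k} (h₀ : f.evalEval x₀ y₀ = 0)
    (h₁ : f.derivative.evalEval x₀ y₀ ≠ 0) :
    ∃ (ε : AdjoinRoot f →ₐ[k] PowerSeries k) (x : AdjoinRoot f), ε x = PowerSeries.X := by
  let ι : k[X] →ₐ[k] PowerSeries k :=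
    Polynomial.aeval (algebraMap k (PowerSeries k) x₀ + PowerSeries.X)
  have hconst : ∀ G : k[X][X], PowerSeries.constantCoeff ((G.map (ι : k[X] →+* PowerSeries k)).eval
      (algebraMap k (PowerSeries k) y₀)) = G.evalEval x₀ y₀ := fun G => by
    have hcomp : ((PowerSeries.constantCoeff (R := k)).comp
        (Polynomial.evalRingHom (algebraMap k (PowerSeries k) y₀))).comp
          (Polynomial.mapRingHom (ι : k[X] →+* PowerSeries k)) =
        Polynomial.evalEvalRingHom x₀ y₀ := by ext <;> simp [ι]
    exact DFunLike.congr_fun hcomp G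
  have hensel : HenselianRing (PowerSeries k) (Ideal.span {PowerSeries.X}) := inferInstance
  obtain ⟨y, hy, -⟩ := hensel.is_henselian (f.map (ι : k[X] →+* PowerSeries k)) (hf.map _)
    (algebraMap k _ y₀)
    (by rw [Ideal.mem_span_singleton, PowerSeries.X_dvd_iff, hconst, h₀])
    (by
      refine IsUnit.map _ (PowerSeries.isUnit_iff_constantCoeff.2 ?_)
      rw [Polynomial.derivative_map, hconst]
      exact h₁.isUnit)
  refine ⟨AdjoinRoot.liftAlgHom _ ι y ?_, AdjoinRoot.of f (Polynomial.X - Polynomial.C x₀), ?_⟩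
  · rwa [Polynomial.IsRoot.def, Polynomial.eval_map] at hy
  · simp [AdjoinRoot.liftAlgHom_of, ι]

theorem exists_evalEval_eq_zero [IsAlgClosed k] (hf : f.Monic) (hd : 0 < f.natDegree) (x : k) :
    ∃ y, f.evalEval x y = 0 := by
  obtain ⟨y, hy⟩ := IsAlgClosed.exists_root (f.map (Polynomial.evalRingHom x))
    (by rw [hf.degree_map]; exact (Polynomial.natDegree_pos_iff_degree_pos.1 hd).ne')
  exact ⟨y, by rwa [← Polynomial.map_evalRingHom_eval]⟩

theorem exists_derivative_evalEval_ne_zero [IsAlgClosed k] (hf : f.Monic) (hprime : Prime f)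
    (hder : f.derivative ≠ 0) :
    ∃ x₀ y₀, f.evalEval x₀ y₀ = 0 ∧ f.derivative.evalEval x₀ y₀ ≠ 0 := by
  by_contra! hcon
  have hfin := finite_setOf_evalEval_eq_zero hf hprime (not_dvd_derivative hder)
  refine Set.infinite_univ (α := k) ((hfin.image Prod.fst).subset fun x _ => ?_)
  obtain ⟨y, hy⟩ := exists_evalEval_eq_zero hf (natDegree_pos_of_prime_of_monic hf hprime) x
  exact ⟨(x, y), ⟨hy, hcon x y hy⟩, rfl⟩

end CoordinateRing

/-! ### Point counts via the relative Frobenius -/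

section RootQuotient

variable {k : Type*} [Field k] {f : k[X][X]}

/-- The quotient of `f(x, Z)` by `Z - y` at the generic point `(x, y)` of the curve `f = 0`; its
roots are the other points of the fibre over `x`. -/
noncomputable def rootQuotient (f : k[X][X]) : (AdjoinRoot f)[X] :=
  f.map (AdjoinRoot.of f) /ₘ (Polynomial.X - Polynomial.C (AdjoinRoot.root f))

theorem X_sub_C_root_mul_rootQuotient (f : k[X][X]) :
    (Polynomial.X - Polynomial.C (AdjoinRoot.root f)) * rootQuotient f =
      f.map (AdjoinRoot.of f) :=
  Polynomial.mul_divByMonic_eq_iff_isRoot.2 (AdjoinRoot.isRoot_root f)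

theorem rootQuotient_coeff_mem_degreePiece (hf : f.Monic) {e : ℕ}
    (he : ∀ j, (f.coeff j).natDegree ≤ e) (s : ℕ) :
    (rootQuotient f).coeff s ∈ degreePiece hf e := by
  rw [rootQuotient, Polynomial.coeff_divByMonic_X_sub_C]
  refine Submodule.sum_mem _ fun j hj => ?_
  have hjd := (Finset.mem_Icc.1 hj).2.trans Polynomial.natDegree_map_le
  have hsj := (Finset.mem_Icc.1 hj).1
  rw [mul_comm, Polynomial.coeff_map]
  simpa using of_mul_mem_degreePiece
    (root_pow_mem_degreePiece hf (j := j - (s + 1)) (by omega)) (he j)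

theorem natDegree_rootQuotient_le (f : k[X][X]) :
    (rootQuotient f).natDegree ≤ f.natDegree - 1 := by
  refine Polynomial.natDegree_le_iff_coeff_eq_zero.2 fun s hs => ?_
  have hle : (f.map (AdjoinRoot.of f)).natDegree ≤ f.natDegree := Polynomial.natDegree_map_le
  rw [rootQuotient, Polynomial.coeff_divByMonic_X_sub_C, Finset.Icc_eq_empty (by omega),
    Finset.sum_empty]

theorem rootQuotient_coeff_natDegree_sub_one (hf : f.Monic) (hd : 0 < f.natDegree) :
    (rootQuotient f).coeff (f.natDegree - 1) = 1 := by
  have hcoeff := congrArg (Polynomial.coeff · f.natDegree) (X_sub_C_root_mul_rootQuotient f)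
  obtain ⟨d, hd'⟩ := Nat.exists_eq_add_of_lt hd
  have hzero : (rootQuotient f).coeff (d + 1) = 0 :=
    Polynomial.coeff_eq_zero_of_natDegree_lt ((natDegree_rootQuotient_le f).trans_lt (by omega))
  rw [zero_add] at hd'
  have hlead : f.coeff (d + 1) = 1 := hd' ▸ hf.coeff_natDegree
  simpa [sub_mul, hd', hlead, hzero] using hcoeff

theorem eval_map_rootQuotient_eq_zero {x y z : k} (h : f.evalEval x y = 0)
    (hz : f.evalEval x z = 0) (hzy : z ≠ y) :
    ((rootQuotient f).map (evalPoint h : AdjoinRoot f →+* k)).eval z = 0 := by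
  have hcomp : (evalPoint h : AdjoinRoot f →+* k).comp (AdjoinRoot.of f) =
      Polynomial.evalRingHom x := RingHom.ext (evalPoint_of h)
  have hmul := congrArg (fun P => (P.map (evalPoint h : AdjoinRoot f →+* k)).eval z)
    (X_sub_C_root_mul_rootQuotient f)
  simp only [Polynomial.map_map, hcomp, Polynomial.map_evalRingHom_eval, hz,
    Polynomial.map_mul, Polynomial.eval_mul, mul_eq_zero] at hmul
  exact hmul.resolve_left (by simpa [sub_eq_zero] using hzy)

theorem mul_sub_mul_rootQuotient_coeff_mem (hf : f.Monic) {e : ℕ}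
    (he : ∀ j, (f.coeff j).natDegree ≤ e) {m n : ℕ} {u : AdjoinRoot f}
    (hu : u ∈ degreePiece hf m) {G : k[X][X]} (hG : ∀ i, (G.coeff i).natDegree ≤ n) (s : ℕ) :
    AdjoinRoot.of f (G.coeff s) * u -
        AdjoinRoot.of f (G.coeff (f.natDegree - 1)) * u * (rootQuotient f).coeff s ∈
      degreePiece hf (m + n + (f.natDegree + 1) * e) := by
  have hGu : ∀ j, AdjoinRoot.of f (G.coeff j) * u ∈ degreePiece hf (m + n) := fun j =>
    of_mul_mem_degreePiece hu (hG j)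
  refine Submodule.sub_mem _ (degreePiece_mono hf (by omega) (hGu s)) ?_
  exact degreePiece_mono hf (le_of_eq (by ring))
    (mul_mem_degreePiece he (hGu _) (rootQuotient_coeff_mem_degreePiece hf he s))

theorem evalEval_eq_sum_range {R : Type*} [CommSemiring R] (G : R[X][X]) {n : ℕ}
    (hn : G.natDegree < n) (x z : R) :
    G.evalEval x z = ∑ s ∈ Finset.range n, (G.coeff s).eval x * z ^ s := by
  rw [← Polynomial.map_evalRingHom_eval,
    Polynomial.eval_eq_sum_range' (Polynomial.natDegree_map_le.trans_lt hn)]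
  simp

theorem evalPoint_mul_evalEval_eq_sum (hf : f.Monic) (hd : 0 < f.natDegree) {x y z : k}
    (h : f.evalEval x y = 0) (hz : f.evalEval x z = 0) (hzy : z ≠ y) {G : k[X][X]}
    (hG : G.degree < f.degree) (u : AdjoinRoot f) :
    evalPoint h u * G.evalEval x z = ∑ s ∈ Finset.range (f.natDegree - 1),
      evalPoint h (AdjoinRoot.of f (G.coeff s) * u -
        AdjoinRoot.of f (G.coeff (f.natDegree - 1)) * u * (rootQuotient f).coeff s) * z ^ s := by
  -- Subtracting a multiple of `rootQuotient f` kills the top coefficient of `G` and preserves its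
  -- value at the other points of the fibre.
  have hGd : G.natDegree < f.natDegree - 1 + 1 := by
    rw [Nat.sub_add_cancel hd]
    rcases eq_or_ne G 0 with rfl | hG0
    · simpa using hd
    · exact Polynomial.natDegree_lt_natDegree hG0 hG
  have hGsum := evalEval_eq_sum_range G hGd x z
  have hQ := eval_map_rootQuotient_eq_zero h hz hzy
  rw [Polynomial.eval_eq_sum_range' (Polynomial.natDegree_map_le.trans_lt
    (Nat.lt_succ_of_le (natDegree_rootQuotient_le f)))] at hQ
  simp only [Nat.succ_eq_add_one, Finset.sum_range_succ, Polynomial.coeff_map, RingHom.coe_coe,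
    rootQuotient_coeff_natDegree_sub_one hf hd, map_one, one_mul] at hGsum hQ
  simp only [map_sub, map_mul, evalPoint_of, sub_mul, Finset.sum_sub_distrib, mul_assoc,
    ← Finset.mul_sum]
  rw [hGsum, ← neg_eq_iff_add_eq_zero.2 hQ]
  simp only [mul_add, Finset.mul_sum, mul_neg, mul_left_comm]
  rw [sub_eq_add_neg]

end RootQuotient

section Frobenius

variable {k : Type*} [Field k] {f : k[X][X]}

/-- `φ` is the `k`-linear `q`-Frobenius endomorphism `(x, y) ↦ (x ^ q, y ^ q)` of the curve
`f = 0`. -/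
structure IsRelativeFrobenius (q : ℕ) (φ : AdjoinRoot f →ₐ[k] AdjoinRoot f) : Prop where
  map_of_X : φ (AdjoinRoot.of f Polynomial.X) = AdjoinRoot.of f Polynomial.X ^ q
  map_root : φ (AdjoinRoot.root f) = AdjoinRoot.root f ^ q

theorem IsRelativeFrobenius.evalPoint_apply {q : ℕ} {φ : AdjoinRoot f →ₐ[k] AdjoinRoot f}
    (hφ : IsRelativeFrobenius q φ) {x y : k} (h : f.evalEval x y = 0) (G : k[X][X]) :
    evalPoint h (φ (AdjoinRoot.mk f G)) = G.evalEval (x ^ q) (y ^ q) := by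
  have hC : ∀ r, φ (AdjoinRoot.of f (Polynomial.C r)) = AdjoinRoot.of f (Polynomial.C r) :=
    φ.commutes
  have hcomp : ((evalPoint h : AdjoinRoot f →+* k).comp
      ((φ : AdjoinRoot f →+* AdjoinRoot f).comp (AdjoinRoot.mk f))) =
        Polynomial.evalEvalRingHom (x ^ q) (y ^ q) := by
    ext <;> simp [hC, hφ.map_of_X, hφ.map_root]
  exact DFunLike.congr_fun hcomp G

variable (p : ℕ) [Fact p.Prime] [CharP k p] {s : ℕ}

theorem exists_isRelativeFrobenius [Nontrivial (AdjoinRoot f)]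
    (hfix : f.map (Polynomial.mapRingHom (iterateFrobenius k p s)) = f) :
    ∃ φ : AdjoinRoot f →ₐ[k] AdjoinRoot f, IsRelativeFrobenius (p ^ s) φ := by
  have : CharP (AdjoinRoot f) p :=
    charP_of_injective_algebraMap (algebraMap k (AdjoinRoot f)).injective p
  have hcomp : ((AdjoinRoot.of f).comp (Polynomial.expand k (p ^ s) : k[X] →+* k[X])).comp
      (Polynomial.mapRingHom (iterateFrobenius k p s)) =
        (iterateFrobenius (AdjoinRoot f) p s).comp (AdjoinRoot.of f) := by
    ext <;> simp [iterateFrobenius_def]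
  refine ⟨AdjoinRoot.liftAlgHom f ((AdjoinRoot.ofAlgHom k f).comp (Polynomial.expand k (p ^ s)))
    (AdjoinRoot.root f ^ p ^ s) ?_, ?_, ?_⟩
  · change Polynomial.eval₂ ((AdjoinRoot.of f).comp (Polynomial.expand k (p ^ s) : k[X] →+* k[X]))
      _ f = 0
    rw [← iterateFrobenius_def]
    conv_lhs => enter [3]; rw [← hfix]
    rw [Polynomial.eval₂_map, hcomp, ← Polynomial.hom_eval₂, AdjoinRoot.eval₂_root, map_zero]
  · rw [AdjoinRoot.liftAlgHom_of]
    simp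
  · rw [AdjoinRoot.liftAlgHom_root]

variable {p} in
theorem IsRelativeFrobenius.exists_eq_pow [PerfectRing k p] [Nontrivial (AdjoinRoot f)]
    {φ : AdjoinRoot f →ₐ[k] AdjoinRoot f} (hφ : IsRelativeFrobenius (p ^ s) φ) {hf : f.Monic}
    {n : ℕ} {g : AdjoinRoot f} (hg : g ∈ degreePiece hf n) :
    ∃ h ∈ degreePiece hf n, φ g = h ^ p ^ s ∧ (h = 0 → g = 0) := by
  have : CharP (AdjoinRoot f) p :=
    charP_of_injective_algebraMap (algebraMap k (AdjoinRoot f)).injective p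
  obtain ⟨G, hGf, hGn, rfl⟩ := exists_mk_eq_of_mem_degreePiece hg
  let τ : k[X] →+* k[X] := Polynomial.mapRingHom ((iterateFrobeniusEquiv k p s).symm : k →+* k)
  have hτ : Function.Injective τ := Polynomial.map_injective _ (RingHom.injective _)
  have hC : ∀ r, φ (AdjoinRoot.of f (Polynomial.C r)) = AdjoinRoot.of f (Polynomial.C r) :=
    φ.commutes
  have hroot : ∀ r, (iterateFrobeniusEquiv k p s).symm r ^ p ^ s = r :=
    (iterateFrobeniusEquiv k p s).apply_symm_apply
  have hcomp : ((φ : AdjoinRoot f →+* AdjoinRoot f).comp (AdjoinRoot.mk f)) =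
      (iterateFrobenius (AdjoinRoot f) p s).comp
        ((AdjoinRoot.mk f).comp (Polynomial.mapRingHom τ)) := by
    ext r
    · simp [τ, hC, iterateFrobenius_def, ← map_pow, hroot]
    · simp [τ, hφ.map_of_X, iterateFrobenius_def]
    · simp [hφ.map_root, iterateFrobenius_def]
  have hdeg : (G.map τ).degree < f.degree := by rwa [Polynomial.degree_map_eq_of_injective hτ]
  refine ⟨AdjoinRoot.mk f (G.map τ), (mk_mem_degreePiece hf hdeg).2 fun i => ?_,
    DFunLike.congr_fun hcomp G, fun h0 => ?_⟩
  · rw [Polynomial.coeff_map]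
    exact Polynomial.natDegree_map_le.trans (hGn i)
  · have hG0 : G.map τ = 0 := by
      by_contra hne
      exact AdjoinRoot.mk_ne_zero_of_degree_lt hf hne hdeg h0
    rw [(Polynomial.map_eq_zero_iff hτ).1 hG0, map_zero]

variable [IsAlgClosed k]

theorem IsRelativeFrobenius.card_le {a b : ℕ} {φ : AdjoinRoot f →ₐ[k] AdjoinRoot f}
    (hφ : IsRelativeFrobenius (p ^ (a + b)) φ) (hf : f.Monic) (hprime : Prime f)
    (hder : f.derivative ≠ 0) {e : ℕ} (he : ∀ j, (f.coeff j).natDegree ≤ e) (hab : a ≤ b)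
    (hba : b ≤ a + 1) {r : ℕ}
    (hC : stepanovConstant f.natDegree ((f.natDegree + 1) * e) r p ≤ p ^ b)
    {T : Finset (k × k)} (hT : ∀ z ∈ T, f.evalEval z.1 z.2 = 0) {W : ℕ → Submodule k (T → k)}
    (hW : ∀ n, Module.finrank k (W n) ≤ f.natDegree * r * (n + 1))
    (hWmul : ∀ {m n u v}, u ∈ degreePiece hf m → v ∈ degreePiece hf n →
      (fun z : T => evalPoint (hT z z.2) u * evalPoint (hT z z.2) (φ v)) ∈
        W (m + n + (f.natDegree + 1) * e)) :
    T.card ≤ r * p ^ (a + b) +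
      stepanovConstant f.natDegree ((f.natDegree + 1) * e) r p * p ^ b := by
  have := AdjoinRoot.isDomain_of_prime hprime
  obtain ⟨x₀, y₀, h₀, h₁⟩ := exists_derivative_evalEval_ne_zero hf hprime hder
  obtain ⟨ε, x, hεx⟩ := exists_algHom_powerSeries_eq_X hf h₀ h₁
  have hcard := (coordinateFiltration hf he).card_le_add_stepanovConstant p hεx
    (fun n g hg => by rw [← pow_add]; exact hφ.exists_eq_pow hg) (injective_evalPoint hT)
    hW hWmul (natDegree_pos_of_prime_of_monic hf hprime) hab hba hC
  simpa [pow_add, coordinateFiltration] using hcard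

theorem card_le_of_pow_eq_self (hf : f.Monic) (hprime : Prime f) (hder : f.derivative ≠ 0)
    {e : ℕ} (he : ∀ j, (f.coeff j).natDegree ≤ e) {a b : ℕ} (hab : a ≤ b) (hba : b ≤ a + 1)
    (hfix : f.map (Polynomial.mapRingHom (iterateFrobenius k p (a + b))) = f)
    (hC : stepanovConstant f.natDegree ((f.natDegree + 1) * e) 1 p ≤ p ^ b)
    {T : Finset (k × k)} (hT : ∀ z ∈ T, f.evalEval z.1 z.2 = 0)
    (hx : ∀ z ∈ T, z.1 ^ p ^ (a + b) = z.1) (hy : ∀ z ∈ T, z.2 ^ p ^ (a + b) = z.2) :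
    T.card ≤ p ^ (a + b) + stepanovConstant f.natDegree ((f.natDegree + 1) * e) 1 p * p ^ b := by
  have := AdjoinRoot.isDomain_of_prime hprime
  obtain ⟨φ, hφ⟩ := exists_isRelativeFrobenius p hfix
  have hψφ : ∀ (z : T) g, evalPoint (hT z z.2) (φ g) = evalPoint (hT z z.2) g := fun z g => by
    obtain ⟨G, rfl⟩ := AdjoinRoot.mk_surjective g
    rw [hφ.evalPoint_apply, hx z z.2, hy z z.2, evalPoint_mk]
  have hcard := hφ.card_le p hf hprime hder he hab hba hC hT
    (W := fun n => (degreePiece hf n).map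
      (LinearMap.pi fun z : T => (evalPoint (hT z z.2)).toLinearMap))
    (fun n => ((Submodule.finrank_map_le _ _).trans_eq (finrank_degreePiece hf n)).trans_eq
      (by simp))
    (fun hu hv => ⟨_, (coordinateFiltration hf he).mul_mem hu hv, by ext z; simp [hψφ]⟩)
  simpa using hcard

theorem card_le_of_pow_ne_self (hf : f.Monic) (hprime : Prime f) (hder : f.derivative ≠ 0)
    {e : ℕ} (he : ∀ j, (f.coeff j).natDegree ≤ e) {a b : ℕ} (hab : a ≤ b) (hba : b ≤ a + 1)
    (hfix : f.map (Polynomial.mapRingHom (iterateFrobenius k p (a + b))) = f)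
    (hC : stepanovConstant f.natDegree ((f.natDegree + 1) * e) (f.natDegree - 1) p ≤ p ^ b)
    {T : Finset (k × k)} (hT : ∀ z ∈ T, f.evalEval z.1 z.2 = 0)
    (hx : ∀ z ∈ T, z.1 ^ p ^ (a + b) = z.1) (hy : ∀ z ∈ T, z.2 ^ p ^ (a + b) ≠ z.2) :
    T.card ≤ (f.natDegree - 1) * p ^ (a + b) +
      stepanovConstant f.natDegree ((f.natDegree + 1) * e) (f.natDegree - 1) p * p ^ b := by
  have := AdjoinRoot.isDomain_of_prime hprime
  have hd := natDegree_pos_of_prime_of_monic hf hprime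
  obtain ⟨φ, hφ⟩ := exists_isRelativeFrobenius p hfix
  have hψφ : ∀ (z : T) G, evalPoint (hT z z.2) (φ (AdjoinRoot.mk f G)) =
      G.evalEval z.1.1 (z.1.2 ^ p ^ (a + b)) := fun z G => by
    rw [hφ.evalPoint_apply, hx z z.2]
  have hconj : ∀ z : T, f.evalEval z.1.1 (z.1.2 ^ p ^ (a + b)) = 0 := fun z => by
    rw [← hψφ, AdjoinRoot.mk_self, map_zero, map_zero]
  let Λ : ∀ n, (Fin (f.natDegree - 1) → degreePiece hf n) →ₗ[k] T → k := fun n =>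
    LinearMap.pi fun z => ∑ s : Fin _, (z.1.2 ^ p ^ (a + b)) ^ (s : ℕ) •
      ((evalPoint (hT z z.2)).toLinearMap ∘ₗ (degreePiece hf n).subtype ∘ₗ LinearMap.proj s)
  refine hφ.card_le p hf hprime hder he hab hba hC hT (W := fun n => LinearMap.range (Λ n))
    (fun n => (LinearMap.finrank_range_le _).trans_eq ?_) fun {m n u v} hu hv => ?_
  · simp only [Module.finrank_pi_fintype, finrank_degreePiece, Finset.sum_const,
      Finset.card_univ, Fintype.card_fin, smul_eq_mul]
    ring
  · obtain ⟨G, hGf, hGn, rfl⟩ := exists_mk_eq_of_mem_degreePiece hv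
    refine ⟨fun s => ⟨_, mul_sub_mul_rootQuotient_coeff_mem hf he hu hGn s⟩, ?_⟩
    ext z
    rw [hψφ, evalPoint_mul_evalEval_eq_sum hf hd (hT z z.2) (hconj z) (hy z z.2) hGf,
      ← Fin.sum_univ_eq_sum_range (fun s => evalPoint _ (_ - _ * _) * _ ^ s)]
    simp [Λ, mul_comm]

end Frobenius

theorem natDegree_coeff_map_le {R S : Type*} [CommRing R] [CommRing S] {f : R[X][X]} {e : ℕ}
    (i : R →+* S) (he : ∀ j, (f.coeff j).natDegree ≤ e) (j : ℕ) :
    ((f.map (Polynomial.mapRingHom i)).coeff j).natDegree ≤ e := by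
  rw [Polynomial.coeff_map]
  exact Polynomial.natDegree_map_le.trans (he j)

section FiniteBase

variable {k K : Type*} [Field k] [Field K] [Fintype K] (i : K →+* k)

theorem map_pow_card (x : K) : i x ^ Fintype.card K = i x := by
  rw [← map_pow, FiniteField.pow_card]

theorem mem_range_of_pow_card_eq_self {y : k} (hy : y ^ Fintype.card K = y) : y ∈ i.range := by
  have hroots : ((Polynomial.X : K[X]) ^ Fintype.card K - Polynomial.X).roots.card =
      ((Polynomial.X : K[X]) ^ Fintype.card K - Polynomial.X).natDegree := by
    rw [FiniteField.roots_X_pow_card_sub_X,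
      FiniteField.X_pow_card_sub_X_natDegree_eq K Fintype.one_lt_card]
    rfl
  exact (Polynomial.splits_iff_card_roots.2 hroots).mem_range_of_isRoot
    (FiniteField.X_pow_card_sub_X_ne_zero K Fintype.one_lt_card) (by simp [hy])

theorem map_iterateFrobenius_map {p s : ℕ} [ExpChar k p] (hK : Fintype.card K = p ^ s)
    (f : K[X][X]) :
    (f.map (Polynomial.mapRingHom i)).map (Polynomial.mapRingHom (iterateFrobenius k p s)) =
      f.map (Polynomial.mapRingHom i) := by
  rw [Polynomial.map_map, Polynomial.mapRingHom_comp]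
  congr 2
  ext x
  simp [iterateFrobenius_def, ← hK, map_pow_card]

end FiniteBase

section ZerosOver

variable {k : Type*} [Field k] {f : k[X][X]}

open Classical in
/-- The points of the affine curve `f = 0`, with `f` monic in the outer variable, whose first
coordinate lies in the finite set `S`. -/
noncomputable def zerosOver (f : k[X][X]) (S : Finset k) : Finset (k × k) :=
  (S.sigma fun x => (f.map (Polynomial.evalRingHom x)).roots.toFinset).map
    (Equiv.sigmaEquivProd k k).toEmbedding

theorem mem_zerosOver (hf : f.Monic) {S : Finset k} {z : k × k} :
    z ∈ zerosOver f S ↔ z.1 ∈ S ∧ f.evalEval z.1 z.2 = 0 := by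
  simp [zerosOver, Finset.mem_map_equiv, (hf.map _).ne_zero, Polynomial.map_evalRingHom_eval]

open Classical in
theorem card_roots_fiber [IsAlgClosed k] (hf : f.Monic) {x : k}
    (hx : ∀ y, f.evalEval x y = 0 → f.derivative.evalEval x y ≠ 0) :
    (f.map (Polynomial.evalRingHom x)).roots.toFinset.card = f.natDegree := by
  have hne : f.map (Polynomial.evalRingHom x) ≠ 0 := (hf.map _).ne_zero
  rw [Multiset.toFinset_card_of_nodup, IsAlgClosed.card_roots_eq_natDegree, hf.natDegree_map]
  refine Multiset.nodup_iff_count_le_one.2 fun y => not_lt.1 fun hy => ?_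
  rw [Polynomial.count_roots, Polynomial.one_lt_rootMultiplicity_iff_isRoot hne,
    Polynomial.derivative_map, Polynomial.IsRoot.def, Polynomial.IsRoot.def,
    Polynomial.map_evalRingHom_eval, Polynomial.map_evalRingHom_eval] at hy
  exact hx y hy.1 hy.2

theorem card_le_of_exists_derivative_evalEval_eq_zero (hf : f.Monic) (hprime : Prime f)
    (hder : f.derivative ≠ 0) {e : ℕ} (he : ∀ j, (f.coeff j).natDegree ≤ e) {S : Finset k}
    (hS : ∀ x ∈ S, ∃ y, f.evalEval x y = 0 ∧ f.derivative.evalEval x y = 0) :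
    S.card ≤ f.natDegree * (e + (f.natDegree + 1) * e) := by
  choose! y hfy hdy using hS
  have hm : AdjoinRoot.mk f f.derivative ∈ degreePiece hf e := by
    refine (mk_mem_degreePiece hf (Polynomial.degree_derivative_lt hf.ne_zero)).2 fun j => ?_
    rw [Polynomial.coeff_derivative, ← Nat.cast_succ, ← Polynomial.C_eq_natCast]
    exact (Polynomial.natDegree_mul_C_le _ _).trans (he _)
  rw [← Finset.card_map ⟨fun x => (x, y x), fun _ _ h => (Prod.ext_iff.1 h).1⟩]
  exact card_le_of_evalEval_eq_zero hprime he (not_dvd_derivative hder) hm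
    (Finset.forall_mem_map.2 hfy) (Finset.forall_mem_map.2 hdy)

theorem mul_card_le_card_zerosOver [IsAlgClosed k] (hf : f.Monic) (hprime : Prime f)
    (hder : f.derivative ≠ 0) {e : ℕ} (he : ∀ j, (f.coeff j).natDegree ≤ e) (S : Finset k) :
    f.natDegree * S.card ≤
      (zerosOver f S).card + f.natDegree * (f.natDegree * (e + (f.natDegree + 1) * e)) := by
  classical
  let ramified : k → Prop := fun x => ∃ y, f.evalEval x y = 0 ∧ f.derivative.evalEval x y = 0
  have hramified : (S.filter ramified).card ≤ f.natDegree * (e + (f.natDegree + 1) * e) :=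
    card_le_of_exists_derivative_evalEval_eq_zero hf hprime hder he fun x hx =>
      (Finset.mem_filter.1 hx).2
  have hunramified : f.natDegree * (S.filter fun x => ¬ramified x).card ≤
      (zerosOver f S).card := by
    rw [zerosOver, Finset.card_map, Finset.card_sigma, mul_comm, ← smul_eq_mul,
      ← Finset.sum_const]
    refine (Finset.sum_le_sum fun x hx => (card_roots_fiber hf fun y hy hy' => ?_).ge).trans
      (Finset.sum_le_sum_of_subset (Finset.filter_subset _ _))
    exact (Finset.mem_filter.1 hx).2 ⟨y, hy, hy'⟩
  calc f.natDegree * S.card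
      = f.natDegree * (S.filter fun x => ¬ramified x).card +
          f.natDegree * (S.filter ramified).card := by
        rw [← mul_add, add_comm, Finset.card_filter_add_card_filter_not]
    _ ≤ _ := add_le_add hunramified (Nat.mul_le_mul_left _ hramified)

open Classical in
theorem card_filter_zerosOver_le {K : Type*} [Field K] [Fintype K] {f : K[X][X]}
    (i : K →+* k) (hf : f.Monic) :
    ((zerosOver (f.map (Polynomial.mapRingHom i)) (Finset.univ.map ⟨i, i.injective⟩)).filter
      fun z => z.2 ^ Fintype.card K = z.2).card ≤
        {z : K × K | f.evalEval z.1 z.2 = 0}.ncard := by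
  rw [← Set.ncard_coe_finset]
  refine (Set.ncard_le_ncard ?_ (Set.toFinite _)).trans
    (Set.ncard_image_le (f := Prod.map i i) (Set.toFinite _))
  rintro ⟨x, y⟩ hz
  obtain ⟨hz, hy⟩ := Finset.mem_filter.1 hz
  obtain ⟨y, rfl⟩ := mem_range_of_pow_card_eq_self i hy
  obtain ⟨hx, hz⟩ := (mem_zerosOver (hf.map _)).1 hz
  obtain ⟨x, -, rfl⟩ := Finset.mem_map.1 hx
  exact ⟨(x, y), i.injective (by simpa [Polynomial.map_mapRingHom_evalEval] using hz), rfl⟩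

end ZerosOver

/-- The constant in the error term of the point count for an affine plane curve of degree `d` in
the outer variable, with coefficients of degree at most `e`, in characteristic `p`. -/
noncomputable def pointCountConstant (d e p : ℕ) : ℕ :=
  stepanovConstant d ((d + 1) * e) 1 p + stepanovConstant d ((d + 1) * e) (d - 1) p +
    d * (d * (e + (d + 1) * e))

section PointCount

variable {k K : Type*} [Field k] [IsAlgClosed k] [Field K] [Fintype K] {i : K →+* k}
  {p : ℕ} [Fact p.Prime] [CharP k p] {f : K[X][X]} {e a b : ℕ}

theorem ncard_zeros_le (hK : Fintype.card K = p ^ (a + b)) (hab : a ≤ b) (hba : b ≤ a + 1)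
    (hf : f.Monic) (he : ∀ j, (f.coeff j).natDegree ≤ e)
    (hC : pointCountConstant f.natDegree e p ≤ p ^ b)
    (hprime : Prime (f.map (Polynomial.mapRingHom i)))
    (hder : (f.map (Polynomial.mapRingHom i)).derivative ≠ 0) :
    {z : K × K | f.evalEval z.1 z.2 = 0}.ncard ≤
      Fintype.card K + pointCountConstant f.natDegree e p * p ^ b := by
  classical
  have hdeg : (f.map (Polynomial.mapRingHom i)).natDegree = f.natDegree := hf.natDegree_map _
  have hfix : ∀ x, i x ^ p ^ (a + b) = i x := fun x => hK ▸ map_pow_card i x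
  have hcard := card_le_of_pow_eq_self p (hf.map _) hprime hder
    (natDegree_coeff_map_le i he) hab hba (map_iterateFrobenius_map i hK f)
    (T := ({z : K × K | f.evalEval z.1 z.2 = 0} : Finset (K × K)).map
      ⟨Prod.map i i, i.injective.prodMap i.injective⟩)
    (by rw [hdeg, pointCountConstant] at *; lia)
    (Finset.forall_mem_map.2 fun z hz => by
      simp_all [Polynomial.map_mapRingHom_evalEval])
    (Finset.forall_mem_map.2 fun z _ => hfix z.1) (Finset.forall_mem_map.2 fun z _ => hfix z.2)
  rw [Finset.card_map, ← hK, hdeg, ← Set.ncard_coe_finset] at hcard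
  simp only [Finset.coe_filter, Finset.mem_univ, true_and] at hcard
  refine hcard.trans (Nat.add_le_add_left (Nat.mul_le_mul_right _ ?_) _)
  rw [pointCountConstant]
  lia

theorem le_ncard_zeros (hK : Fintype.card K = p ^ (a + b)) (hab : a ≤ b) (hba : b ≤ a + 1)
    (hf : f.Monic) (he : ∀ j, (f.coeff j).natDegree ≤ e)
    (hC : pointCountConstant f.natDegree e p ≤ p ^ b)
    (hprime : Prime (f.map (Polynomial.mapRingHom i)))
    (hder : (f.map (Polynomial.mapRingHom i)).derivative ≠ 0) :
    Fintype.card K ≤ {z : K × K | f.evalEval z.1 z.2 = 0}.ncard +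
      pointCountConstant f.natDegree e p * p ^ b := by
  classical
  have hdeg : (f.map (Polynomial.mapRingHom i)).natDegree = f.natDegree := hf.natDegree_map _
  have hd : 0 < f.natDegree := hdeg ▸ natDegree_pos_of_prime_of_monic (hf.map _) hprime
  have hfix : ∀ x, i x ^ p ^ (a + b) = i x := fun x => hK ▸ map_pow_card i x
  have hmem : ∀ z, z ∈ zerosOver (f.map (Polynomial.mapRingHom i)) _ ↔ _ := fun z =>
    mem_zerosOver (hf.map _) (S := Finset.univ.map ⟨i, i.injective⟩)
  have hall := mul_card_le_card_zerosOver (hf.map _) hprime hder (natDegree_coeff_map_le i he)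
    (Finset.univ.map ⟨i, i.injective⟩)
  have hrational := card_filter_zerosOver_le i hf
  set Z := zerosOver (f.map (Polynomial.mapRingHom i)) (Finset.univ.map ⟨i, i.injective⟩)
  have hnonrational := card_le_of_pow_ne_self p (hf.map _) hprime hder
    (natDegree_coeff_map_le i he) hab hba (map_iterateFrobenius_map i hK f)
    (T := Z.filter fun z => ¬z.2 ^ p ^ (a + b) = z.2)
    (by rw [hdeg, pointCountConstant] at *; lia)
    (fun z hz => ((hmem z).1 (Finset.mem_filter.1 hz).1).2)
    (fun z hz => by
      obtain ⟨x, -, hx⟩ := Finset.mem_map.1 ((hmem z).1 (Finset.mem_filter.1 hz).1).1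
      exact hx ▸ hfix x)
    (fun z hz => (Finset.mem_filter.1 hz).2)
  have hsplit := Finset.card_filter_add_card_filter_not (s := Z)
    (fun z => z.2 ^ p ^ (a + b) = z.2)
  have hsucc : f.natDegree * p ^ (a + b) = (f.natDegree - 1) * p ^ (a + b) + p ^ (a + b) := by
    rw [← Nat.succ_mul, Nat.succ_eq_add_one, Nat.sub_add_cancel hd]
  have hramified := Nat.le_mul_of_pos_right
    (f.natDegree * (f.natDegree * (e + (f.natDegree + 1) * e)))
    (Nat.pow_pos (n := b) (Fact.out : p.Prime).pos)
  rw [hdeg, Finset.card_map, Finset.card_univ, hK] at hall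
  rw [hdeg] at hnonrational
  rw [hK] at hrational
  rw [hK, pointCountConstant, add_mul, add_mul]
  lia

end PointCount

/-! ### Affine charts of the projective plane -/

theorem sum_support_eq_of_isHomogeneous {σ R : Type*} [CommSemiring R] {Q : MvPolynomial σ R}
    {n : ℕ} (hQ : Q.IsHomogeneous n) {d : σ →₀ ℕ} (hd : d ∈ Q.support) :
    ∑ i ∈ d.support, d i = n := by
  simpa [Finsupp.weight_apply, Finsupp.sum] using hQ (MvPolynomial.mem_support_iff.1 hd)

theorem eval_smul_of_isHomogeneous {σ R : Type*} [CommSemiring R] {Q : MvPolynomial σ R} {n : ℕ}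
    (hQ : Q.IsHomogeneous n) (c : R) (v : σ → R) :
    MvPolynomial.eval (c • v) Q = c ^ n * MvPolynomial.eval v Q := by
  rw [MvPolynomial.eval_eq, MvPolynomial.eval_eq, Finset.mul_sum]
  refine Finset.sum_congr rfl fun d hd => ?_
  simp only [Pi.smul_apply, smul_eq_mul, mul_pow, Finset.prod_mul_distrib]
  rw [Finset.prod_pow_eq_pow_sum, sum_support_eq_of_isHomogeneous hQ hd]
  ring

theorem eval_zero_of_isHomogeneous {σ R : Type*} [CommSemiring R] {Q : MvPolynomial σ R} {n : ℕ}
    (hn : n ≠ 0) (hQ : Q.IsHomogeneous n) : MvPolynomial.eval 0 Q = 0 := by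
  simpa [hn] using eval_smul_of_isHomogeneous hQ 0 0

theorem exists_eval_ne_zero {σ R : Type*} [CommRing R] [IsDomain R] [Infinite R]
    {Q : MvPolynomial σ R} (hQ : Q ≠ 0) : ∃ v, MvPolynomial.eval v Q ≠ 0 := by
  by_contra! h
  exact hQ (MvPolynomial.funext fun v => by simp [h v])

section TopCoeff

variable {R : Type*} [CommRing R]

/-- The bivariate polynomial `G` has total degree at most `n`, and `c` is its coefficient at the
`n`-th power of the outer variable. -/
structure HasTopCoeff (n : ℕ) (G : R[X][X]) (c : R) : Prop where
  coeff_eq_zero : ∀ j l, n < j + l → (G.coeff j).coeff l = 0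
  coeff_top : (G.coeff n).coeff 0 = c

namespace HasTopCoeff

variable {m n : ℕ} {G H : R[X][X]} {c c' : R}

theorem natDegree_le (h : HasTopCoeff n G c) : G.natDegree ≤ n := by
  rw [Polynomial.natDegree_le_iff_coeff_eq_zero]
  intro j hj
  ext l
  simpa using h.coeff_eq_zero j l (by omega)

theorem natDegree_coeff_le (h : HasTopCoeff n G c) (j : ℕ) : (G.coeff j).natDegree ≤ n - j := by
  rw [Polynomial.natDegree_le_iff_coeff_eq_zero]
  intro l hl
  exact h.coeff_eq_zero j l (by omega)

theorem coeff_eq_C (h : HasTopCoeff n G c) : G.coeff n = Polynomial.C c := by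
  have hdeg : (G.coeff n).natDegree ≤ 0 := by simpa using h.natDegree_coeff_le n
  rw [Polynomial.eq_C_of_natDegree_le_zero hdeg, h.coeff_top]

theorem C_C (c : R) : HasTopCoeff 0 (Polynomial.C (Polynomial.C c)) c where
  coeff_eq_zero j l h := by
    rcases j with _ | j
    · simp [Polynomial.coeff_C, show l ≠ 0 by omega]
    · simp
  coeff_top := by simp

theorem linear (v e e' : R) :
    HasTopCoeff 1 (Polynomial.C (Polynomial.C v) * Polynomial.X +
      Polynomial.C (Polynomial.C e + Polynomial.X * Polynomial.C e')) v where
  coeff_eq_zero j l h := by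
    rcases j with _ | _ | j
    · simp [Polynomial.coeff_X, Polynomial.coeff_C, show 1 ≠ l by omega, show l ≠ 0 by omega]
    · simp [Polynomial.coeff_C, show l ≠ 0 by omega]
    · simp
  coeff_top := by simp [Polynomial.coeff_C]

theorem mul (hG : HasTopCoeff m G c) (hH : HasTopCoeff n H c') :
    HasTopCoeff (m + n) (G * H) (c * c') where
  coeff_eq_zero j l hjl := by
    rw [Polynomial.coeff_mul, Polynomial.finsetSum_coeff]
    refine Finset.sum_eq_zero fun a ha => ?_
    rw [Polynomial.coeff_mul]
    refine Finset.sum_eq_zero fun b hb => ?_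
    rw [Finset.HasAntidiagonal.mem_antidiagonal] at ha hb
    rcases Nat.lt_or_ge m (a.1 + b.1) with h | h
    · rw [hG.coeff_eq_zero _ _ h, zero_mul]
    · rw [hH.coeff_eq_zero _ _ (by omega), mul_zero]
  coeff_top := by
    rw [Polynomial.coeff_mul_add_eq_of_natDegree_le hG.natDegree_le hH.natDegree_le,
      Polynomial.mul_coeff_zero, hG.coeff_top, hH.coeff_top]

theorem pow (hG : HasTopCoeff m G c) (n : ℕ) : HasTopCoeff (n * m) (G ^ n) (c ^ n) := by
  induction n with
  | zero => simpa using C_C (1 : R)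
  | succ n ih =>
    rw [pow_succ, pow_succ, add_mul, one_mul]
    exact ih.mul hG

theorem sum {ι : Type*} {s : Finset ι} {G : ι → R[X][X]} {c : ι → R}
    (h : ∀ i ∈ s, HasTopCoeff n (G i) (c i)) :
    HasTopCoeff n (∑ i ∈ s, G i) (∑ i ∈ s, c i) where
  coeff_eq_zero j l hjl := by
    simp only [Polynomial.finsetSum_coeff]
    exact Finset.sum_eq_zero fun i hi => (h i hi).coeff_eq_zero j l hjl
  coeff_top := by
    simp only [Polynomial.finsetSum_coeff]
    exact Finset.sum_congr rfl fun i hi => (h i hi).coeff_top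

theorem prod {ι : Type*} {s : Finset ι} {d : ι → ℕ} {G : ι → R[X][X]} {c : ι → R}
    (h : ∀ i ∈ s, HasTopCoeff (d i) (G i) (c i)) :
    HasTopCoeff (∑ i ∈ s, d i) (∏ i ∈ s, G i) (∏ i ∈ s, c i) := by
  classical
  induction s using Finset.induction_on with
  | empty => simpa using C_C (1 : R)
  | insert i s hi ih =>
    rw [Finset.sum_insert hi, Finset.prod_insert hi, Finset.prod_insert hi]
    exact (h i (Finset.mem_insert_self i s)).mul
      (ih fun j hj => h j (Finset.mem_insert_of_mem hj))

end HasTopCoeff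

end TopCoeff

section Charts

variable {σ R : Type*} [CommRing R]

/-- The point with affine coordinates `z` in the chart of `ℙ²` that has `[v]` and `[e']` at
infinity and `[e]` as its origin. -/
def chartPoint (v e e' : σ → R) (z : R × R) : σ → R := z.2 • v + (e + z.1 • e')

/-- Dehomogenization in the chart `(x, y) ↦ y • v + e + x • e'`, as a polynomial in the outer
variable `y` whose coefficients are polynomials in `x`. The vertical lines of the chart are the
lines through `[v]`. -/
noncomputable def affineChart (v e e' : σ → R) : MvPolynomial σ R →+* R[X][X] :=
  MvPolynomial.eval₂Hom (Polynomial.C.comp Polynomial.C) fun i =>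
    Polynomial.C (Polynomial.C (v i)) * Polynomial.X +
      Polynomial.C (Polynomial.C (e i) + Polynomial.X * Polynomial.C (e' i))

/-- Restriction to the line `y ↦ y • u + w`. -/
noncomputable def restrictLine (u w : σ → R) : MvPolynomial σ R →+* R[X] :=
  MvPolynomial.eval₂Hom Polynomial.C fun i =>
    Polynomial.C (u i) * Polynomial.X + Polynomial.C (w i)

@[simp]
theorem affineChart_C (v e e' : σ → R) (c : R) :
    affineChart v e e' (MvPolynomial.C c) = Polynomial.C (Polynomial.C c) := by
  simp [affineChart]

@[simp]
theorem affineChart_X (v e e' : σ → R) (i : σ) :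
    affineChart v e e' (MvPolynomial.X i) = Polynomial.C (Polynomial.C (v i)) * Polynomial.X +
      Polynomial.C (Polynomial.C (e i) + Polynomial.X * Polynomial.C (e' i)) := by
  simp [affineChart]

@[simp]
theorem restrictLine_C (u w : σ → R) (c : R) :
    restrictLine u w (MvPolynomial.C c) = Polynomial.C c := by
  simp [restrictLine]

@[simp]
theorem restrictLine_X (u w : σ → R) (i : σ) :
    restrictLine u w (MvPolynomial.X i) =
      Polynomial.C (u i) * Polynomial.X + Polynomial.C (w i) := by
  simp [restrictLine]

theorem eval_restrictLine (u w : σ → R) (y : R) (Q : MvPolynomial σ R) :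
    (restrictLine u w Q).eval y = MvPolynomial.eval (y • u + w) Q := by
  have h : (Polynomial.evalRingHom y).comp (restrictLine u w) =
      MvPolynomial.eval (y • u + w) := by
    apply MvPolynomial.ringHom_ext
    · simp
    · intro i
      simp [mul_comm (u i)]
  exact DFunLike.congr_fun h Q

theorem map_evalRingHom_affineChart (v e e' : σ → R) (x : R) (Q : MvPolynomial σ R) :
    (affineChart v e e' Q).map (Polynomial.evalRingHom x) = restrictLine v (e + x • e') Q := by
  have h : (Polynomial.mapRingHom (Polynomial.evalRingHom x)).comp (affineChart v e e') =
      restrictLine v (e + x • e') := by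
    apply MvPolynomial.ringHom_ext <;> simp [mul_comm (Polynomial.C x)]
  exact DFunLike.congr_fun h Q

theorem evalEval_affineChart (v e e' : σ → R) (x y : R) (Q : MvPolynomial σ R) :
    (affineChart v e e' Q).evalEval x y = MvPolynomial.eval (chartPoint v e e' (x, y)) Q := by
  rw [← Polynomial.map_evalRingHom_eval, map_evalRingHom_affineChart, eval_restrictLine, chartPoint]

theorem map_affineChart {S : Type*} [CommRing S] (i : R →+* S) (v e e' : σ → R)
    (Q : MvPolynomial σ R) :
    (affineChart v e e' Q).map (Polynomial.mapRingHom i) =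
      affineChart (i ∘ v) (i ∘ e) (i ∘ e') (MvPolynomial.map i Q) := by
  have h : (Polynomial.mapRingHom (Polynomial.mapRingHom i)).comp (affineChart v e e') =
      (affineChart (i ∘ v) (i ∘ e) (i ∘ e')).comp (MvPolynomial.map i) := by
    apply MvPolynomial.ringHom_ext <;> simp
  exact DFunLike.congr_fun h Q

theorem map_restrictLine {S : Type*} [CommRing S] (i : R →+* S) (u w : σ → R)
    (Q : MvPolynomial σ R) :
    (restrictLine u w Q).map i = restrictLine (i ∘ u) (i ∘ w) (MvPolynomial.map i Q) := by
  have h : (Polynomial.mapRingHom i).comp (restrictLine u w) =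
      (restrictLine (i ∘ u) (i ∘ w)).comp (MvPolynomial.map i) := by
    apply MvPolynomial.ringHom_ext <;> simp
  exact DFunLike.congr_fun h Q

theorem coeff_restrictLine (v e e' : σ → R) (x : R) (Q : MvPolynomial σ R) (j : ℕ) :
    (restrictLine v (e + x • e') Q).coeff j = ((affineChart v e e' Q).coeff j).eval x := by
  rw [← map_evalRingHom_affineChart, Polynomial.coeff_map, Polynomial.coe_evalRingHom]

variable {Q : MvPolynomial σ R} {n : ℕ}

theorem hasTopCoeff_affineChart (hQ : Q.IsHomogeneous n) (v e e' : σ → R) :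
    HasTopCoeff n (affineChart v e e' Q) (MvPolynomial.eval v Q) := by
  rw [MvPolynomial.as_sum Q, map_sum, map_sum]
  refine HasTopCoeff.sum fun d hd => ?_
  have hdeg : ∑ i ∈ d.support, d i * 1 = n := by
    simpa using sum_support_eq_of_isHomogeneous hQ hd
  rw [MvPolynomial.monomial_eq, Finsupp.prod, ← zero_add n, ← hdeg]
  simp only [map_mul, map_prod, map_pow, affineChart_C, affineChart_X, MvPolynomial.eval_C,
    MvPolynomial.eval_X]
  exact (HasTopCoeff.C_C _).mul <| HasTopCoeff.prod fun i _ => (HasTopCoeff.linear ..).pow _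

theorem natDegree_restrictLine_le (hQ : Q.IsHomogeneous n) (u w : σ → R) :
    (restrictLine u w Q).natDegree ≤ n := by
  simpa [map_evalRingHom_affineChart] using
    (Polynomial.natDegree_map_le (f := Polynomial.evalRingHom (0 : R))).trans
      (hasTopCoeff_affineChart hQ u w 0).natDegree_le

theorem coeff_restrictLine_top (hQ : Q.IsHomogeneous n) (u w : σ → R) :
    (restrictLine u w Q).coeff n = MvPolynomial.eval u Q := by
  simpa [(hasTopCoeff_affineChart hQ u w 0).coeff_eq_C] using coeff_restrictLine u w 0 0 Q n

theorem natDegree_affineChart (hQ : Q.IsHomogeneous n) (v e e' : σ → R)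
    (hv : MvPolynomial.eval v Q ≠ 0) : (affineChart v e e' Q).natDegree = n := by
  have htop := hasTopCoeff_affineChart hQ v e e'
  refine htop.natDegree_le.antisymm (Polynomial.le_natDegree_of_ne_zero ?_)
  rwa [htop.coeff_eq_C, Polynomial.C_ne_zero]

end Charts

section TripleProduct

variable {R : Type*} [CommRing R]

theorem triple_product_smul (t u w x : Fin 3 → R) :
    (t ⬝ᵥ u ⨯₃ w) • x =
      ((u ⨯₃ w) ⬝ᵥ x) • t + ((w ⨯₃ t) ⬝ᵥ x) • u + ((t ⨯₃ u) ⬝ᵥ x) • w := by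
  ext j
  simp only [Pi.add_apply, Pi.smul_apply, smul_eq_mul, cross_apply, Matrix.vec3_dotProduct,
    Matrix.cons_val]
  fin_cases j <;> simp only [Fin.mk_zero, Fin.mk_one, Fin.reduceFinMk] <;> ring

theorem comp_crossProduct {S : Type*} [CommRing S] (i : R →+* S) (u w : Fin 3 → R) :
    i ∘ (u ⨯₃ w) = (i ∘ u) ⨯₃ (i ∘ w) := by
  ext j
  fin_cases j <;> simp [cross_apply]

theorem map_triple_product {S : Type*} [CommRing S] (i : R →+* S) (t u w : Fin 3 → R) :
    i (t ⬝ᵥ u ⨯₃ w) = (i ∘ t) ⬝ᵥ (i ∘ u) ⨯₃ (i ∘ w) := by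
  rw [RingHom.map_dotProduct, comp_crossProduct]

theorem cross_dot_chartPoint (v e e' : Fin 3 → R) (z : R × R) :
    (e' ⨯₃ v) ⬝ᵥ chartPoint v e e' z = v ⬝ᵥ e ⨯₃ e' := by
  simp only [chartPoint, cross_apply, Matrix.vec3_dotProduct, Pi.add_apply, Pi.smul_apply,
    smul_eq_mul, Matrix.cons_val]
  ring

end TripleProduct

section LinearForm

variable {R : Type*} [CommRing R]

/-- The linear form `x ↦ a ⬝ᵥ x`, as a polynomial. -/
noncomputable def linearForm (a : Fin 3 → R) : MvPolynomial (Fin 3) R :=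
  ∑ i, MvPolynomial.C (a i) * MvPolynomial.X i

theorem eval_linearForm (a w : Fin 3 → R) : MvPolynomial.eval w (linearForm a) = a ⬝ᵥ w := by
  simp [linearForm, dotProduct]

theorem isHomogeneous_linearForm (a : Fin 3 → R) : (linearForm a).IsHomogeneous 1 :=
  MvPolynomial.IsHomogeneous.sum _ _ _ fun i _ => MvPolynomial.isHomogeneous_C_mul_X (a i) i

theorem affineChart_linearForm (a v e e' : Fin 3 → R) :
    affineChart v e e' (linearForm a) = Polynomial.C (Polynomial.C (a ⬝ᵥ v)) * Polynomial.X +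
      Polynomial.C (Polynomial.C (a ⬝ᵥ e) + Polynomial.X * Polynomial.C (a ⬝ᵥ e')) := by
  simp only [linearForm, map_mul, affineChart_C, affineChart_X, Fin.sum_univ_three,
    Matrix.vec3_dotProduct, map_add]
  ring

end LinearForm

section Dehomogenization

variable {k : Type*} [Field k] {v e e' : Fin 3 → k}

theorem exists_eq_smul_chartPoint (h : v ⬝ᵥ e ⨯₃ e' ≠ 0) {w : Fin 3 → k}
    (hw : (e' ⨯₃ v) ⬝ᵥ w ≠ 0) : ∃ (t : k) (z : k × k), t ≠ 0 ∧ w = t • chartPoint v e e' z := by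
  refine ⟨(e' ⨯₃ v) ⬝ᵥ w / v ⬝ᵥ e ⨯₃ e',
    ((v ⨯₃ e) ⬝ᵥ w / (e' ⨯₃ v) ⬝ᵥ w, (e ⨯₃ e') ⬝ᵥ w / (e' ⨯₃ v) ⬝ᵥ w), div_ne_zero hw h, ?_⟩
  ext j
  have hj := congrFun (triple_product_smul v e e' w) j
  simp only [chartPoint, Pi.add_apply, Pi.smul_apply, smul_eq_mul] at hj ⊢
  field_simp
  linear_combination hj

theorem affineChart_linearForm_eq_one (h : v ⬝ᵥ e ⨯₃ e' ≠ 0) :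
    affineChart v e e' (linearForm ((v ⬝ᵥ e ⨯₃ e')⁻¹ • e' ⨯₃ v)) = 1 := by
  have he : (e' ⨯₃ v) ⬝ᵥ e = v ⬝ᵥ e ⨯₃ e' := by
    rw [dotProduct_comm, ← triple_product_permutation]
  simp [affineChart_linearForm, smul_dotProduct, he, h, dotProduct_comm (e' ⨯₃ v)]

theorem exists_isHomogeneous_affineChart_eq_X (h : v ⬝ᵥ e ⨯₃ e' ≠ 0) :
    ∃ G : MvPolynomial (Fin 3) k, G.IsHomogeneous 1 ∧ affineChart v e e' G = Polynomial.X := by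
  refine ⟨linearForm ((v ⬝ᵥ e ⨯₃ e')⁻¹ • e ⨯₃ e'), isHomogeneous_linearForm _, ?_⟩
  simp [affineChart_linearForm, smul_dotProduct, dotProduct_comm (e ⨯₃ e'), h]

theorem exists_isHomogeneous_affineChart_eq_C_X (h : v ⬝ᵥ e ⨯₃ e' ≠ 0) :
    ∃ G : MvPolynomial (Fin 3) k,
      G.IsHomogeneous 1 ∧ affineChart v e e' G = Polynomial.C Polynomial.X := by
  have he' : (v ⨯₃ e) ⬝ᵥ e' = v ⬝ᵥ e ⨯₃ e' := by
    rw [dotProduct_comm, triple_product_permutation]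
  refine ⟨linearForm ((v ⬝ᵥ e ⨯₃ e')⁻¹ • v ⨯₃ e), isHomogeneous_linearForm _, ?_⟩
  simp [affineChart_linearForm, smul_dotProduct, he', h, dotProduct_comm (v ⨯₃ e)]

theorem exists_isHomogeneous_affineChart_eq (h : v ⬝ᵥ e ⨯₃ e' ≠ 0) (g : k[X][X]) :
    ∃ (G : MvPolynomial (Fin 3) k) (n : ℕ), G.IsHomogeneous n ∧ affineChart v e e' G = g := by
  set L := linearForm ((v ⬝ᵥ e ⨯₃ e')⁻¹ • e' ⨯₃ v)
  have hL : affineChart v e e' L = 1 := affineChart_linearForm_eq_one h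
  have hLhom : L.IsHomogeneous 1 := isHomogeneous_linearForm _
  let S : Subring k[X][X] :=
  { carrier := {g | ∃ (G : MvPolynomial (Fin 3) k) (n : ℕ), G.IsHomogeneous n ∧
      affineChart v e e' G = g}
    mul_mem' := by
      rintro _ _ ⟨G, m, hG, rfl⟩ ⟨G', n, hG', rfl⟩
      exact ⟨G * G', m + n, hG.mul hG', map_mul _ _ _⟩
    add_mem' := by
      rintro _ _ ⟨G, m, hG, rfl⟩ ⟨G', n, hG', rfl⟩
      refine ⟨G * L ^ n + L ^ m * G', m + n, ?_, by simp [hL]⟩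
      simpa using (hG.mul (hLhom.pow n)).add (by simpa using (hLhom.pow m).mul hG')
    one_mem' := ⟨1, 0, MvPolynomial.isHomogeneous_one _ _, map_one _⟩
    zero_mem' := ⟨0, 0, MvPolynomial.isHomogeneous_zero _ _ _, map_zero _⟩
    neg_mem' := by
      rintro _ ⟨G, n, hG, rfl⟩
      exact ⟨-G, n, hG.neg, map_neg _ _⟩ }
  have hX : Polynomial.X ∈ S := by
    obtain ⟨G, hG⟩ := exists_isHomogeneous_affineChart_eq_X h
    exact ⟨G, 1, hG⟩
  have hCX : Polynomial.C Polynomial.X ∈ S := by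
    obtain ⟨G, hG⟩ := exists_isHomogeneous_affineChart_eq_C_X h
    exact ⟨G, 1, hG⟩
  have hCC (c : k) : Polynomial.C (Polynomial.C c) ∈ S :=
    ⟨MvPolynomial.C c, 0, MvPolynomial.isHomogeneous_C _ _, affineChart_C ..⟩
  have hC (c : k[X]) : Polynomial.C c ∈ S := by
    rw [c.as_sum_range_C_mul_X_pow, map_sum]
    exact S.sum_mem fun j _ => by
      rw [map_mul, map_pow]
      exact S.mul_mem (hCC _) (S.pow_mem hCX j)
  change g ∈ S
  rw [g.as_sum_range_C_mul_X_pow]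
  exact S.sum_mem fun j _ => S.mul_mem (hC _) (S.pow_mem hX j)

variable [Infinite k]

theorem eq_zero_of_affineChart_eq_zero (h : v ⬝ᵥ e ⨯₃ e' ≠ 0) {G : MvPolynomial (Fin 3) k} {n : ℕ}
    (hG : G.IsHomogeneous n) (h0 : affineChart v e e' G = 0) : G = 0 := by
  have hL : linearForm (e' ⨯₃ v) ≠ 0 := fun hL => h <| by
    rw [← cross_dot_chartPoint v e e' (0, 0), ← eval_linearForm, hL, map_zero]
  have hmul : linearForm (e' ⨯₃ v) * G = 0 := MvPolynomial.funext fun w => by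
    rw [map_mul, eval_linearForm, map_zero, mul_eq_zero, or_iff_not_imp_left]
    intro hw
    obtain ⟨t, z, -, rfl⟩ := exists_eq_smul_chartPoint h hw
    rw [eval_smul_of_isHomogeneous hG, ← evalEval_affineChart, h0, Polynomial.evalEval_zero,
      mul_zero]
  exact (mul_eq_zero.1 hmul).resolve_left hL

/- Lift a divisibility in the chart to homogeneous polynomials; it survives up to powers of the
line at infinity, which `Q` cannot divide unless its dehomogenization is a unit. -/
theorem prime_affineChart_of_not_isUnit (h : v ⬝ᵥ e ⨯₃ e' ≠ 0) {Q : MvPolynomial (Fin 3) k} {n : ℕ}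
    (hQ : Irreducible Q) (hhom : Q.IsHomogeneous n) (hunit : ¬ IsUnit (affineChart v e e' Q)) :
    Prime (affineChart v e e' Q) := by
  refine ⟨fun h0 => hQ.ne_zero (eq_zero_of_affineChart_eq_zero h hhom h0), hunit, ?_⟩
  rintro g g' ⟨u, hu⟩
  obtain ⟨G, a, hG, rfl⟩ := exists_isHomogeneous_affineChart_eq h g
  obtain ⟨G', b, hG', rfl⟩ := exists_isHomogeneous_affineChart_eq h g'
  obtain ⟨U, c, hU, rfl⟩ := exists_isHomogeneous_affineChart_eq h u
  set L := linearForm ((v ⬝ᵥ e ⨯₃ e')⁻¹ • e' ⨯₃ v)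
  have hL : affineChart v e e' L = 1 := affineChart_linearForm_eq_one h
  have hLhom : L.IsHomogeneous 1 := isHomogeneous_linearForm _
  have hlift : L ^ (n + c) * (G * G') - Q * U * L ^ (a + b) = 0 := by
    refine eq_zero_of_affineChart_eq_zero h (n := (n + c) + (a + b)) ?_ (by simp [hL, hu])
    exact .sub (by simpa using (hLhom.pow (n + c)).mul (hG.mul hG'))
      (by simpa using (hhom.mul hU).mul (hLhom.pow (a + b)))
  have hdvd : Q ∣ L ^ (n + c) * (G * G') := by
    rw [sub_eq_zero.1 hlift, mul_assoc]
    exact dvd_mul_right _ _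
  rcases hQ.prime.dvd_or_dvd hdvd with hQL | hQG
  · have hone := map_dvd (affineChart v e e') (hQ.prime.dvd_of_dvd_pow hQL)
    rw [hL] at hone
    exact absurd (isUnit_of_dvd_one hone) hunit
  · exact (hQ.prime.dvd_or_dvd hQG).imp (map_dvd _) (map_dvd _)

theorem prime_affineChart (h : v ⬝ᵥ e ⨯₃ e' ≠ 0) {Q : MvPolynomial (Fin 3) k} {n : ℕ}
    (hn : n ≠ 0) (hQ : Irreducible Q) (hhom : Q.IsHomogeneous n)
    (hv : MvPolynomial.eval v Q ≠ 0) : Prime (affineChart v e e' Q) := by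
  refine prime_affineChart_of_not_isUnit h hQ hhom fun hunit => hn ?_
  rw [← natDegree_affineChart hhom v e e' hv, Polynomial.natDegree_eq_zero_of_isUnit hunit]

end Dehomogenization

section VectorGeometry

variable {K : Type*} [Field K] {u w : Fin 3 → K}

theorem cross_smul_add_smul (u w : Fin 3 → K) (a b c d : K) :
    (a • u + b • w) ⨯₃ (c • u + d • w) = (a * d - b * c) • (u ⨯₃ w) := by
  simp only [map_add, map_smul, LinearMap.add_apply, LinearMap.smul_apply, cross_self, smul_zero,
    zero_add, add_zero, ← cross_anticomm u w, smul_neg, smul_smul, ← neg_smul, ← add_smul]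
  ring_nf

theorem smul_add_ne_zero_of_cross_ne_zero (h : u ⨯₃ w ≠ 0) (y : K) : y • u + w ≠ 0 := fun h0 =>
  h <| by simpa [h0] using (cross_smul_add_smul u w 1 0 y 1).symm

theorem exists_dot_ne_zero (hu : u ≠ 0) : ∃ t, t ⬝ᵥ u ≠ 0 := by
  obtain ⟨j, hj⟩ := Function.ne_iff.1 hu
  exact ⟨Pi.single j 1, by simpa using hj⟩

theorem exists_triple_product_single_ne_zero (hu : u ≠ 0) :
    ∃ j l, u ⬝ᵥ (Pi.single j 1 : Fin 3 → K) ⨯₃ (Pi.single l 1) ≠ 0 := by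
  obtain ⟨m, hm⟩ := Function.ne_iff.1 hu
  refine ⟨m + 1, m + 2, ?_⟩
  fin_cases m <;>
    simpa only [cross_apply, Matrix.vec3_dotProduct, Matrix.cons_val, Pi.single_apply,
      Fin.reduceFinMk, Fin.reduceAdd, Fin.reduceEq, Fin.isValue, if_true, if_false, mul_zero,
      mul_one, sub_zero, zero_sub, zero_add, add_zero, Fin.zero_eta, Fin.mk_one,
      sub_self, reduceIte, Pi.zero_apply] using hm

theorem exists_eq_smul_add_smul (h : u ⨯₃ w ≠ 0) {x : Fin 3 → K} (hx : (u ⨯₃ w) ⬝ᵥ x = 0) :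
    ∃ α β : K, x = α • u + β • w := by
  obtain ⟨t, ht⟩ := exists_dot_ne_zero h
  refine ⟨(w ⨯₃ t) ⬝ᵥ x / t ⬝ᵥ u ⨯₃ w, (t ⨯₃ u) ⬝ᵥ x / t ⬝ᵥ u ⨯₃ w, ?_⟩
  have hdecomp := triple_product_smul t u w x
  rw [hx, zero_smul, zero_add] at hdecomp
  rw [div_eq_inv_mul, div_eq_inv_mul, mul_smul, mul_smul, ← smul_add, ← hdecomp,
    inv_smul_smul₀ ht]

theorem cross_cross_cross (a x y : Fin 3 → K) :
    (a ⨯₃ x) ⨯₃ (a ⨯₃ y) = (a ⬝ᵥ x ⨯₃ y) • a := by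
  rw [cross_apply, cross_apply, cross_apply, cross_apply, Matrix.vec3_dotProduct]
  ext r
  fin_cases r <;> simp only [Pi.smul_apply, smul_eq_mul, Matrix.cons_val, Fin.reduceFinMk,
    Fin.zero_eta, Fin.mk_one, Fin.isValue] <;> ring

theorem comp_ne_zero {L : Type*} [Field L] (i : K →+* L) (hu : u ≠ 0) :
    i ∘ u ≠ 0 := by
  obtain ⟨j, hj⟩ := Function.ne_iff.1 hu
  exact Function.ne_iff.2 ⟨j, (map_ne_zero i).2 hj⟩

theorem exists_cross_eq_smul {a : Fin 3 → K} (ha : a ≠ 0) :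
    ∃ (u w : Fin 3 → K) (c : K), c ≠ 0 ∧ u ⨯₃ w = c • a := by
  obtain ⟨j, l, hjl⟩ := exists_triple_product_single_ne_zero ha
  exact ⟨a ⨯₃ Pi.single j 1, a ⨯₃ Pi.single l 1, _, hjl, cross_cross_cross a _ _⟩

end VectorGeometry

section ProjectivePlane

variable {K : Type} [Field K]

theorem onCurve_mk {Q : MvPolynomial (Fin 3) K} {n : ℕ} (hQ : Q.IsHomogeneous n) {w : Fin 3 → K}
    (hw : w ≠ 0) : OnCurve Q (Projectivization.mk K w hw) ↔ MvPolynomial.eval w Q = 0 := by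
  obtain ⟨a, ha⟩ := Projectivization.exists_smul_eq_mk_rep K w hw
  rw [OnCurve, ← ha, Units.smul_def, eval_smul_of_isHomogeneous hQ]
  simp

theorem dot_rep_mk (a : Fin 3 → K) {w : Fin 3 → K} (hw : w ≠ 0) :
    a ⬝ᵥ (Projectivization.mk K w hw).rep = 0 ↔ a ⬝ᵥ w = 0 := by
  obtain ⟨b, hb⟩ := Projectivization.exists_smul_eq_mk_rep K w hw
  rw [← hb, Units.smul_def, dotProduct_smul]
  simp

theorem incid_mk {a w : Fin 3 → K} (ha : a ≠ 0) (hw : w ≠ 0) :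
    Incid (Projectivization.mk K a ha) (Projectivization.mk K w hw) ↔ a ⬝ᵥ w = 0 := by
  change _ ⬝ᵥ _ = 0 ↔ _
  rw [dot_rep_mk, dotProduct_comm, dot_rep_mk, dotProduct_comm]

end ProjectivePlane

section RestrictLine

variable {K : Type*} [Field K] {Q : MvPolynomial (Fin 3) K} {n : ℕ}

theorem eval_eq_zero_of_restrictLine_eq_zero (hhom : Q.IsHomogeneous n) {u w : Fin 3 → K}
    (h : restrictLine u w Q = 0) (α β : K) : MvPolynomial.eval (α • u + β • w) Q = 0 := by
  by_cases hβ : β = 0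
  · rw [hβ, zero_smul, add_zero, eval_smul_of_isHomogeneous hhom,
      ← coeff_restrictLine_top hhom u w, h, Polynomial.coeff_zero, mul_zero]
  · have hsmul : α • u + β • w = β • ((α / β) • u + w) := by
      rw [smul_add, smul_smul, mul_div_cancel₀ _ hβ]
    rw [hsmul, eval_smul_of_isHomogeneous hhom, ← eval_restrictLine, h, Polynomial.eval_zero,
      mul_zero]

theorem restrictLine_ne_zero [Infinite K] (hQ : Irreducible Q) (hhom : Q.IsHomogeneous n)
    (hn : 2 ≤ n) {u w : Fin 3 → K} (huw : u ⨯₃ w ≠ 0) : restrictLine u w Q ≠ 0 := by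
  intro h
  obtain ⟨O, hO⟩ := exists_eval_ne_zero hQ.ne_zero
  have hO' : O ⬝ᵥ u ⨯₃ w ≠ 0 := by
    intro h0
    obtain ⟨α, β, rfl⟩ := exists_eq_smul_add_smul huw (dotProduct_comm O _ ▸ h0)
    exact hO (eval_eq_zero_of_restrictLine_eq_zero hhom h α β)
  have hcoeff : (affineChart O u w Q).coeff 0 = 0 := Polynomial.funext fun x => by
    rw [Polynomial.coeff_zero_eq_eval_zero, ← Polynomial.C_0, ← Polynomial.evalEval,
      evalEval_affineChart]
    simpa [chartPoint] using eval_eq_zero_of_restrictLine_eq_zero hhom h 1 x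
  have hirr := (prime_affineChart hO' (by omega) hQ hhom hO).irreducible
  have hdeg := natDegree_affineChart hhom O u w hO
  obtain ⟨g, hg⟩ := Polynomial.X_dvd_iff.2 hcoeff
  rcases hirr.isUnit_or_isUnit hg with hX | hg_unit
  · exact Polynomial.not_isUnit_X hX
  · have hmul := Polynomial.natDegree_mul_le (p := Polynomial.X) (q := g)
    rw [← hg, hdeg, Polynomial.natDegree_eq_zero_of_isUnit hg_unit, Polynomial.natDegree_X] at hmul
    omega

theorem card_roots_add_le [DecidableEq K] {g : K[X]} (hg : g ≠ 0) (hdeg : g.natDegree ≤ n) :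
    g.roots.toFinset.card + (if g.coeff n = 0 then 1 else 0) ≤ n := by
  have hroots : g.roots.toFinset.card ≤ g.natDegree :=
    (Multiset.toFinset_card_le _).trans g.card_roots'
  split_ifs with h
  · have hne : g.natDegree ≠ n := fun hn =>
      hg (Polynomial.leadingCoeff_eq_zero.1 (by rwa [Polynomial.leadingCoeff, hn]))
    omega
  · omega

end RestrictLine

section LineIntersection

variable {K k : Type} [Field K] [Field k] [Infinite k] {Q : MvPolynomial (Fin 3) K} {n : ℕ}

theorem exists_eq_mk_of_dot_rep_eq_zero (hhom : Q.IsHomogeneous n) {u w : Fin 3 → K}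
    (huw : u ⨯₃ w ≠ 0) {x : P2 K} (hx : OnCurve Q x) (hux : (u ⨯₃ w) ⬝ᵥ x.rep = 0) :
    (∃ hu, x = Projectivization.mk K u hu ∧ MvPolynomial.eval u Q = 0) ∨
      ∃ y, x = Projectivization.mk K (y • u + w) (smul_add_ne_zero_of_cross_ne_zero huw y) ∧
        (restrictLine u w Q).eval y = 0 := by
  obtain ⟨α, β, hαβ⟩ := exists_eq_smul_add_smul huw hux
  by_cases hβ : β = 0
  · have hu : u ≠ 0 := by rintro rfl; simp at huw
    have hxu : x = Projectivization.mk K u hu := by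
      rw [← x.mk_rep, Projectivization.mk_eq_mk_iff']
      exact ⟨α, by simp [hαβ, hβ]⟩
    exact Or.inl ⟨hu, hxu, (onCurve_mk hhom hu).1 (hxu ▸ hx)⟩
  · have hxy : x = Projectivization.mk K ((α / β) • u + w)
        (smul_add_ne_zero_of_cross_ne_zero huw (α / β)) := by
      conv_lhs => rw [← x.mk_rep]
      rw [Projectivization.mk_eq_mk_iff']
      exact ⟨β, by rw [hαβ, smul_add, smul_smul, mul_div_cancel₀ _ hβ]⟩
    refine Or.inr ⟨α / β, hxy, ?_⟩
    rwa [eval_restrictLine, ← onCurve_mk hhom (smul_add_ne_zero_of_cross_ne_zero huw _), ← hxy]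

theorem encard_curve_inter_line_le (i : K →+* k) (hQ : Irreducible (MvPolynomial.map i Q))
    (hhom : Q.IsHomogeneous n) (hn : 2 ≤ n) {a : Fin 3 → K} (ha : a ≠ 0) :
    {x : P2 K | OnCurve Q x ∧ a ⬝ᵥ x.rep = 0}.encard ≤ n := by
  classical
  obtain ⟨u, w, c, hc, hcr⟩ := exists_cross_eq_smul ha
  have huw : u ⨯₃ w ≠ 0 := hcr ▸ smul_ne_zero hc ha
  have hu : u ≠ 0 := by rintro rfl; simp at huw
  have hne : restrictLine u w Q ≠ 0 := fun h0 => by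
    refine restrictLine_ne_zero hQ (hhom.map i) hn (u := i ∘ u) (w := i ∘ w) ?_ ?_
    · exact comp_crossProduct i u w ▸ comp_ne_zero i huw
    · rw [← map_restrictLine, h0, Polynomial.map_zero]
  let f : K → P2 K := fun y =>
    Projectivization.mk K (y • u + w) (smul_add_ne_zero_of_cross_ne_zero huw y)
  let T : Finset (P2 K) := (restrictLine u w Q).roots.toFinset.image f ∪
    (if MvPolynomial.eval u Q = 0 then {Projectivization.mk K u hu} else ∅)
  have hsub : {x : P2 K | OnCurve Q x ∧ a ⬝ᵥ x.rep = 0} ⊆ T := by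
    rintro x ⟨hx, hax⟩
    rcases exists_eq_mk_of_dot_rep_eq_zero hhom huw hx (by simp [hcr, hax]) with
      ⟨_, rfl, hu0⟩ | ⟨y, rfl, hy⟩
    · simp [T, hu0]
    · exact Finset.mem_union_left _ (Finset.mem_image.2 ⟨y, by simpa [hne] using hy, rfl⟩)
  have hT : T.card ≤ n := calc
    T.card ≤ (restrictLine u w Q).roots.toFinset.card +
        (if MvPolynomial.eval u Q = 0 then 1 else 0) := by
      refine (Finset.card_union_le _ _).trans (add_le_add Finset.card_image_le ?_)
      split_ifs <;> simp
    _ ≤ n := by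
      simpa only [coeff_restrictLine_top hhom] using
        card_roots_add_le hne (natDegree_restrictLine_le hhom u w)
  calc _ ≤ (T : Set (P2 K)).encard := Set.encard_le_encard hsub
    _ ≤ n := by rw [Set.encard_coe_eq_coe_finsetCard]; exact_mod_cast hT

theorem ncard_curve_inter_line_le (i : K →+* k) (hQ : Irreducible (MvPolynomial.map i Q))
    (hhom : Q.IsHomogeneous n) (hn : 2 ≤ n) {a : Fin 3 → K} (ha : a ≠ 0) :
    {x : P2 K | OnCurve Q x ∧ a ⬝ᵥ x.rep = 0}.ncard ≤ n :=
  ENat.toNat_le_of_le_natCast (encard_curve_inter_line_le i hQ hhom hn ha)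

end LineIntersection

section ChartMap

variable {K : Type} [Field K] {v e e' : Fin 3 → K}

theorem chartPoint_ne_zero (h : v ⬝ᵥ e ⨯₃ e' ≠ 0) (z : K × K) : chartPoint v e e' z ≠ 0 :=
  fun h0 => h <| by rw [← cross_dot_chartPoint v e e' z, h0, dotProduct_zero]

theorem cross_ne_zero_of_triple_product_ne_zero (h : v ⬝ᵥ e ⨯₃ e' ≠ 0) : e' ⨯₃ v ≠ 0 :=
  fun h0 => h <| by rw [triple_product_permutation, h0, dotProduct_zero]

theorem cross_add_smul_ne_zero (h : v ⬝ᵥ e ⨯₃ e' ≠ 0) (x : K) : v ⨯₃ (e + x • e') ≠ 0 := by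
  have hperm : v ⬝ᵥ e ⨯₃ e' = e' ⬝ᵥ v ⨯₃ (e + x • e') := by
    rw [triple_product_permutation, triple_product_permutation]
    simp
  exact fun h0 => h <| by rw [hperm, h0, dotProduct_zero]

/-- The parametrization of the complement of the line `e'v` by the affine plane: `z` goes to the
point with homogeneous coordinates `chartPoint v e e' z`. -/
noncomputable def chartMap (h : v ⬝ᵥ e ⨯₃ e' ≠ 0) (z : K × K) : P2 K :=
  Projectivization.mk K (chartPoint v e e' z) (chartPoint_ne_zero h z)

theorem chartMap_injective (h : v ⬝ᵥ e ⨯₃ e' ≠ 0) : Function.Injective (chartMap h) := by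
  intro z z' hz
  rw [chartMap, chartMap, Projectivization.mk_eq_mk_iff_crossProduct_eq_zero] at hz
  have h₁ : v ⬝ᵥ (chartPoint v e e' z ⨯₃ chartPoint v e e' z') =
      (v ⬝ᵥ e ⨯₃ e') * (z'.1 - z.1) := by
    simp only [chartPoint, cross_apply, Matrix.vec3_dotProduct, Pi.add_apply, Pi.smul_apply,
      smul_eq_mul, Matrix.cons_val]
    ring
  have h₂ : e' ⬝ᵥ (chartPoint v e e' z ⨯₃ chartPoint v e e' z') =
      (v ⬝ᵥ e ⨯₃ e') * (z.2 - z'.2) := by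
    simp only [chartPoint, cross_apply, Matrix.vec3_dotProduct, Pi.add_apply, Pi.smul_apply,
      smul_eq_mul, Matrix.cons_val]
    ring
  rw [hz, dotProduct_zero, eq_comm, mul_eq_zero_iff_left h, sub_eq_zero] at h₁ h₂
  exact Prod.ext h₁.symm h₂

theorem exists_chartMap_eq (h : v ⬝ᵥ e ⨯₃ e' ≠ 0) {x : P2 K} (hx : (e' ⨯₃ v) ⬝ᵥ x.rep ≠ 0) :
    ∃ z, chartMap h z = x := by
  obtain ⟨t, z, -, hz⟩ := exists_eq_smul_chartPoint h hx
  refine ⟨z, Eq.symm ?_⟩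
  rw [← x.mk_rep, chartMap, Projectivization.mk_eq_mk_iff']
  exact ⟨t, hz.symm⟩

theorem onCurve_chartMap (h : v ⬝ᵥ e ⨯₃ e' ≠ 0) {Q : MvPolynomial (Fin 3) K} {n : ℕ}
    (hhom : Q.IsHomogeneous n) (z : K × K) :
    OnCurve Q (chartMap h z) ↔ MvPolynomial.eval (chartPoint v e e' z) Q = 0 :=
  onCurve_mk hhom _

theorem setOf_onCurve_subset (h : v ⬝ᵥ e ⨯₃ e' ≠ 0) {Q : MvPolynomial (Fin 3) K} {n : ℕ}
    (hhom : Q.IsHomogeneous n) :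
    {x | OnCurve Q x} ⊆ chartMap h '' {z | MvPolynomial.eval (chartPoint v e e' z) Q = 0} ∪
      {x | OnCurve Q x ∧ (e' ⨯₃ v) ⬝ᵥ x.rep = 0} := by
  intro x hx
  by_cases hinf : (e' ⨯₃ v) ⬝ᵥ x.rep = 0
  · exact Or.inr ⟨hx, hinf⟩
  · obtain ⟨z, rfl⟩ := exists_chartMap_eq h hinf
    exact Or.inl ⟨z, (onCurve_chartMap h hhom z).1 hx, rfl⟩

theorem ncard_chart_le_ncard_curve [Finite K] (h : v ⬝ᵥ e ⨯₃ e' ≠ 0)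
    {Q : MvPolynomial (Fin 3) K} {n : ℕ} (hhom : Q.IsHomogeneous n) :
    {z | MvPolynomial.eval (chartPoint v e e' z) Q = 0}.ncard ≤ {x | OnCurve Q x}.ncard :=
  Set.ncard_le_ncard_of_injOn (chartMap h) (fun z hz => (onCurve_chartMap h hhom z).2 hz)
    (chartMap_injective h).injOn

theorem ncard_curve_le_ncard_chart_add [Finite K] {k : Type} [Field k] [Infinite k] (i : K →+* k)
    (h : v ⬝ᵥ e ⨯₃ e' ≠ 0) {Q : MvPolynomial (Fin 3) K} {n : ℕ}
    (hQ : Irreducible (MvPolynomial.map i Q)) (hhom : Q.IsHomogeneous n) (hn : 2 ≤ n) :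
    {x | OnCurve Q x}.ncard ≤ {z | MvPolynomial.eval (chartPoint v e e' z) Q = 0}.ncard + n :=
  calc {x | OnCurve Q x}.ncard ≤ _ := Set.ncard_le_ncard (setOf_onCurve_subset h hhom)
    _ ≤ _ := Set.ncard_union_le _ _
    _ ≤ _ := add_le_add (Set.ncard_image_le (Set.toFinite _))
      (ncard_curve_inter_line_le i hQ hhom hn (cross_ne_zero_of_triple_product_ne_zero h))

end ChartMap

section MonicChart

variable {K : Type*} [Field K] {Q : MvPolynomial (Fin 3) K} {n : ℕ}

/-- The dehomogenization `affineChart v e e' Q`, divided by its top coefficient `Q(v)`. -/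
noncomputable def monicChart (v e e' : Fin 3 → K) (Q : MvPolynomial (Fin 3) K) : K[X][X] :=
  Polynomial.C (Polynomial.C (MvPolynomial.eval v Q)⁻¹) * affineChart v e e' Q

theorem evalEval_monicChart (v e e' : Fin 3 → K) (Q : MvPolynomial (Fin 3) K) (x y : K) :
    (monicChart v e e' Q).evalEval x y =
      (MvPolynomial.eval v Q)⁻¹ * MvPolynomial.eval (chartPoint v e e' (x, y)) Q := by
  rw [monicChart, Polynomial.evalEval_mul, evalEval_affineChart, Polynomial.evalEval_C,
    Polynomial.eval_C]

theorem setOf_evalEval_monicChart_eq_zero {v : Fin 3 → K} (hv : MvPolynomial.eval v Q ≠ 0)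
    (e e' : Fin 3 → K) : {z : K × K | (monicChart v e e' Q).evalEval z.1 z.2 = 0} =
      {z | MvPolynomial.eval (chartPoint v e e' z) Q = 0} := by
  ext z
  simp [evalEval_monicChart, hv]

theorem natDegree_coeff_monicChart_le (hhom : Q.IsHomogeneous n) (v e e' : Fin 3 → K) (j : ℕ) :
    ((monicChart v e e' Q).coeff j).natDegree ≤ n := by
  rw [monicChart, Polynomial.coeff_C_mul]
  exact (Polynomial.natDegree_C_mul_le _ _).trans
    (((hasTopCoeff_affineChart hhom v e e').natDegree_coeff_le j).trans (Nat.sub_le _ _))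

theorem natDegree_monicChart (hhom : Q.IsHomogeneous n) {v : Fin 3 → K}
    (hv : MvPolynomial.eval v Q ≠ 0) (e e' : Fin 3 → K) :
    (monicChart v e e' Q).natDegree = n := by
  rw [monicChart, Polynomial.natDegree_C_mul (by simpa using hv),
    natDegree_affineChart hhom v e e' hv]

theorem monic_monicChart (hhom : Q.IsHomogeneous n) {v : Fin 3 → K}
    (hv : MvPolynomial.eval v Q ≠ 0) (e e' : Fin 3 → K) : (monicChart v e e' Q).Monic := by
  rw [Polynomial.Monic, Polynomial.leadingCoeff, natDegree_monicChart hhom hv, monicChart,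
    Polynomial.coeff_C_mul, (hasTopCoeff_affineChart hhom v e e').coeff_eq_C, ← Polynomial.C_mul,
    inv_mul_cancel₀ hv, Polynomial.C_1]

theorem map_monicChart {k : Type*} [Field k] (i : K →+* k) (v e e' : Fin 3 → K)
    (Q : MvPolynomial (Fin 3) K) : (monicChart v e e' Q).map (Polynomial.mapRingHom i) =
      monicChart (i ∘ v) (i ∘ e) (i ∘ e') (MvPolynomial.map i Q) := by
  rw [monicChart, monicChart, Polynomial.map_mul, map_affineChart]
  simp [MvPolynomial.eval_map, MvPolynomial.eval₂_comp]

theorem prime_monicChart [Infinite K] {v e e' : Fin 3 → K} (h : v ⬝ᵥ e ⨯₃ e' ≠ 0) (hn : n ≠ 0)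
    (hQ : Irreducible Q) (hhom : Q.IsHomogeneous n) (hv : MvPolynomial.eval v Q ≠ 0) :
    Prime (monicChart v e e' Q) := by
  refine (Associated.prime_iff ?_).1 (prime_affineChart h hn hQ hhom hv)
  rw [monicChart, mul_comm]
  refine associated_mul_unit_right _ _ ?_
  rw [Polynomial.isUnit_C, Polynomial.isUnit_C]
  simpa using hv

end MonicChart

section FiniteZeros

variable {K : Type} [Field K] {Q : MvPolynomial (Fin 3) K} {n : ℕ}

theorem cross_ne_zero_of_eval_ne_zero (hhom : Q.IsHomogeneous n) (hn : n ≠ 0) {O z : Fin 3 → K}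
    (hO : MvPolynomial.eval O Q ≠ 0) (hz0 : z ≠ 0) (hz : MvPolynomial.eval z Q = 0) :
    O ⨯₃ z ≠ 0 := by
  have hO0 : O ≠ 0 := by
    rintro rfl
    exact hO (eval_zero_of_isHomogeneous hn hhom)
  intro h
  rw [← Projectivization.mk_eq_mk_iff_crossProduct_eq_zero hO0 hz0,
    Projectivization.mk_eq_mk_iff'] at h
  obtain ⟨a, rfl⟩ := h
  exact hO (by rw [eval_smul_of_isHomogeneous hhom, hz, mul_zero])

theorem finite_curve_inter_zeros [IsAlgClosed K] (hQ : Irreducible Q) (hhom : Q.IsHomogeneous n)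
    (hn : 2 ≤ n) (H : MvPolynomial (Fin 3) K) {z : Fin 3 → K} (hz0 : z ≠ 0)
    (hz : MvPolynomial.eval z Q = 0) (hH : MvPolynomial.eval z H ≠ 0) :
    {x : P2 K | OnCurve Q x ∧
      ∀ w hw, Projectivization.mk K w hw = x → MvPolynomial.eval w H = 0}.Finite := by
  have : Infinite K := IsAlgClosed.instInfinite
  have hn0 : n ≠ 0 := by omega
  obtain ⟨O, hO⟩ := exists_eval_ne_zero hQ.ne_zero
  obtain ⟨δ, hδ⟩ := exists_dot_ne_zero (cross_ne_zero_of_eval_ne_zero hhom hn0 hO hz0 hz)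
  have h : O ⬝ᵥ z ⨯₃ δ ≠ 0 := by
    rwa [triple_product_permutation] at hδ
  have hdvd : ¬ monicChart O z δ Q ∣ affineChart O z δ H := by
    rintro ⟨g, hg⟩
    have hval := congrArg (Polynomial.evalEval 0 0) hg
    rw [evalEval_affineChart, Polynomial.evalEval_mul, evalEval_monicChart] at hval
    exact hH (by simpa [chartPoint, hz] using hval)
  have hinf : {x : P2 K | OnCurve Q x ∧ (δ ⨯₃ O) ⬝ᵥ x.rep = 0}.Finite :=
    Set.finite_of_encard_le_coe (encard_curve_inter_line_le (RingHom.id K)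
      (by rwa [MvPolynomial.map_id]) hhom hn (cross_ne_zero_of_triple_product_ne_zero h))
  refine (((finite_setOf_evalEval_eq_zero (monic_monicChart hhom hO z δ)
    (prime_monicChart h hn0 hQ hhom hO) hdvd).image (chartMap h)).union hinf).subset ?_
  rintro x ⟨hx, hxH⟩
  rcases setOf_onCurve_subset h hhom hx with ⟨y, hy, rfl⟩ | hx'
  · refine Or.inl ⟨y, ⟨?_, ?_⟩, rfl⟩
    · rw [evalEval_monicChart, show MvPolynomial.eval _ Q = 0 from hy, mul_zero]
    · rw [evalEval_affineChart]
      exact hxH _ (chartPoint_ne_zero h y) rfl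
  · exact Or.inr hx'

end FiniteZeros

/-! ### Point counts on projective plane curves -/

section Polar

variable {σ R : Type*} [Fintype σ] [CommRing R]

theorem derivative_ringHom_apply {S : Type*} [CommRing S] (φ : MvPolynomial σ R →+* S[X])
    (hC : ∀ r, (φ (MvPolynomial.C r)).derivative = 0) (Q : MvPolynomial σ R) :
    (φ Q).derivative =
      ∑ j, φ (MvPolynomial.pderiv j Q) * (φ (MvPolynomial.X j)).derivative := by
  classical
  induction Q using MvPolynomial.induction_on with
  | C a => simp [hC]
  | add p q hp hq => simp only [map_add, hp, hq, add_mul, Finset.sum_add_distrib]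
  | mul_X p r hp =>
    have hsum : ∑ j, φ (p * MvPolynomial.pderiv j (MvPolynomial.X r)) *
        (φ (MvPolynomial.X j)).derivative = φ p * (φ (MvPolynomial.X r)).derivative := by
      rw [Finset.sum_eq_single r] <;> simp +contextual [eq_comm]
    simp only [map_mul, Polynomial.derivative_mul, hp, Derivation.leibniz, smul_eq_mul, map_add,
      add_mul, Finset.sum_add_distrib, ← hsum, Finset.sum_mul]
    rw [add_comm]
    congr 1
    exact Finset.sum_congr rfl fun j _ => by ring

/-- The first polar `∑ v_r ∂Q/∂x_r` of `Q` with respect to `v`. -/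
noncomputable def polar (v : σ → R) (Q : MvPolynomial σ R) : MvPolynomial σ R :=
  ∑ r, MvPolynomial.C (v r) * MvPolynomial.pderiv r Q

theorem eval_polar (v w : σ → R) (Q : MvPolynomial σ R) : MvPolynomial.eval w (polar v Q) =
    v ⬝ᵥ fun r => MvPolynomial.eval w (MvPolynomial.pderiv r Q) := by
  simp [polar, dotProduct]

theorem coeff_polar (v : σ → R) (Q : MvPolynomial σ R) (m : σ →₀ ℕ) : (polar v Q).coeff m =
    (fun r => (MvPolynomial.pderiv r Q).coeff m) ⬝ᵥ v := by
  simp [polar, dotProduct, MvPolynomial.coeff_sum, mul_comm]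

theorem isHomogeneous_polar (v : σ → R) {Q : MvPolynomial σ R} {n : ℕ} (hhom : Q.IsHomogeneous n) :
    (polar v Q).IsHomogeneous (n - 1) :=
  MvPolynomial.IsHomogeneous.sum _ _ _ fun r _ => hhom.pderiv.C_mul (v r)

theorem derivative_affineChart (v e e' : σ → R) (Q : MvPolynomial σ R) :
    (affineChart v e e' Q).derivative = affineChart v e e' (polar v Q) := by
  rw [derivative_ringHom_apply (affineChart v e e') (by simp)]
  simp only [polar, map_sum, map_mul, affineChart_C, affineChart_X]
  refine Finset.sum_congr rfl fun j _ => ?_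
  rw [mul_comm]
  simp

theorem derivative_restrictLine (u w : σ → R) (Q : MvPolynomial σ R) :
    (restrictLine u w Q).derivative = restrictLine u w (polar u Q) := by
  rw [derivative_ringHom_apply (restrictLine u w) (by simp)]
  simp only [polar, map_sum, map_mul, restrictLine_C, restrictLine_X]
  refine Finset.sum_congr rfl fun j _ => ?_
  rw [mul_comm]
  simp

end Polar

section CurveCount

/-- The constant in the error term of the point count for a projective plane curve of degree `n`
in characteristic `p`. -/
noncomputable def curveCountConstant (n p : ℕ) : ℕ :=
  pointCountConstant n n p + n + 1

variable {K k : Type} [Field K] {Q : MvPolynomial (Fin 3) K} {n p a b : ℕ}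

theorem exists_separable_chart (hhom : Q.IsHomogeneous n) (hK : (n + 1 : ℕ) ≤ Cardinal.mk K)
    (hQ0 : Q ≠ 0) {r : Fin 3} (hr : MvPolynomial.pderiv r Q ≠ 0) :
    ∃ v e e' : Fin 3 → K,
      v ⬝ᵥ e ⨯₃ e' ≠ 0 ∧ MvPolynomial.eval v Q ≠ 0 ∧ polar v Q ≠ 0 := by
  obtain ⟨m, hm⟩ := MvPolynomial.ne_zero_iff.1 hr
  let g : Fin 3 → K := fun r => (MvPolynomial.pderiv r Q).coeff m
  have hg : linearForm g ≠ 0 := fun h0 => hm <| by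
    simpa [h0, g] using (eval_linearForm g (Pi.single r 1)).symm
  obtain ⟨v, hv⟩ : ∃ v, MvPolynomial.eval v (Q * linearForm g) ≠ 0 := by
    by_contra! h
    have hW := hhom.mul (isHomogeneous_linearForm g)
    exact mul_ne_zero hQ0 hg (hW.eq_zero_of_forall_eval_eq_zero_of_le_card h hK)
  rw [map_mul, eval_linearForm] at hv
  have hv0 : v ≠ 0 := by
    rintro rfl
    simp at hv
  obtain ⟨j, l, hjl⟩ := exists_triple_product_single_ne_zero hv0
  refine ⟨v, _, _, hjl, left_ne_zero_of_mul hv, fun h0 => right_ne_zero_of_mul hv ?_⟩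
  rw [← coeff_polar, h0, MvPolynomial.coeff_zero]

variable [Field k] (i : K →+* k)

theorem derivative_map_monicChart_ne_zero [Infinite k] (hhom : Q.IsHomogeneous n)
    {v e e' : Fin 3 → K} (h : v ⬝ᵥ e ⨯₃ e' ≠ 0) (hv : MvPolynomial.eval v Q ≠ 0)
    (hpolar : polar v Q ≠ 0) :
    ((monicChart v e e' Q).map (Polynomial.mapRingHom i)).derivative ≠ 0 := by
  rw [Polynomial.derivative_map, monicChart, Polynomial.derivative_C_mul, derivative_affineChart,
    Polynomial.map_mul, map_affineChart]
  refine mul_ne_zero (by simpa using hv) fun h0 => hpolar ?_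
  refine MvPolynomial.map_injective i i.injective ?_
  rw [map_zero]
  refine eq_zero_of_affineChart_eq_zero ?_ ((isHomogeneous_polar v hhom).map i) h0
  rwa [← map_triple_product, map_ne_zero]

theorem prime_map_monicChart [Infinite k] (hn : n ≠ 0)
    (hQ : Irreducible (MvPolynomial.map i Q)) (hhom : Q.IsHomogeneous n) {v e e' : Fin 3 → K}
    (h : v ⬝ᵥ e ⨯₃ e' ≠ 0) (hv : MvPolynomial.eval v Q ≠ 0) :
    Prime ((monicChart v e e' Q).map (Polynomial.mapRingHom i)) := by
  rw [map_monicChart]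
  refine prime_monicChart ?_ hn hQ (hhom.map i) ?_
  · rwa [← map_triple_product, map_ne_zero]
  · rwa [MvPolynomial.eval_map, ← MvPolynomial.eval₂_comp, map_ne_zero]

theorem ncard_curve_le_and_le [Fintype K] [IsAlgClosed k] [Fact p.Prime] [CharP k p]
    (hK : Fintype.card K = p ^ (a + b)) (hab : a ≤ b) (hba : b ≤ a + 1)
    (hC : curveCountConstant n p ≤ p ^ b) (hQ : Irreducible (MvPolynomial.map i Q))
    (hhom : Q.IsHomogeneous n) (hn : 2 ≤ n) {r : Fin 3} (hr : MvPolynomial.pderiv r Q ≠ 0) :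
    {x | OnCurve Q x}.ncard ≤ Fintype.card K + curveCountConstant n p * p ^ b ∧
      Fintype.card K ≤ {x | OnCurve Q x}.ncard + curveCountConstant n p * p ^ b := by
  have : Infinite k := IsAlgClosed.instInfinite
  have hp : 0 < p := (Fact.out : p.Prime).pos
  have hQ0 : Q ≠ 0 := by
    rintro rfl
    simp at hQ
  have hKn : (n + 1 : ℕ) ≤ Cardinal.mk K := by
    rw [Cardinal.mk_fintype, Nat.cast_le, hK]
    refine le_trans ?_ (Nat.pow_le_pow_right hp (Nat.le_add_left b a))
    rw [curveCountConstant] at hC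
    omega
  obtain ⟨v, e, e', h, hv, hpolar⟩ := exists_separable_chart hhom hKn hQ0 hr
  have hprime := prime_map_monicChart i (by omega) hQ hhom h hv
  have hder := derivative_map_monicChart_ne_zero i hhom h hv hpolar
  have hmonic := monic_monicChart hhom hv e e'
  have hcoeff := natDegree_coeff_monicChart_le hhom v e e'
  have hdeg := natDegree_monicChart hhom hv e e'
  have hle := ncard_zeros_le hK hab hba hmonic hcoeff
    (by rw [hdeg]; rw [curveCountConstant] at hC; omega) hprime hder
  have hge := le_ncard_zeros hK hab hba hmonic hcoeff
    (by rw [hdeg]; rw [curveCountConstant] at hC; omega) hprime hder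
  rw [setOf_evalEval_monicChart_eq_zero hv, hdeg] at hle hge
  have hchart := ncard_chart_le_ncard_curve h hhom
  have hchart' := ncard_curve_le_ncard_chart_add i h hQ hhom hn
  have hpb : 1 ≤ p ^ b := Nat.one_le_pow b p hp
  rw [curveCountConstant]
  constructor <;> nlinarith

end CurveCount

/-! ### The quadratic resolvent of a cubic -/

section Resolvent

variable {R S : Type*} [CommRing R] [CommRing S]

/-- The sum of `a² (x² y + y² z + z² x)` and `a² (x y² + y z² + z x²)`, where `x, y, z` are the
roots of the cubic `P` with leading coefficient `a`. -/
def resolventSum (P : Cubic R) : R :=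
  3 * P.a * P.d - P.b * P.c

/-- The product of `a² (x² y + y² z + z² x)` and `a² (x y² + y z² + z x²)`, where `x, y, z` are the
roots of the cubic `P` with leading coefficient `a`. -/
def resolventProd (P : Cubic R) : R :=
  P.b ^ 3 * P.d + P.a * P.c ^ 3 - 6 * P.a * P.b * P.c * P.d + 9 * P.a ^ 2 * P.d ^ 2

/-- The quadratic resolvent of a cubic. It has the same discriminant as the cubic, and unlike
`X ^ 2 - P.discr` it is usable in characteristic two. -/
noncomputable def resolvent (P : Cubic R) : R[X] :=
  Polynomial.X ^ 2 - Polynomial.C (resolventSum P) * Polynomial.X +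
    Polynomial.C (resolventProd P)

theorem resolventSum_sq_sub (P : Cubic R) :
    resolventSum P ^ 2 - 4 * resolventProd P = P.discr := by
  rw [resolventSum, resolventProd, Cubic.discr]
  ring

theorem discr_map (i : R →+* S) (P : Cubic R) : (P.map i).discr = i P.discr := by
  simp [Cubic.discr, Cubic.map, map_ofNat]

theorem resolventSum_map (i : R →+* S) (P : Cubic R) :
    resolventSum (P.map i) = i (resolventSum P) := by
  simp [resolventSum, Cubic.map, map_ofNat]

theorem resolventProd_map (i : R →+* S) (P : Cubic R) :
    resolventProd (P.map i) = i (resolventProd P) := by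
  simp [resolventProd, Cubic.map, map_ofNat]

theorem resolvent_map (i : R →+* S) (P : Cubic R) :
    resolvent (P.map i) = (resolvent P).map i := by
  simp [resolvent, resolventSum_map, resolventProd_map]

theorem resolvent_eq_toPoly (P : Cubic R) :
    resolvent P = (⟨0, 1, -resolventSum P, resolventProd P⟩ : Cubic R).toPoly := by
  simp [resolvent, Cubic.toPoly, sub_eq_add_neg]

theorem monic_resolvent (P : Cubic R) : (resolvent P).Monic := by
  rw [resolvent_eq_toPoly]
  exact Cubic.monic_of_b_eq_one'

theorem natDegree_resolvent [Nontrivial R] (P : Cubic R) : (resolvent P).natDegree = 2 := by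
  rw [resolvent_eq_toPoly]
  exact Cubic.natDegree_of_b_ne_zero' one_ne_zero

theorem derivative_resolvent_ne_zero {P : Cubic R} (h : P.discr ≠ 0) :
    (resolvent P).derivative ≠ 0 := by
  contrapose! h
  have hcoeff : ∀ n, (resolvent P).derivative.coeff n = 0 := by simp [h]
  have hsum := hcoeff 0
  have htwo := hcoeff 1
  rw [Polynomial.coeff_derivative, resolvent_eq_toPoly] at hsum htwo
  simp only [zero_add, Cubic.coeff_eq_c, Nat.cast_zero, mul_one, neg_eq_zero] at hsum
  simp only [Nat.reduceAdd, Cubic.coeff_eq_b, Nat.cast_one, one_mul] at htwo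
  rw [← resolventSum_sq_sub, hsum]
  linear_combination -2 * resolventProd P * htwo

/-- If `P.discr` does not divide this polynomial, then the quadratic resolvent of the family of
cubics `P` has no root in `R[X]`. -/
noncomputable def resolventObstruction (P : Cubic R[X]) : R[X] :=
  (resolventProd P).derivative ^ 2 -
    (resolventSum P).derivative * (resolventProd P).derivative * resolventSum P +
    (resolventSum P).derivative ^ 2 * resolventProd P

theorem resolventObstruction_map (i : R →+* S) (P : Cubic R[X]) :
    resolventObstruction (P.map (Polynomial.mapRingHom i)) = (resolventObstruction P).map i := by
  simp [resolventObstruction, resolventSum_map, resolventProd_map, Polynomial.derivative_map]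

/-- A root `T` of the resolvent gives `resolventProd P = T (S - T)` with `S = resolventSum P`, and
then the obstruction equals `-T' (S - T)' * P.discr`. -/
theorem discr_dvd_resolventObstruction {P : Cubic R[X]} {T : R[X]} (h : (resolvent P).eval T = 0) :
    P.discr ∣ resolventObstruction P := by
  have hprod : resolventProd P = T * (resolventSum P - T) := by
    have : T ^ 2 - resolventSum P * T + resolventProd P = 0 := by simpa [resolvent] using h
    linear_combination this
  refine ⟨-(T.derivative * (resolventSum P - T).derivative), ?_⟩
  rw [← resolventSum_sq_sub, resolventObstruction, hprod, Polynomial.derivative_mul,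
    Polynomial.derivative_sub]
  ring

theorem prime_resolvent {k : Type*} [Field k] {P : Cubic k[X]}
    (h : ¬P.discr ∣ resolventObstruction P) : Prime (resolvent P) := by
  have hdeg := natDegree_resolvent P
  rw [← irreducible_iff_prime, (monic_resolvent P).irreducible_iff_roots_eq_zero_of_degree_le_three
    (by omega) (by omega), Multiset.eq_zero_iff_forall_notMem]
  exact fun T hT => h (discr_dvd_resolventObstruction (Polynomial.isRoot_of_mem_roots hT))

end Resolvent

section CubicRoots

/-- The cubic `a (X - y) (X² + B X + G)`. -/
def factoredCubic {R : Type*} [CommRing R] (a y B G : R) : Cubic R :=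
  ⟨a, a * (B - y), a * (G - y * B), -(a * y * G)⟩

variable {K : Type*} [Field K]

theorem exists_eq_factoredCubic {P : Cubic K} (ha : P.a ≠ 0) {y : K}
    (hy : P.a * y ^ 3 + P.b * y ^ 2 + P.c * y + P.d = 0) :
    ∃ B G, P = factoredCubic P.a y B G := by
  refine ⟨P.b / P.a + y, P.c / P.a + y * (P.b / P.a + y), ?_⟩
  rw [factoredCubic]
  ext
  · rfl
  · field_simp
    ring
  · field_simp
    ring
  · field_simp
    linear_combination hy

theorem eval_toPoly (P : Cubic K) (t : K) :
    P.toPoly.eval t = P.a * t ^ 3 + P.b * t ^ 2 + P.c * t + P.d := by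
  simp [Cubic.toPoly]

variable {a y B G : K}

theorem eval_toPoly_factoredCubic (t : K) :
    (factoredCubic a y B G).toPoly.eval t = a * ((t - y) * (t ^ 2 + B * t + G)) := by
  rw [eval_toPoly, factoredCubic]
  ring

theorem discr_factoredCubic : (factoredCubic a y B G).discr =
    a ^ 4 * (y ^ 2 + B * y + G) ^ 2 * (B ^ 2 - 4 * G) := by
  rw [factoredCubic, Cubic.discr]
  ring

theorem eval_resolvent_factoredCubic (t : K) : (resolvent (factoredCubic a y B G)).eval
      (a ^ 2 * (t * (y ^ 2 + B * y + G) + y * (B ^ 2 - G))) =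
    (a ^ 2 * (y ^ 2 + B * y + G)) ^ 2 * (t ^ 2 + B * t + G) := by
  simp only [resolvent, resolventSum, resolventProd, factoredCubic, Polynomial.eval_add,
    Polynomial.eval_sub, Polynomial.eval_mul, Polynomial.eval_pow, Polynomial.eval_X,
    Polynomial.eval_C]
  ring

theorem exists_quadratic_root (ha : a ≠ 0) (hdiscr : (factoredCubic a y B G).discr ≠ 0) {T : K}
    (hT : (resolvent (factoredCubic a y B G)).eval T = 0) : ∃ t, t ^ 2 + B * t + G = 0 := by
  rw [discr_factoredCubic] at hdiscr
  have hy : y ^ 2 + B * y + G ≠ 0 := fun h => hdiscr (by simp [h])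
  let t := (T / a ^ 2 - y * (B ^ 2 - G)) / (y ^ 2 + B * y + G)
  have ht : T = a ^ 2 * (t * (y ^ 2 + B * y + G) + y * (B ^ 2 - G)) := by
    rw [div_mul_cancel₀ _ hy]
    field_simp
    ring
  rw [ht, eval_resolvent_factoredCubic] at hT
  exact ⟨t, (mul_eq_zero.1 hT).resolve_left (pow_ne_zero _ (mul_ne_zero (pow_ne_zero _ ha) hy))⟩

variable [DecidableEq K]

theorem card_roots_factoredCubic (ha : a ≠ 0) (hdiscr : (factoredCubic a y B G).discr ≠ 0) {t : K}
    (ht : t ^ 2 + B * t + G = 0) : (factoredCubic a y B G).roots.toFinset.card = 3 := by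
  rw [discr_factoredCubic] at hdiscr
  have hy : y ^ 2 + B * y + G ≠ 0 := fun h => hdiscr (by simp [h])
  have hquad : B ^ 2 - 4 * G ≠ 0 := fun h => hdiscr (by simp [h])
  have hne : (factoredCubic a y B G).toPoly ≠ 0 := Cubic.ne_zero_of_a_ne_zero ha
  refine le_antisymm Cubic.card_roots_le ?_
  have hthree : ({y, t, -B - t} : Finset K).card = 3 := by
    refine Finset.card_eq_three.2 ⟨_, _, _, ?_, ?_, ?_, rfl⟩
    · rintro rfl
      exact hy ht
    · rintro rfl
      exact hy (by linear_combination ht)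
    · intro h
      exact hquad (by linear_combination (2 * t + B) * h - 4 * ht)
  rw [← hthree]
  refine Finset.card_le_card fun u hu => ?_
  rw [Multiset.mem_toFinset, Cubic.roots, Polynomial.mem_roots hne, Polynomial.IsRoot,
    eval_toPoly_factoredCubic]
  simp only [Finset.mem_insert, Finset.mem_singleton] at hu
  rcases hu with rfl | rfl | rfl
  · simp
  · simp [ht]
  · linear_combination a * (-B - t - y) * ht

theorem card_roots_resolvent_le (P : Cubic K) : (resolvent P).roots.toFinset.card ≤ 2 :=
  (Multiset.toFinset_card_le _).trans <|
    (Polynomial.card_roots' _).trans (natDegree_resolvent P).le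

theorem two_mul_card_roots_add_card_roots_resolvent_le {P : Cubic K} (ha : P.a ≠ 0)
    (hdiscr : P.discr ≠ 0) (h3 : P.roots.toFinset.card ≠ 3) :
    2 * P.roots.toFinset.card + (resolvent P).roots.toFinset.card ≤ 2 := by
  have hresolvent := card_roots_resolvent_le P
  rcases P.roots.toFinset.eq_empty_or_nonempty with hempty | ⟨y, hy⟩
  · simpa [hempty] using hresolvent
  have hne : P.toPoly ≠ 0 := Cubic.ne_zero_of_a_ne_zero ha
  rw [Multiset.mem_toFinset, Cubic.mem_roots_iff hne] at hy
  obtain ⟨B, G, hP⟩ := exists_eq_factoredCubic ha hy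
  have hquad : ∀ t, t ^ 2 + B * t + G ≠ 0 := fun t ht => h3 <| by
    rw [hP] at hdiscr ⊢
    exact card_roots_factoredCubic ha hdiscr ht
  have hroots : P.roots.toFinset ⊆ {y} := fun t ht => by
    rw [Multiset.mem_toFinset, Cubic.roots, Polynomial.mem_roots hne, Polynomial.IsRoot, hP,
      eval_toPoly_factoredCubic] at ht
    simpa [ha, hquad t, sub_eq_zero] using ht
  have hresolvent_empty : (resolvent P).roots.toFinset = ∅ := by
    refine Finset.eq_empty_of_forall_notMem fun T hT => ?_
    have hT := Polynomial.isRoot_of_mem_roots (Multiset.mem_toFinset.1 hT)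
    rw [hP] at hdiscr hT
    obtain ⟨t, ht⟩ := exists_quadratic_root ha hdiscr hT
    exact hquad t ht
  have hcard := Finset.card_le_card hroots
  rw [hresolvent_empty, Finset.card_empty]
  rw [Finset.card_singleton] at hcard
  omega

/-- The three Galois types of a separable cubic, namely three rational roots, one and none, give
the resolvent two, zero and at most two rational roots. -/
theorem two_mul_card_roots_add_card_roots_resolvent_le_add (P : Cubic K) :
    2 * P.roots.toFinset.card + (resolvent P).roots.toFinset.card ≤
      2 + (if P.roots.toFinset.card = 3 then 6 else 0) +
        (if P.a * P.discr = 0 then 8 else 0) := by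
  have hcubic : P.roots.toFinset.card ≤ 3 := Cubic.card_roots_le
  have hresolvent := card_roots_resolvent_le P
  by_cases h0 : P.a * P.discr = 0
  · rw [if_pos h0]
    omega
  by_cases h3 : P.roots.toFinset.card = 3
  · rw [if_pos h3]
    omega
  · have := two_mul_card_roots_add_card_roots_resolvent_le (left_ne_zero_of_mul h0)
      (right_ne_zero_of_mul h0) h3
    omega

end CubicRoots

/-! ### Families of cubics with irreducible resolvent -/

section Openness

variable {k σ : Type*} [Field k]

theorem exists_eval_eq_linearMap (φ : k[X] →ₗ[k] k) (p : (MvPolynomial σ k)[X]) :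
    ∃ H : MvPolynomial σ k, ∀ z, MvPolynomial.eval z H = φ (p.map (MvPolynomial.eval z)) := by
  induction p using Polynomial.induction_on' with
  | add p q hp hq =>
    obtain ⟨Hp, hp⟩ := hp
    obtain ⟨Hq, hq⟩ := hq
    exact ⟨Hp + Hq, fun z => by simp [hp, hq]⟩
  | monomial n c =>
    refine ⟨c * MvPolynomial.C (φ (Polynomial.X ^ n)), fun z => ?_⟩
    rw [Polynomial.map_monomial, ← Polynomial.C_mul_X_pow_eq_monomial, ← Polynomial.smul_eq_C_mul]
    simp

theorem exists_eval_ne_zero_forall_linearIndependent {ι : Type*} [Finite ι]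
    {f : ι → (MvPolynomial σ k)[X]} {z₀ : σ → k}
    (h : LinearIndependent k fun a => (f a).map (MvPolynomial.eval z₀)) :
    ∃ H : MvPolynomial σ k, MvPolynomial.eval z₀ H ≠ 0 ∧ ∀ z, MvPolynomial.eval z H ≠ 0 →
      LinearIndependent k fun a => (f a).map (MvPolynomial.eval z) := by
  classical
  have := Fintype.ofFinite ι
  obtain ⟨g, hg⟩ := LinearMap.exists_leftInverse_of_injective _
    (LinearMap.ker_eq_bot.2 h.fintypeLinearCombination_injective)
  have hdual (a b : ι) : g ((f a).map (MvPolynomial.eval z₀)) b = (Pi.single a 1 : ι → k) b := by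
    have := LinearMap.congr_fun hg (Pi.single a 1)
    rw [LinearMap.comp_apply, Fintype.linearCombination_apply_single, one_smul] at this
    rw [this, LinearMap.id_apply]
  choose M hM using fun a b => exists_eval_eq_linearMap (LinearMap.proj b ∘ₗ g) (f a)
  have hdet (z : σ → k) : MvPolynomial.eval z (Matrix.of M).det =
      (Matrix.of fun a => g ((f a).map (MvPolynomial.eval z))).det := by
    rw [RingHom.map_det]
    congr 1
    ext a b
    exact hM a b z
  refine ⟨(Matrix.of M).det, ?_, fun z hz => ?_⟩
  · have hone : (Matrix.of fun a => g ((f a).map (MvPolynomial.eval z₀))) = 1 := by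
      ext a b
      rw [Matrix.of_apply, hdual, Matrix.one_apply, Pi.single_apply]
      simp only [eq_comm]
    rw [hdet, hone, Matrix.det_one]
    exact one_ne_zero
  · rw [hdet] at hz
    exact LinearIndependent.of_comp g
      (Matrix.linearIndependent_rows_of_det_ne_zero hz)

/-- The polynomials `E` and `X ^ j * D` for `j ≤ n`. Over a field and for `n ≥ deg E` they are
linearly independent exactly when `D` is nonzero and does not divide `E`. -/
noncomputable def dvdFamily {R : Type*} [CommRing R] (n : ℕ) (D E : R[X]) :
    Option (Fin (n + 1)) → R[X] :=
  fun o => o.elim E fun j => Polynomial.X ^ (j : ℕ) * D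

theorem map_dvdFamily {R S : Type*} [CommRing R] [CommRing S] (i : R →+* S) (n : ℕ) (D E : R[X])
    (o : Option (Fin (n + 1))) :
    (dvdFamily n D E o).map i = dvdFamily n (D.map i) (E.map i) o := by
  cases o <;> simp [dvdFamily]

theorem mem_span_range_X_pow_mul_iff {n : ℕ} {D E : k[X]} (hE : E.natDegree ≤ n) :
    E ∈ Submodule.span k (Set.range fun j : Fin (n + 1) => Polynomial.X ^ (j : ℕ) * D) ↔
      D ∣ E := by
  classical
  have hspan : Submodule.span k (Set.range fun j : Fin (n + 1) => Polynomial.X ^ (j : ℕ) * D) =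
      (Polynomial.degreeLT k (n + 1)).map (LinearMap.mulRight k D) := by
    rw [Polynomial.degreeLT_eq_span_X_pow, Submodule.map_span]
    congr 1
    ext p
    simp [Fin.exists_iff]
  rw [hspan]
  constructor
  · rintro ⟨g, -, rfl⟩
    exact dvd_mul_left D g
  · rintro ⟨g, rfl⟩
    rcases eq_or_ne (D * g) 0 with h0 | h0
    · rw [h0]
      exact zero_mem _
    refine ⟨g, Polynomial.mem_degreeLT.2 ?_, mul_comm g D⟩
    rw [← Polynomial.natDegree_lt_iff_degree_lt (right_ne_zero_of_mul h0)]
    exact Nat.lt_succ_of_le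
      ((Polynomial.natDegree_le_of_dvd (dvd_mul_left g D) h0).trans hE)

theorem linearIndependent_X_pow_mul {D : k[X]} (hD : D ≠ 0) :
    LinearIndependent k fun j : ℕ => Polynomial.X ^ j * D := by
  have hX : LinearIndependent k fun j : ℕ => (Polynomial.X ^ j : k[X]) := by
    simpa only [Polynomial.coe_basisMonomials, Polynomial.monomial_one_right_eq_X_pow] using
      (Polynomial.basisMonomials k).linearIndependent
  exact hX.map' (LinearMap.mulRight k D) (LinearMap.ker_eq_bot.2 (mul_left_injective₀ hD))

theorem linearIndependent_dvdFamily_iff {n : ℕ} {D E : k[X]} (hE : E.natDegree ≤ n) :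
    LinearIndependent k (dvdFamily n D E) ↔ D ≠ 0 ∧ ¬D ∣ E := by
  refine linearIndependent_option.trans
    (and_congr ⟨?_, fun hD => ?_⟩ (mem_span_range_X_pow_mul_iff hE).not)
  · rintro h rfl
    exact h.ne_zero 0 (by simp [dvdFamily])
  · exact (linearIndependent_X_pow_mul hD).comp _ Fin.val_injective

theorem exists_eval_ne_zero_forall_not_dvd {D E : (MvPolynomial σ k)[X]} {z₀ : σ → k}
    (hD : D.map (MvPolynomial.eval z₀) ≠ 0)
    (hDE : ¬D.map (MvPolynomial.eval z₀) ∣ E.map (MvPolynomial.eval z₀)) :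
    ∃ H : MvPolynomial σ k, MvPolynomial.eval z₀ H ≠ 0 ∧ ∀ z, MvPolynomial.eval z H ≠ 0 →
      D.map (MvPolynomial.eval z) ≠ 0 ∧
        ¬D.map (MvPolynomial.eval z) ∣ E.map (MvPolynomial.eval z) := by
  have hiff (z : σ → k) :
      (LinearIndependent k fun o => (dvdFamily E.natDegree D E o).map (MvPolynomial.eval z)) ↔
        D.map (MvPolynomial.eval z) ≠ 0 ∧
          ¬D.map (MvPolynomial.eval z) ∣ E.map (MvPolynomial.eval z) := by
    simp only [map_dvdFamily]
    exact linearIndependent_dvdFamily_iff Polynomial.natDegree_map_le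
  simpa only [hiff] using exists_eval_ne_zero_forall_linearIndependent ((hiff z₀).2 ⟨hD, hDE⟩)

end Openness

section GenericCubic

variable {R S : Type*} [CommRing R] [CommRing S]

/-- A one-parameter family of cubics is generic if its members are generically separable of degree
three and its quadratic resolvent is irreducible, the latter in the explicit form that
`prime_resolvent` provides. -/
def IsGeneric (P : Cubic R[X]) : Prop :=
  P.a * P.discr ≠ 0 ∧ ¬P.discr ∣ resolventObstruction P

theorem exists_eval_ne_zero_forall_isGeneric {k σ : Type*} [Field k]
    {P : Cubic (MvPolynomial σ k)[X]} {z₀ : σ → k}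
    (h : IsGeneric (P.map (Polynomial.mapRingHom (MvPolynomial.eval z₀)))) :
    ∃ H : MvPolynomial σ k, MvPolynomial.eval z₀ H ≠ 0 ∧ ∀ z, MvPolynomial.eval z H ≠ 0 →
      IsGeneric (P.map (Polynomial.mapRingHom (MvPolynomial.eval z))) := by
  have hiff (z : σ → k) : IsGeneric (P.map (Polynomial.mapRingHom (MvPolynomial.eval z))) ↔
      (P.a * P.discr).map (MvPolynomial.eval z) ≠ 0 ∧
        ¬(P.a * P.discr).map (MvPolynomial.eval z) ∣
          (P.a * resolventObstruction P).map (MvPolynomial.eval z) := by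
    rw [IsGeneric, resolventObstruction_map, discr_map]
    simp only [Cubic.map, Polynomial.coe_mapRingHom, Polynomial.map_mul]
    exact and_congr_right fun h0 => (mul_dvd_mul_iff_left (left_ne_zero_of_mul h0)).not.symm
  simp only [hiff] at h ⊢
  exact exists_eval_ne_zero_forall_not_dvd h.1 h.2

variable {ι : Type*}

/-- The coefficients of `Y⁰, …, Y³` in the restriction of `Q` to the chart
`(x, y) ↦ y v + e + x e'`. For a quartic `Q` vanishing at `v` they cut out, on the line through `v`
with parameter `x`, the three further intersection points. -/
noncomputable def residualCubic (v e e' : ι → R) (Q : MvPolynomial ι R) : Cubic R[X] :=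
  ⟨(affineChart v e e' Q).coeff 3, (affineChart v e e' Q).coeff 2, (affineChart v e e' Q).coeff 1,
    (affineChart v e e' Q).coeff 0⟩

theorem map_residualCubic (i : R →+* S) (v e e' : ι → R) (Q : MvPolynomial ι R) :
    (residualCubic v e e' Q).map (Polynomial.mapRingHom i) =
      residualCubic (i ∘ v) (i ∘ e) (i ∘ e') (MvPolynomial.map i Q) := by
  simp only [residualCubic, ← map_affineChart, Polynomial.coeff_map, Cubic.map]

theorem toPoly_residualCubic {v : ι → R} {Q : MvPolynomial ι R} (hhom : Q.IsHomogeneous 4)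
    (hv : MvPolynomial.eval v Q = 0) (e e' : ι → R) :
    (residualCubic v e e' Q).toPoly = affineChart v e e' Q := by
  have htop := hasTopCoeff_affineChart hhom v e e'
  have hdeg : (affineChart v e e' Q).degree ≤ 3 := by
    refine (Polynomial.degree_le_iff_coeff_zero _ 3).2 fun j hj => ?_
    have hj : 3 < j := by exact_mod_cast hj
    rcases (Nat.succ_le_of_lt hj).eq_or_lt with rfl | hj
    · rw [htop.coeff_eq_C, hv, Polynomial.C_0]
    · exact Polynomial.coeff_eq_zero_of_natDegree_lt (htop.natDegree_le.trans_lt hj)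
  exact congrArg Subtype.val (Cubic.equiv.apply_symm_apply ⟨_, hdeg⟩)

theorem natDegree_residualCubic_le {Q : MvPolynomial ι R} (hhom : Q.IsHomogeneous 4)
    (v e e' : ι → R) :
    (residualCubic v e e' Q).a.natDegree ≤ 1 ∧ (residualCubic v e e' Q).b.natDegree ≤ 2 ∧
      (residualCubic v e e' Q).c.natDegree ≤ 3 ∧ (residualCubic v e e' Q).d.natDegree ≤ 4 := by
  have hdeg := (hasTopCoeff_affineChart hhom v e e').natDegree_coeff_le
  exact ⟨hdeg 3, hdeg 2, hdeg 1, hdeg 0⟩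

theorem natDegree_coeff_resolvent_residualCubic_le {Q : MvPolynomial ι R}
    (hhom : Q.IsHomogeneous 4) (v e e' : ι → R) (j : ℕ) :
    ((resolvent (residualCubic v e e' Q)).coeff j).natDegree ≤ 10 := by
  obtain ⟨ha, hb, hc, hd⟩ := natDegree_residualCubic_le hhom v e e'
  have hsum : (resolventSum (residualCubic v e e' Q)).natDegree ≤ 10 := by
    rw [resolventSum]
    compute_degree
    omega
  have hprod : (resolventProd (residualCubic v e e' Q)).natDegree ≤ 10 := by
    rw [resolventProd]
    compute_degree
    omega
  rw [resolvent_eq_toPoly]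
  rcases j with _ | _ | _ | _ | j
  · simpa using hprod
  · simpa using hsum
  · simp
  · simp
  · simp [Cubic.coeff_eq_zero (n := j + 4) (by omega)]

theorem natDegree_a_mul_discr_residualCubic_le {Q : MvPolynomial ι R}
    (hhom : Q.IsHomogeneous 4) (v e e' : ι → R) :
    ((residualCubic v e e' Q).a * (residualCubic v e e' Q).discr).natDegree ≤ 11 := by
  obtain ⟨ha, hb, hc, hd⟩ := natDegree_residualCubic_le hhom v e e'
  rw [Cubic.discr]
  compute_degree
  omega

theorem coeff_affineChart_smul (l : R) (v e e' : ι → R) (Q : MvPolynomial ι R) (j : ℕ) :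
    (affineChart (l • v) e e' Q).coeff j =
      (affineChart v e e' Q).coeff j * Polynomial.C l ^ j := by
  have hcomp : affineChart (l • v) e e' = (Polynomial.compRingHom
      (Polynomial.C (Polynomial.C l) * Polynomial.X)).comp (affineChart v e e') := by
    refine MvPolynomial.ringHom_ext (fun r => by simp) fun i => ?_
    simp
    ring
  rw [hcomp, RingHom.comp_apply, Polynomial.coe_compRingHom_apply,
    Polynomial.comp_C_mul_X_coeff]

theorem IsGeneric.smul {k : Type*} [Field k] {l : k} (hl : l ≠ 0) {v e e' : ι → k}
    {Q : MvPolynomial ι k} (h : IsGeneric (residualCubic v e e' Q)) :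
    IsGeneric (residualCubic (l • v) e e' Q) := by
  have hunit (n : ℕ) : IsUnit (Polynomial.C l ^ n) := (Polynomial.isUnit_C.2 hl.isUnit).pow n
  have ha : (residualCubic (l • v) e e' Q).a =
      Polynomial.C l ^ 3 * (residualCubic v e e' Q).a := by
    simp only [residualCubic, coeff_affineChart_smul]
    ring
  have hsum : resolventSum (residualCubic (l • v) e e' Q) =
      Polynomial.C l ^ 3 * resolventSum (residualCubic v e e' Q) := by
    simp only [resolventSum, residualCubic, coeff_affineChart_smul]
    ring
  have hprod : resolventProd (residualCubic (l • v) e e' Q) =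
      Polynomial.C l ^ 6 * resolventProd (residualCubic v e e' Q) := by
    simp only [resolventProd, residualCubic, coeff_affineChart_smul]
    ring
  have hdiscr : (residualCubic (l • v) e e' Q).discr =
      Polynomial.C l ^ 6 * (residualCubic v e e' Q).discr := by
    rw [← resolventSum_sq_sub, hsum, hprod, ← resolventSum_sq_sub]
    ring
  have hobstruction : resolventObstruction (residualCubic (l • v) e e' Q) =
      Polynomial.C l ^ 12 * resolventObstruction (residualCubic v e e' Q) := by
    simp only [resolventObstruction, hsum, hprod, ← Polynomial.C_pow,
      Polynomial.derivative_C_mul]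
    simp only [Polynomial.C_pow]
    ring
  rw [IsGeneric, ha, hdiscr, hobstruction, (hunit 6).mul_left_dvd, (hunit 12).dvd_mul_left]
  exact ⟨mul_ne_zero (mul_ne_zero (hunit 3).ne_zero (left_ne_zero_of_mul h.1))
    (mul_ne_zero (hunit 6).ne_zero (right_ne_zero_of_mul h.1)), h.2⟩

theorem exists_eval_ne_zero_forall_isGeneric_residualCubic {k : Type*} [Field k]
    {v₀ e e' : ι → k} {Q : MvPolynomial ι k} (h : IsGeneric (residualCubic v₀ e e' Q)) :
    ∃ H : MvPolynomial ι k, MvPolynomial.eval v₀ H ≠ 0 ∧ ∀ v, MvPolynomial.eval v H ≠ 0 →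
      IsGeneric (residualCubic v e e' Q) := by
  let P : Cubic (MvPolynomial ι k)[X] := residualCubic MvPolynomial.X
    (fun r => MvPolynomial.C (e r)) (fun r => MvPolynomial.C (e' r))
    (MvPolynomial.map MvPolynomial.C Q)
  have hP (v : ι → k) :
      P.map (Polynomial.mapRingHom (MvPolynomial.eval v)) = residualCubic v e e' Q := by
    have hC : (MvPolynomial.eval v).comp MvPolynomial.C = RingHom.id k := by
      ext
      simp
    rw [map_residualCubic, MvPolynomial.map_map, hC, MvPolynomial.map_id]
    congr 1 <;> funext r <;> simp
  simp only [← hP] at h ⊢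
  exact exists_eval_ne_zero_forall_isGeneric h

end GenericCubic

/-! ### Simple tangency yields a generic residual cubic -/

section DoubleRoots

variable {K : Type*} [Field K]

theorem exists_isRoot_derivative_of_discr_eq_zero [IsAlgClosed K] {P : Cubic K} (ha : P.a ≠ 0)
    (h : P.discr = 0) : ∃ y, P.toPoly.IsRoot y ∧ P.toPoly.derivative.IsRoot y := by
  classical
  have hnodup : ¬P.toPoly.roots.Nodup := fun hn => by
    refine (Cubic.discr_ne_zero_iff_roots_nodup (φ := RingHom.id K) ha
      (IsAlgClosed.splits _)).2 ?_ h
    rwa [Cubic.map_roots, Polynomial.map_id]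
  rw [Multiset.nodup_iff_count_le_one] at hnodup
  push Not at hnodup
  obtain ⟨y, hy⟩ := hnodup
  rw [Polynomial.count_roots,
    Polynomial.one_lt_rootMultiplicity_iff_isRoot (Cubic.ne_zero_of_a_ne_zero ha)] at hy
  exact ⟨y, hy⟩

theorem eval_derivative_toPoly (P : Cubic K) (t : K) :
    P.toPoly.derivative.eval t = 3 * P.a * t ^ 2 + 2 * P.b * t + P.c := by
  simp [Cubic.toPoly]
  ring

theorem eq_factoredCubic_of_isRoot {P : Cubic K} {α β : K} (hαβ : α ≠ β)
    (hα : P.toPoly.IsRoot α) (hα' : P.toPoly.derivative.IsRoot α) (hβ : P.toPoly.IsRoot β) :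
    P = factoredCubic P.a β (-2 * α) (α ^ 2) := by
  rw [Polynomial.IsRoot, eval_derivative_toPoly] at hα'
  rw [Polynomial.IsRoot, eval_toPoly] at hα hβ
  have hb : P.b = P.a * (-2 * α - β) := by
    refine mul_left_cancel₀ (pow_ne_zero 2 (sub_ne_zero.2 hαβ)) ?_
    linear_combination hβ - hα - (β - α) * hα'
  have hc : P.c = P.a * (α ^ 2 - β * (-2 * α)) := by
    linear_combination hα' - 2 * α * hb
  have hd : P.d = -(P.a * β * α ^ 2) := by
    linear_combination hα - α ^ 2 * hb - α * hc
  exact Cubic.ext rfl hb hc hd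

/-- At `m` the resolvent acquires the double root `T = a² α (α² + α β + β²)`, and the obstruction
evaluates to the square of the `x`-derivative of `resolvent P` at `(m, T)`. -/
theorem not_discr_dvd_resolventObstruction {P : Cubic K[X]} {m a α β : K} (ha : a ≠ 0)
    (hαβ : α ≠ β) (hP : P.map (Polynomial.evalRingHom m) = factoredCubic a β (-2 * α) (α ^ 2))
    (hγ : (P.toPoly.eval (Polynomial.C α)).derivative.eval m ≠ 0) :
    ¬P.discr ∣ resolventObstruction P := by
  have hPa : P.a.eval m = a := congrArg Cubic.a hP
  have hPb : P.b.eval m = a * (-2 * α - β) := congrArg Cubic.b hP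
  have hPc : P.c.eval m = a * (α ^ 2 - β * (-2 * α)) := congrArg Cubic.c hP
  have hPd : P.d.eval m = -(a * β * α ^ 2) := congrArg Cubic.d hP
  set γ := (P.toPoly.eval (Polynomial.C α)).derivative.eval m with hγdef
  set T := a ^ 2 * α * (α ^ 2 + α * β + β ^ 2) with hT
  have hsum : (resolventSum P).eval m = 2 * T := by
    rw [← Polynomial.coe_evalRingHom, ← resolventSum_map, hP, resolventSum, factoredCubic]
    ring
  have hprod : (resolventProd P).eval m = T ^ 2 := by
    rw [← Polynomial.coe_evalRingHom, ← resolventProd_map, hP, resolventProd, factoredCubic]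
    ring
  have hderiv : (resolventProd P).derivative.eval m - (resolventSum P).derivative.eval m * T =
      a ^ 3 * (α - β) ^ 3 * γ := by
    simp only [hγdef, resolventProd, resolventSum, Cubic.toPoly, Polynomial.derivative_sub,
      Polynomial.derivative_add, Polynomial.derivative_mul, Polynomial.derivative_pow,
      Polynomial.derivative_ofNat, Polynomial.eval_sub, Polynomial.eval_add, Polynomial.eval_pow,
      Polynomial.eval_mul, Polynomial.eval_ofNat, Polynomial.eval_zero, Polynomial.eval_C,
      Polynomial.eval_X, Polynomial.derivative_C, hPa, hPb, hPc, hPd, hT]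
    push_cast
    ring
  have hdiscr : P.discr.eval m = 0 := by
    rw [← resolventSum_sq_sub, Polynomial.eval_sub, Polynomial.eval_pow, hsum,
      Polynomial.eval_mul, hprod, Polynomial.eval_ofNat]
    ring
  have hobstruction : (resolventObstruction P).eval m = (a ^ 3 * (α - β) ^ 3 * γ) ^ 2 := by
    simp only [← hderiv, resolventObstruction, Polynomial.eval_sub, Polynomial.eval_add,
      Polynomial.eval_mul, Polynomial.eval_pow, hsum, hprod]
    ring
  intro hdvd
  have hdvd := Polynomial.eval_dvd (x := m) hdvd
  rw [hdiscr, hobstruction, zero_dvd_iff] at hdvd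
  exact pow_ne_zero 2 (mul_ne_zero (mul_ne_zero (pow_ne_zero 3 ha)
    (pow_ne_zero 3 (sub_ne_zero.2 hαβ))) hγ) hdvd

end DoubleRoots

section ResidualMembers

variable {R ι : Type*} [CommRing R] {v : ι → R} {Q : MvPolynomial ι R}

theorem toPoly_map_evalRingHom_residualCubic (hhom : Q.IsHomogeneous 4)
    (hv : MvPolynomial.eval v Q = 0) (e e' : ι → R) (x : R) :
    ((residualCubic v e e' Q).map (Polynomial.evalRingHom x)).toPoly =
      restrictLine v (e + x • e') Q := by
  rw [Cubic.map_toPoly, toPoly_residualCubic hhom hv, map_evalRingHom_affineChart]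

theorem derivative_eval_C_affineChart [Fintype ι] (v e e' : ι → R) (Q : MvPolynomial ι R) (α : R) :
    ((affineChart v e e' Q).eval (Polynomial.C α)).derivative =
      (affineChart v e e' (polar e' Q)).eval (Polynomial.C α) := by
  change (((Polynomial.evalRingHom (Polynomial.C α)).comp (affineChart v e e')) Q).derivative =
    ((Polynomial.evalRingHom (Polynomial.C α)).comp (affineChart v e e')) (polar e' Q)
  rw [derivative_ringHom_apply _ (by simp), polar, map_sum]
  refine Finset.sum_congr rfl fun j _ => ?_
  rw [map_mul, mul_comm]
  congr 1
  simp

end ResidualMembers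

section Tangency

variable {k : Type} [Field k] [IsAlgClosed k] {Q : MvPolynomial (Fin 3) k} {v e e' : Fin 3 → k}

/-- Otherwise every line through `v` would be tangent to the curve, and so `polar v Q` would vanish
at infinitely many points of it. -/
theorem discr_residualCubic_ne_zero (hQ : Irreducible Q) (hhom : Q.IsHomogeneous 4)
    (h : v ⬝ᵥ e ⨯₃ e' ≠ 0) (hv : MvPolynomial.eval v Q = 0)
    (ha : (residualCubic v e e' Q).a ≠ 0) {z : k × k}
    (hz : MvPolynomial.eval (chartPoint v e e' z) Q = 0)
    (hz' : MvPolynomial.eval (chartPoint v e e' z) (polar v Q) ≠ 0) :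
    (residualCubic v e e' Q).discr ≠ 0 := by
  intro hdiscr
  have htangent (x : k) (hx : (residualCubic v e e' Q).a.eval x ≠ 0) :
      ∃ y, MvPolynomial.eval (chartPoint v e e' (x, y)) Q = 0 ∧
        MvPolynomial.eval (chartPoint v e e' (x, y)) (polar v Q) = 0 := by
    obtain ⟨y, hy, hy'⟩ := exists_isRoot_derivative_of_discr_eq_zero
      (P := (residualCubic v e e' Q).map (Polynomial.evalRingHom x)) hx
      (by rw [discr_map, hdiscr, map_zero])
    rw [toPoly_map_evalRingHom_residualCubic hhom hv] at hy hy'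
    rw [derivative_restrictLine] at hy'
    exact ⟨y, (eval_restrictLine _ _ _ _).symm.trans hy, (eval_restrictLine _ _ _ _).symm.trans hy'⟩
  choose! y hy hy' using htangent
  have hinf : {x : k | (residualCubic v e e' Q).a.eval x ≠ 0}.Infinite :=
    (Polynomial.finite_setOfPred_isRoot ha).infinite_compl
  refine hinf.image (f := fun x => chartMap h (x, y x))
    (fun x _ x' _ hxx => congrArg Prod.fst (chartMap_injective h hxx))
    ((finite_curve_inter_zeros hQ hhom (by norm_num) (polar v Q) (chartPoint_ne_zero h z) hz
      hz').subset ?_)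
  rintro _ ⟨x, hx, rfl⟩
  refine ⟨(onCurve_chartMap h hhom _).2 (hy x hx), fun w hw hwx => ?_⟩
  obtain ⟨t, rfl⟩ := (Projectivization.mk_eq_mk_iff' k _ _ _ _).1 hwx
  rw [eval_smul_of_isHomogeneous (isHomogeneous_polar v hhom), hy' x hx, mul_zero]

theorem isGeneric_residualCubic_of_tangent (hQ : Irreducible Q) (hhom : Q.IsHomogeneous 4)
    (h : v ⬝ᵥ e ⨯₃ e' ≠ 0) (hv : MvPolynomial.eval v Q = 0) {m α β : k} (hαβ : α ≠ β)
    (hα : MvPolynomial.eval (chartPoint v e e' (m, α)) Q = 0)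
    (hα' : MvPolynomial.eval (chartPoint v e e' (m, α)) (polar v Q) = 0)
    (hβ : MvPolynomial.eval (chartPoint v e e' (m, β)) Q = 0)
    (hγ : MvPolynomial.eval (chartPoint v e e' (m, α)) (polar e' Q) ≠ 0) :
    IsGeneric (residualCubic v e e' Q) := by
  have : Infinite k := IsAlgClosed.instInfinite
  set P := (residualCubic v e e' Q).map (Polynomial.evalRingHom m) with hPdef
  have htoPoly : P.toPoly = restrictLine v (e + m • e') Q :=
    toPoly_map_evalRingHom_residualCubic hhom hv e e' m
  have hder (y : k) : P.toPoly.derivative.eval y =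
      MvPolynomial.eval (chartPoint v e e' (m, y)) (polar v Q) := by
    rw [htoPoly, derivative_restrictLine, eval_restrictLine, chartPoint]
  have hP : P = factoredCubic P.a β (-2 * α) (α ^ 2) := by
    refine eq_factoredCubic_of_isRoot hαβ ?_ ((hder α).trans hα') ?_ <;>
      rwa [Polynomial.IsRoot, htoPoly, eval_restrictLine]
  have hPa : P.a ≠ 0 := by
    intro ha
    refine restrictLine_ne_zero hQ hhom (by norm_num) (cross_add_smul_ne_zero h m) ?_
    rw [← htoPoly, hP, ha]
    simp [factoredCubic, Cubic.toPoly]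
  have hβ' : MvPolynomial.eval (chartPoint v e e' (m, β)) (polar v Q) ≠ 0 := by
    rw [← hder, eval_derivative_toPoly, hP, factoredCubic]
    convert mul_ne_zero hPa (pow_ne_zero 2 (sub_ne_zero.2 hαβ)) using 1
    ring
  have ha : (residualCubic v e e' Q).a ≠ 0 := fun h0 => hPa <| by simp [hPdef, Cubic.map, h0]
  refine ⟨mul_ne_zero ha (discr_residualCubic_ne_zero hQ hhom h hv ha hβ hβ'),
    not_discr_dvd_resolventObstruction hPa hαβ hP ?_⟩
  rw [toPoly_residualCubic hhom hv, derivative_eval_C_affineChart]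
  exact (evalEval_affineChart v e e' m α (polar e' Q)).trans_ne hγ

end Tangency

section TangentLine

variable {k : Type} [Field k]

theorem exists_eq_smul_chartPoint_of_dot_eq_zero {a v e e' u : Fin 3 → k}
    (h : v ⬝ᵥ e ⨯₃ e' ≠ 0) (hv : a ⬝ᵥ v = 0) (he' : a ⬝ᵥ e' ≠ 0) (hu : a ⬝ᵥ u = 0)
    (huv : u ⨯₃ v ≠ 0) :
    ∃ t y : k, t ≠ 0 ∧ u = t • chartPoint v e e' (-(a ⬝ᵥ e) / a ⬝ᵥ e', y) := by
  have hinf : (e' ⨯₃ v) ⬝ᵥ u ≠ 0 := by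
    intro h0
    obtain ⟨α, β, rfl⟩ := exists_eq_smul_add_smul (cross_ne_zero_of_triple_product_ne_zero h) h0
    have hα : α = 0 := by simpa [hv, he'] using hu
    exact huv (by simp [hα])
  obtain ⟨t, ⟨x, y⟩, ht, rfl⟩ := exists_eq_smul_chartPoint h hinf
  refine ⟨t, y, ht, ?_⟩
  have hx : a ⬝ᵥ e + x * a ⬝ᵥ e' = 0 := by
    rw [dotProduct_smul, smul_eq_mul, mul_eq_zero_iff_left ht] at hu
    simpa [chartPoint, hv] using hu
  rw [← eq_div_of_mul_eq he' (eq_neg_of_add_eq_zero_right hx)]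

theorem exists_triple_product_single_ne_zero_of_dot_eq_zero {a v : Fin 3 → k} (ha : a ≠ 0)
    (hv : v ≠ 0) (h : a ⬝ᵥ v = 0) :
    ∃ j l, v ⬝ᵥ (Pi.single j 1 : Fin 3 → k) ⨯₃ (Pi.single l 1) ≠ 0 ∧
      a ⬝ᵥ (Pi.single l 1 : Fin 3 → k) ≠ 0 := by
  obtain ⟨l, hl⟩ := Function.ne_iff.1 ha
  have hal : a ⬝ᵥ (Pi.single l 1 : Fin 3 → k) ≠ 0 := by simpa using hl
  have hcross : (Pi.single l 1 : Fin 3 → k) ⨯₃ v ≠ 0 := by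
    intro h0
    have hexpand := cross_cross_eq_smul_sub_smul' a (Pi.single l 1) v
    rw [h0, h] at hexpand
    simp_all
  obtain ⟨j, hj⟩ := Function.ne_iff.1 hcross
  refine ⟨j, l, ?_, hal⟩
  rw [triple_product_permutation]
  simpa using hj

theorem exists_pderiv_ne_zero_of_simpleTangencyPlane {Q : MvPolynomial (Fin 3) k} {d : ℕ}
    (ht : SimpleTangencyPlane d Q) : ∃ r, MvPolynomial.pderiv r Q ≠ 0 := by
  obtain ⟨a, -, -, hsmooth, x, hx, -⟩ := ht
  obtain ⟨r, hr⟩ := Function.ne_iff.1 (hsmooth x hx.1 hx.2)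
  exact ⟨r, fun h => hr (by simp [h])⟩

theorem cross_rep_ne_zero {x y : P2 k} (h : x ≠ y) : x.rep ⨯₃ y.rep ≠ 0 := by
  rw [Ne, ← Projectivization.mk_eq_mk_iff_crossProduct_eq_zero x.rep_nonzero y.rep_nonzero,
    x.mk_rep, y.mk_rep]
  exact h

theorem eval_eq_zero_iff_of_eq_smul {F : MvPolynomial (Fin 3) k} {n : ℕ} (hF : F.IsHomogeneous n)
    {s : k} (hs : s ≠ 0) {w w' : Fin 3 → k} (hw : w = s • w') :
    MvPolynomial.eval w' F = 0 ↔ MvPolynomial.eval w F = 0 := by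
  rw [hw, eval_smul_of_isHomogeneous hF, mul_eq_zero_iff_left (pow_ne_zero n hs)]

theorem exists_tangent_line_of_simpleTangencyPlane {Q : MvPolynomial (Fin 3) k}
    (ht : SimpleTangencyPlane 4 Q) :
    ∃ (a : Fin 3 → k) (c : k) (x₀ x₁ x₂ : P2 k), a ≠ 0 ∧ c ≠ 0 ∧
      (∀ u, MvPolynomial.eval x₀.rep (polar u Q) = c * a ⬝ᵥ u) ∧
      (x₀ ≠ x₁ ∧ x₂ ≠ x₁ ∧ x₂ ≠ x₀) ∧ (OnCurve Q x₀ ∧ OnCurve Q x₁ ∧ OnCurve Q x₂) ∧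
      a ⬝ᵥ x₀.rep = 0 ∧ a ⬝ᵥ x₁.rep = 0 ∧ a ⬝ᵥ x₂.rep = 0 := by
  obtain ⟨a, ha, hcard, hsmooth, x₀, ⟨hx₀, hax₀⟩, ⟨c, hc⟩, -⟩ := ht
  have hmem : x₀ ∈ {x : P2 k | OnCurve Q x ∧ a ⬝ᵥ x.rep = 0} := ⟨hx₀, hax₀⟩
  have hothers : ({x : P2 k | OnCurve Q x ∧ a ⬝ᵥ x.rep = 0} \ {x₀}).ncard = 2 := by
    rw [Set.ncard_sdiff_singleton_of_mem hmem]
    exact congrArg (· - 1) hcard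
  obtain ⟨x₁, x₂, h₁₂, hset⟩ := Set.ncard_eq_two.1 hothers
  obtain ⟨⟨hx₁, hax₁⟩, h₁₀⟩ := hset.symm.subset (Set.mem_insert x₁ {x₂})
  obtain ⟨⟨hx₂, hax₂⟩, h₂₀⟩ := hset.symm.subset (Set.mem_insert_of_mem x₁ rfl)
  refine ⟨a, c, x₀, x₁, x₂, ha, ?_, fun u => ?_, ⟨Ne.symm h₁₀, h₁₂.symm, h₂₀⟩, ⟨hx₀, hx₁, hx₂⟩,
    hax₀, hax₁, hax₂⟩
  · rintro rfl
    exact hsmooth x₀ hx₀ hax₀ (by rw [hc, zero_smul])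
  · rw [eval_polar, hc, dotProduct_smul, dotProduct_comm, smul_eq_mul]

/-- The tangent line is viewed from one of its transversal points `v`: its residual cubic has a
double root at the point of tangency. -/
theorem exists_isGeneric_residualCubic [IsAlgClosed k] {Q : MvPolynomial (Fin 3) k}
    (hQ : Irreducible Q) (hhom : Q.IsHomogeneous 4) (ht : SimpleTangencyPlane 4 Q) :
    ∃ (v : Fin 3 → k) (j l : Fin 3), v ≠ 0 ∧ MvPolynomial.eval v Q = 0 ∧
      v ⬝ᵥ (Pi.single j 1) ⨯₃ (Pi.single l 1) ≠ 0 ∧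
      IsGeneric (residualCubic v (Pi.single j 1) (Pi.single l 1) Q) := by
  obtain ⟨a, c, x₀, x₁, x₂, ha, hc, hpolar, ⟨h₀₁, h₂₁, h₂₀⟩, ⟨hx₀, hx₁, hx₂⟩, hax₀, hax₁, hax₂⟩ :=
    exists_tangent_line_of_simpleTangencyPlane ht
  obtain ⟨j, l, hjl, hal⟩ :=
    exists_triple_product_single_ne_zero_of_dot_eq_zero ha x₁.rep_nonzero hax₁
  refine ⟨x₁.rep, j, l, x₁.rep_nonzero, hx₁, hjl, ?_⟩
  obtain ⟨s, α, hs, hα⟩ := exists_eq_smul_chartPoint_of_dot_eq_zero hjl hax₁ hal hax₀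
    (cross_rep_ne_zero h₀₁)
  obtain ⟨t, β, ht, hβ⟩ := exists_eq_smul_chartPoint_of_dot_eq_zero hjl hax₁ hal hax₂
    (cross_rep_ne_zero h₂₁)
  have hpolar_iff (u : Fin 3 → k) :=
    eval_eq_zero_iff_of_eq_smul (isHomogeneous_polar u hhom) hs hα
  refine isGeneric_residualCubic_of_tangent hQ hhom hjl hx₁ ?_
    ((eval_eq_zero_iff_of_eq_smul hhom hs hα).2 hx₀) ((hpolar_iff _).2 ?_)
    ((eval_eq_zero_iff_of_eq_smul hhom ht hβ).2 hx₂) ((hpolar_iff _).not.2 ?_)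
  · rintro rfl
    exact cross_rep_ne_zero h₂₀ (by rw [hα, hβ]; simp)
  · rw [hpolar, hax₁, mul_zero]
  · rw [hpolar]
    exact mul_ne_zero hc hal

end TangentLine

/-! ### Generic viewpoints on a quartic -/

section GenericViewpoints

variable {k : Type} [Field k] {Q : MvPolynomial (Fin 3) k} {v e e' : Fin 3 → k}

/-- The projection of the quartic `Q = 0` from `v` is a generic family of residual cubics, when the
lines through `v` are parametrized by the points `e + x e'`. -/
def IsGenericViewpoint (e e' : Fin 3 → k) (Q : MvPolynomial (Fin 3) k) (v : Fin 3 → k) : Prop :=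
  v ⬝ᵥ e ⨯₃ e' ≠ 0 ∧ IsGeneric (residualCubic v e e' Q)

theorem IsGenericViewpoint.smul (h : IsGenericViewpoint e e' Q v) {l : k} (hl : l ≠ 0) :
    IsGenericViewpoint e e' Q (l • v) :=
  ⟨by rw [smul_dotProduct]; exact smul_ne_zero hl h.1, h.2.smul hl⟩

theorem finite_setOf_not_isGenericViewpoint [IsAlgClosed k] (hQ : Irreducible Q) {n : ℕ}
    (hhom : Q.IsHomogeneous n) (hn : 2 ≤ n) (hv0 : v ≠ 0) (hv : MvPolynomial.eval v Q = 0)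
    (h : IsGenericViewpoint e e' Q v) :
    {x : P2 k | OnCurve Q x ∧ ¬IsGenericViewpoint e e' Q x.rep}.Finite := by
  obtain ⟨H, hHv, hH⟩ := exists_eval_ne_zero_forall_isGeneric_residualCubic h.2
  have hL (w : Fin 3 → k) : MvPolynomial.eval w (H * linearForm (e ⨯₃ e')) =
      MvPolynomial.eval w H * w ⬝ᵥ e ⨯₃ e' := by
    rw [map_mul, eval_linearForm, dotProduct_comm]
  refine (finite_curve_inter_zeros hQ hhom hn (H * linearForm (e ⨯₃ e')) hv0 hv
    (by rw [hL]; exact mul_ne_zero hHv h.1)).subset ?_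
  rintro x ⟨hx, hspecial⟩
  refine ⟨hx, fun w hw hwx => ?_⟩
  by_contra hne
  rw [hL] at hne
  have hw' : IsGenericViewpoint e e' Q w :=
    ⟨right_ne_zero_of_mul hne, hH w (left_ne_zero_of_mul hne)⟩
  obtain ⟨s, hs⟩ := Projectivization.exists_smul_eq_mk_rep k w hw
  rw [← hwx, ← hs] at hspecial
  exact hspecial (hw'.smul s.ne_zero)

variable {K : Type} [Field K] (i : K →+* k)

theorem mk_comp_rep_injective : Function.Injective fun x : P2 K =>
    Projectivization.mk k (i ∘ x.rep) (comp_ne_zero i x.rep_nonzero) := by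
  intro x y hxy
  by_contra hne
  refine comp_ne_zero i (cross_rep_ne_zero hne) ?_
  rw [comp_crossProduct]
  exact (Projectivization.mk_eq_mk_iff_crossProduct_eq_zero _ _).1 hxy

theorem ncard_not_isGenericViewpoint_le {Q : MvPolynomial (Fin 3) K} {n : ℕ}
    (hhom : Q.IsHomogeneous n)
    (hfin : {x : P2 k | OnCurve (MvPolynomial.map i Q) x ∧
      ¬IsGenericViewpoint e e' (MvPolynomial.map i Q) x.rep}.Finite) :
    {x : P2 K | OnCurve Q x ∧
        ¬IsGenericViewpoint e e' (MvPolynomial.map i Q) (i ∘ x.rep)}.ncard ≤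
      {x : P2 k | OnCurve (MvPolynomial.map i Q) x ∧
        ¬IsGenericViewpoint e e' (MvPolynomial.map i Q) x.rep}.ncard := by
  refine Set.ncard_le_ncard_of_injOn _ ?_ (mk_comp_rep_injective i).injOn hfin
  rintro x ⟨hx, hspecial⟩
  refine ⟨(onCurve_mk (hhom.map i) _).2 ?_, fun h => hspecial ?_⟩
  · rw [MvPolynomial.eval_map, ← MvPolynomial.eval₂_comp]
    exact (congrArg i hx).trans (map_zero i)
  · obtain ⟨s, hs⟩ := Projectivization.exists_smul_eq_mk_rep k (i ∘ x.rep)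
      (comp_ne_zero i x.rep_nonzero)
    rw [← hs] at h
    simpa [Units.smul_def] using h.smul s⁻¹.ne_zero

end GenericViewpoints

/-! ### Completely split members of a family of cubics -/

section SplitParameters

variable {K : Type*} [Field K] [Fintype K] [DecidableEq K]

theorem ncard_setOf_evalEval_eq_zero {f : K[X][X]}
    (hf : ∀ x, f.map (Polynomial.evalRingHom x) ≠ 0) :
    {z : K × K | f.evalEval z.1 z.2 = 0}.ncard =
      ∑ x, (f.map (Polynomial.evalRingHom x)).roots.toFinset.card := by
  have hroots (x : K) : (f.map (Polynomial.evalRingHom x)).roots.toFinset =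
      Finset.univ.filter fun y => f.evalEval x y = 0 := by
    ext y
    simp [hf x, Polynomial.map_evalRingHom_eval]
  rw [Set.ncard_eq_toFinset_card', Set.toFinset_ofPred, Finset.card_filter,
    Fintype.sum_prod_type]
  simp only [hroots, Finset.card_filter]

/-- The parameters at which a family of cubics has three distinct rational roots. -/
noncomputable def splitParameters (P : Cubic K[X]) : Finset K :=
  Finset.univ.filter fun x => (P.map (Polynomial.evalRingHom x)).roots.toFinset.card = 3

theorem card_filter_eval_eq_zero_le {g : K[X]} (hg : g ≠ 0) :
    (Finset.univ.filter fun x => g.eval x = 0).card ≤ g.natDegree := by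
  refine (Finset.card_le_card fun x hx => ?_).trans
    (g.roots.toFinset_card_le.trans g.card_roots')
  simpa [hg] using hx

theorem two_mul_ncard_add_ncard_resolvent_le {P : Cubic K[X]} (h : P.a * P.discr ≠ 0)
    (hP : ∀ x, P.toPoly.map (Polynomial.evalRingHom x) ≠ 0) :
    2 * {z : K × K | P.toPoly.evalEval z.1 z.2 = 0}.ncard +
        {z : K × K | (resolvent P).evalEval z.1 z.2 = 0}.ncard ≤
      2 * Fintype.card K + 6 * (splitParameters P).card + 8 * (P.a * P.discr).natDegree := by
  rw [ncard_setOf_evalEval_eq_zero hP,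
    ncard_setOf_evalEval_eq_zero fun x => ((monic_resolvent P).map _).ne_zero, Finset.mul_sum,
    ← Finset.sum_add_distrib]
  calc _ ≤ ∑ x : K, (2 +
        (if (P.map (Polynomial.evalRingHom x)).roots.toFinset.card = 3 then 6 else 0) +
        (if (P.a * P.discr).eval x = 0 then 8 else 0)) := by
        refine Finset.sum_le_sum fun x _ => ?_
        have hx := two_mul_card_roots_add_card_roots_resolvent_le_add
          (P.map (Polynomial.evalRingHom x))
        rw [resolvent_map, discr_map] at hx
        rwa [← Cubic.map_toPoly, Polynomial.eval_mul]
    _ = 2 * Fintype.card K + 6 * (splitParameters P).card +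
        8 * (Finset.univ.filter fun x => (P.a * P.discr).eval x = 0).card := by
      rw [Finset.sum_add_distrib, Finset.sum_add_distrib, ← Finset.sum_filter, ← Finset.sum_filter,
        splitParameters]
      simp only [Finset.sum_const, smul_eq_mul, Finset.card_univ, mul_comm]
    _ ≤ _ := by gcongr; exact card_filter_eval_eq_zero_le h

end SplitParameters

section SplitLines

theorem IsGeneric.a_mul_discr_ne_zero_of_map {R S : Type*} [CommRing R] [CommRing S] {i : R →+* S}
    {P : Cubic R[X]} (h : IsGeneric (P.map (Polynomial.mapRingHom i))) : P.a * P.discr ≠ 0 := by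
  intro h0
  refine h.1 ?_
  rw [discr_map]
  exact (map_mul (Polynomial.mapRingHom i) _ _).symm.trans (by rw [h0, map_zero])

variable {K k : Type} [Field K] [Field k] {i : K →+* k} {Q : MvPolynomial (Fin 3) K}
  {v e e' : Fin 3 → K}

theorem map_evalRingHom_affineChart_ne_zero [Infinite k] (hQ : Irreducible (MvPolynomial.map i Q))
    {n : ℕ} (hhom : Q.IsHomogeneous n) (hn : 2 ≤ n) (h : v ⬝ᵥ e ⨯₃ e' ≠ 0) (x : K) :
    (affineChart v e e' Q).map (Polynomial.evalRingHom x) ≠ 0 := by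
  intro h0
  rw [map_evalRingHom_affineChart] at h0
  refine restrictLine_ne_zero hQ (hhom.map i) hn
    (comp_crossProduct i v (e + x • e') ▸ comp_ne_zero i (cross_add_smul_ne_zero h x)) ?_
  rw [← map_restrictLine, h0, Polynomial.map_zero]

variable [Fintype K] [IsAlgClosed k] {p a b : ℕ}

theorem card_le_ncard_resolvent [Fact p.Prime] [CharP k p]
    (hK : Fintype.card K = p ^ (a + b)) (hab : a ≤ b) (hba : b ≤ a + 1)
    {P : Cubic K[X]} (h : IsGeneric (P.map (Polynomial.mapRingHom i))) {d : ℕ}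
    (hd : ∀ j, ((resolvent P).coeff j).natDegree ≤ d) (hC : pointCountConstant 2 d p ≤ p ^ b) :
    Fintype.card K ≤ {z : K × K | (resolvent P).evalEval z.1 z.2 = 0}.ncard +
      pointCountConstant 2 d p * p ^ b := by
  have hprime := prime_resolvent h.2
  have hder := derivative_resolvent_ne_zero (right_ne_zero_of_mul h.1)
  rw [resolvent_map] at hprime hder
  have hcount := le_ncard_zeros hK hab hba (monic_resolvent P) hd
    (by rwa [natDegree_resolvent]) hprime hder
  rwa [natDegree_resolvent] at hcount

theorem two_mul_ncard_curve_le [DecidableEq K] [Fact p.Prime] [CharP k p]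
    (hK : Fintype.card K = p ^ (a + b)) (hab : a ≤ b) (hba : b ≤ a + 1)
    (hC : pointCountConstant 2 10 p ≤ p ^ b) (hQ : Irreducible (MvPolynomial.map i Q))
    (hhom : Q.IsHomogeneous 4) (hv : MvPolynomial.eval v Q = 0)
    (h : IsGenericViewpoint (i ∘ e) (i ∘ e') (MvPolynomial.map i Q) (i ∘ v)) :
    2 * {x | OnCurve Q x}.ncard ≤ Fintype.card K + pointCountConstant 2 10 p * p ^ b +
      6 * (splitParameters (residualCubic v e e' Q)).card + 96 := by
  have : Infinite k := IsAlgClosed.instInfinite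
  obtain ⟨htriple, hgeneric⟩ := h
  rw [← map_triple_product, map_ne_zero] at htriple
  rw [← map_residualCubic] at hgeneric
  have htoPoly := toPoly_residualCubic hhom hv e e'
  have hchart := ncard_curve_le_ncard_chart_add i htriple hQ hhom (by norm_num)
  have hresolvent := card_le_ncard_resolvent hK hab hba hgeneric
    (natDegree_coeff_resolvent_residualCubic_le hhom v e e') hC
  have hsplit := two_mul_ncard_add_ncard_resolvent_le hgeneric.a_mul_discr_ne_zero_of_map
    (htoPoly ▸ map_evalRingHom_affineChart_ne_zero hQ hhom (by norm_num) htriple)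
  have hdeg := natDegree_a_mul_discr_residualCubic_le hhom v e e'
  simp only [htoPoly, evalEval_affineChart, Prod.mk.eta] at hsplit
  omega

end SplitLines

/-! ### Counting four-rich lines -/

section RichLines

variable {K : Type} [Field K]

/-- The lines, as points of the dual plane, that contain precisely `m` points of the curve
`Q = 0`. -/
def richLines (Q : MvPolynomial (Fin 3) K) (m : ℕ) : Set (P2 K) :=
  {L | Nat.card {x : P2 K // OnCurve Q x ∧ Incid L x} = m}

theorem ncard_mul_le_ncard_richLines_mul [Finite K] {Q : MvPolynomial (Fin 3) K} {m n : ℕ}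
    {G : Set (P2 K)} (hcurve : ∀ x ∈ G, OnCurve Q x)
    (hrich : ∀ x ∈ G, m ≤ {L | L ∈ richLines Q n ∧ Incid L x}.ncard) :
    G.ncard * m ≤ (richLines Q n).ncard * n := by
  classical
  have : Fintype (P2 K) := Fintype.ofFinite _
  rw [Set.ncard_eq_toFinset_card', Set.ncard_eq_toFinset_card']
  refine Finset.card_mul_le_card_mul (fun x L => Incid L x) (fun x hx => ?_) fun L hL => ?_
  · refine (hrich x (Set.mem_toFinset.1 hx)).trans_eq ?_
    rw [Finset.bipartiteAbove, ← Set.ncard_coe_finset]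
    simp
  · have hL : {x | OnCurve Q x ∧ Incid L x}.ncard = n :=
      (Set.mem_toFinset (s := richLines Q n)).1 hL
    rw [Finset.bipartiteBelow, ← Set.ncard_coe_finset, ← hL]
    refine Set.ncard_le_ncard fun x hx => ?_
    have hx := Finset.mem_filter.1 hx
    exact ⟨hcurve x (Set.mem_toFinset.1 hx.1), hx.2⟩

variable {v e e' : Fin 3 → K}

/-- The line joining `v` to `e + x e'`. -/
noncomputable def pencilLine (h : v ⬝ᵥ e ⨯₃ e' ≠ 0) (x : K) : P2 K :=
  Projectivization.mk K (v ⨯₃ (e + x • e')) (cross_add_smul_ne_zero h x)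

theorem pencilLine_injective (h : v ⬝ᵥ e ⨯₃ e' ≠ 0) : Function.Injective (pencilLine h) := by
  intro x x' hx
  have hcross := (Projectivization.mk_eq_mk_iff_crossProduct_eq_zero _ _).1 hx
  have htriple : v ⬝ᵥ (e + x • e') ⨯₃ (e + x' • e') = (x' - x) * v ⬝ᵥ e ⨯₃ e' := by
    have hcomb := cross_smul_add_smul e e' 1 x 1 x'
    simp only [one_smul, one_mul, mul_one] at hcomb
    rw [hcomb, dotProduct_smul, smul_eq_mul]
  have hv : v ≠ 0 := fun h0 => h (by rw [h0, zero_dotProduct])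
  rw [cross_cross_cross, htriple, smul_eq_zero_iff_left hv, mul_eq_zero_iff_right h,
    sub_eq_zero] at hcross
  exact hcross.symm

theorem incid_pencilLine_mk (h : v ⬝ᵥ e ⨯₃ e' ≠ 0) (hv : v ≠ 0) (x : K) :
    Incid (pencilLine h x) (Projectivization.mk K v hv) :=
  (incid_mk _ _).2 (by rw [dotProduct_comm, dot_self_cross])

theorem incid_pencilLine_chartMap (h : v ⬝ᵥ e ⨯₃ e' ≠ 0) (z : K × K) :
    Incid (pencilLine h z.1) (chartMap h z) := by
  refine (incid_mk _ _).2 ?_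
  rw [chartPoint, dotProduct_add, dotProduct_smul, dotProduct_comm, dot_self_cross,
    dotProduct_comm, dot_cross_self, smul_zero, add_zero]

theorem chartMap_ne_mk (h : v ⬝ᵥ e ⨯₃ e' ≠ 0) (hv : v ≠ 0) (z : K × K) :
    chartMap h z ≠ Projectivization.mk K v hv := by
  rw [Ne, eq_comm, chartMap, Projectivization.mk_eq_mk_iff_crossProduct_eq_zero, chartPoint]
  simpa using cross_add_smul_ne_zero h z.1

variable [Fintype K] [DecidableEq K] {k : Type} [Field k] [Infinite k] (i : K →+* k)
  {Q : MvPolynomial (Fin 3) K}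

theorem pencilLine_mem_richLines (hQ : Irreducible (MvPolynomial.map i Q))
    (hhom : Q.IsHomogeneous 4) (h : v ⬝ᵥ e ⨯₃ e' ≠ 0) (hv : MvPolynomial.eval v Q = 0) {x : K}
    (hx : x ∈ splitParameters (residualCubic v e e' Q)) : pencilLine h x ∈ richLines Q 4 := by
  refine le_antisymm (ncard_curve_inter_line_le i hQ hhom (by norm_num)
    (pencilLine h x).rep_nonzero) ?_
  have hv0 : v ≠ 0 := fun h0 => h (by rw [h0, zero_dotProduct])
  set Y := (restrictLine v (e + x • e') Q).roots.toFinset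
  have hcardY : Y.card = 3 := by
    have hx := (Finset.mem_filter.1 hx).2
    rwa [Cubic.roots, toPoly_map_evalRingHom_residualCubic hhom hv] at hx
  set S : Set (P2 K) :=
    insert (Projectivization.mk K v hv0) ((fun y => chartMap h (x, y)) '' Y) with hS
  have hcardS : S.ncard = 4 := by
    rw [hS, Set.ncard_insert_of_notMem, Set.ncard_image_of_injective, Set.ncard_coe_finset, hcardY]
    · exact (chartMap_injective h).comp (Prod.mk_right_injective x)
    · rintro ⟨y, -, hy⟩
      exact chartMap_ne_mk h hv0 _ hy
  rw [← hcardS]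
  refine Set.ncard_le_ncard (t := {y | OnCurve Q y ∧ Incid (pencilLine h x) y}) ?_
  rintro _ (rfl | ⟨y, hy, rfl⟩)
  · exact ⟨(onCurve_mk hhom hv0).2 hv, incid_pencilLine_mk h hv0 x⟩
  · refine ⟨(onCurve_chartMap h hhom _).2 ?_, incid_pencilLine_chartMap h (x, y)⟩
    rw [chartPoint, ← eval_restrictLine]
    exact Polynomial.isRoot_of_mem_roots (Multiset.mem_toFinset.1 hy)

theorem card_splitParameters_le_ncard_richLines (hQ : Irreducible (MvPolynomial.map i Q))
    (hhom : Q.IsHomogeneous 4) {x : P2 K} (h : x.rep ⬝ᵥ e ⨯₃ e' ≠ 0) (hx : OnCurve Q x) :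
    (splitParameters (residualCubic x.rep e e' Q)).card ≤
      {L | L ∈ richLines Q 4 ∧ Incid L x}.ncard := by
  rw [← Set.ncard_coe_finset]
  refine Set.ncard_le_ncard_of_injOn (pencilLine h) (fun y hy => ?_) (pencilLine_injective h).injOn
  refine ⟨pencilLine_mem_richLines i hQ hhom h hx hy, ?_⟩
  simpa only [x.mk_rep] using incid_pencilLine_mk h x.rep_nonzero y

end RichLines

section FiniteLevel

variable {K k : Type} [Field K] [Fintype K] [Field k] [IsAlgClosed k] {i : K →+* k}
  {Q : MvPolynomial (Fin 3) K} {p a b : ℕ} [Fact p.Prime] [CharP k p]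

theorem abs_ncard_curve_sub_card_le (hK : Fintype.card K = p ^ (a + b)) (hab : a ≤ b)
    (hba : b ≤ a + 1) {n : ℕ} (hC : curveCountConstant n p ≤ p ^ b)
    (hQ : Irreducible (MvPolynomial.map i Q)) (hhom : Q.IsHomogeneous n) (hn : 2 ≤ n)
    {r : Fin 3} (hr : MvPolynomial.pderiv r Q ≠ 0) :
    |({x | OnCurve Q x}.ncard : ℝ) - Fintype.card K| ≤
      curveCountConstant n p * p * √(Fintype.card K) := by
  have hp : (1 : ℝ) ≤ p := mod_cast (Fact.out : p.Prime).one_lt.le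
  have hsqrt : (p : ℝ) ^ b ≤ p * √(Fintype.card K) := by
    refine (pow_le_pow_iff_left₀ (by positivity) (by positivity) two_ne_zero).1 ?_
    rw [mul_pow, Real.sq_sqrt (by positivity), hK, Nat.cast_pow, ← pow_mul, ← pow_add]
    exact pow_le_pow_right₀ hp (by omega)
  have herror : (curveCountConstant n p : ℝ) * p ^ b ≤
      curveCountConstant n p * p * √(Fintype.card K) := by
    rw [mul_assoc]
    gcongr
  obtain ⟨hle, hge⟩ := ncard_curve_le_and_le i hK hab hba hC hQ hhom hn hr
  have hle : ({x | OnCurve Q x}.ncard : ℝ) ≤ Fintype.card K + curveCountConstant n p * p ^ b :=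
    mod_cast hle
  have hge : (Fintype.card K : ℝ) ≤ {x | OnCurve Q x}.ncard + curveCountConstant n p * p ^ b :=
    mod_cast hge
  rw [abs_le]
  constructor <;> linarith

theorem two_mul_add_le_pow_add {p a c d : ℕ} (hp : 0 < p) (b : ℕ) (h : 2 * (c + d) ≤ p ^ a) :
    2 * (c * p ^ b + d) ≤ p ^ (a + b) :=
  calc 2 * (c * p ^ b + d) ≤ 2 * (c * p ^ b + d * p ^ b) := by
        gcongr
        exact Nat.le_mul_of_pos_right d (Nat.pow_pos hp)
    _ = 2 * (c + d) * p ^ b := by ring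
    _ ≤ p ^ a * p ^ b := Nat.mul_le_mul_right _ h
    _ = p ^ (a + b) := (pow_add p a b).symm

/-- At least half of the `q` rational points are generic viewpoints, and through each of those pass
at least `q / 12` four-rich lines. -/
theorem card_sq_le_mul_ncard_richLines (hK : Fintype.card K = p ^ (a + b)) (hab : a ≤ b)
    (hba : b ≤ a + 1) {B : ℕ}
    (hT : 2 * (2 * curveCountConstant 4 p + pointCountConstant 2 10 p + (96 + B)) ≤ p ^ a)
    (hQ : Irreducible (MvPolynomial.map i Q)) (hhom : Q.IsHomogeneous 4)
    {r : Fin 3} (hr : MvPolynomial.pderiv r Q ≠ 0) {e e' : Fin 3 → K}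
    (hB : {x : P2 K | OnCurve Q x ∧
      ¬IsGenericViewpoint (i ∘ e) (i ∘ e') (MvPolynomial.map i Q) (i ∘ x.rep)}.ncard ≤ B) :
    Fintype.card K ^ 2 ≤ 96 * (richLines Q 4).ncard := by
  classical
  have : Infinite k := IsAlgClosed.instInfinite
  have hp : 0 < p := (Fact.out : p.Prime).pos
  have hpb : p ^ a ≤ p ^ b := Nat.pow_le_pow_right hp hab
  have hcurve := (ncard_curve_le_and_le i hK hab hba (by omega) hQ hhom (by norm_num) hr).2
  set Generic := {x : P2 K | OnCurve Q x ∧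
    IsGenericViewpoint (i ∘ e) (i ∘ e') (MvPolynomial.map i Q) (i ∘ x.rep)}
  have hlarge := two_mul_add_le_pow_add hp b hT
  rw [← hK, add_mul, mul_assoc] at hlarge
  have hhalf : Fintype.card K ≤ 2 * Generic.ncard := by
    have hunion := Set.ncard_le_ncard (s := {x | OnCurve Q x}) (t := Generic ∪ {x | OnCurve Q x ∧
      ¬IsGenericViewpoint (i ∘ e) (i ∘ e') (MvPolynomial.map i Q) (i ∘ x.rep)}) fun x hx =>
      (em _).imp (And.intro hx) (And.intro hx)
    have hunion := hunion.trans (Set.ncard_union_le _ _)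
    omega
  have hrich : ∀ x ∈ Generic,
      (Fintype.card K + 11) / 12 ≤ {L | L ∈ richLines Q 4 ∧ Incid L x}.ncard := by
    rintro x ⟨hx, hgeneric⟩
    have hsplit := two_mul_ncard_curve_le hK hab hba (by omega) hQ hhom hx hgeneric
    have htriple := hgeneric.1
    rw [← map_triple_product, map_ne_zero] at htriple
    have hlines := card_splitParameters_le_ncard_richLines i hQ hhom htriple hx
    omega
  have hcount := ncard_mul_le_ncard_richLines_mul (fun x hx => hx.1) hrich
  have htwelfth : Fintype.card K ≤ 12 * ((Fintype.card K + 11) / 12) := by omega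
  nlinarith [Nat.mul_le_mul hhalf htwelfth]

end FiniteLevel

section Uniformity

variable {k : Type} [Field k]

theorem exists_pderiv_ne_zero_of_simpleTangencyPlane_map {K : Type} [Field K] (i : K →+* k)
    {Q : MvPolynomial (Fin 3) K} {d : ℕ} (ht : SimpleTangencyPlane d (MvPolynomial.map i Q)) :
    ∃ r, MvPolynomial.pderiv r Q ≠ 0 := by
  obtain ⟨r, hr⟩ := exists_pderiv_ne_zero_of_simpleTangencyPlane ht
  exact ⟨r, fun h => hr (by rw [MvPolynomial.pderiv_map, h, map_zero])⟩

theorem exists_forall_card_sq_le_mul_ncard_richLines [IsAlgClosed k] (p : ℕ) [Fact p.Prime]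
    [CharP k p] {Q : MvPolynomial (Fin 3) k} (hQ : Irreducible Q) (hhom : Q.IsHomogeneous 4)
    (ht : SimpleTangencyPlane 4 Q) :
    ∃ T : ℕ, ∀ (K : Type) [Field K] [Fintype K] (i : K →+* k) (Q' : MvPolynomial (Fin 3) K)
      (a b : ℕ), Q'.IsHomogeneous 4 → MvPolynomial.map i Q' = Q →
      Fintype.card K = p ^ (a + b) → a ≤ b → b ≤ a + 1 → T ≤ p ^ a →
      Fintype.card K ^ 2 ≤ 96 * (richLines Q' 4).ncard := by
  obtain ⟨v, j, l, hv0, hv, hgeneric⟩ := exists_isGeneric_residualCubic hQ hhom ht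
  have hfin := finite_setOf_not_isGenericViewpoint hQ hhom (by norm_num) hv0 hv hgeneric
  set B := {x : P2 k | OnCurve Q x ∧
    ¬IsGenericViewpoint (Pi.single j 1) (Pi.single l 1) Q x.rep}.ncard
  refine ⟨2 * (2 * curveCountConstant 4 p + pointCountConstant 2 10 p + (96 + B)),
    fun K _ _ i Q' a b hhom' hmap hK hab hba hT => ?_⟩
  subst hmap
  obtain ⟨r, hr⟩ := exists_pderiv_ne_zero_of_simpleTangencyPlane_map i ht
  have hsingle (s : Fin 3) : i ∘ (Pi.single s 1 : Fin 3 → K) = Pi.single s 1 := by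
    ext t
    simp [Pi.single_apply, apply_ite i]
  refine card_sq_le_mul_ncard_richLines hK hab hba hT hQ hhom' hr
    (e := Pi.single j 1) (e' := Pi.single l 1) ?_
  rw [hsingle, hsingle]
  exact ncard_not_isGenericViewpoint_le i hhom' hfin

theorem exists_balanced_exponents {p n T N : ℕ} (hp : 1 < p) (hn : 0 < n) (hN : 2 * T ≤ N) :
    ∃ a b, (p ^ n) ^ N = p ^ (a + b) ∧ a ≤ b ∧ b ≤ a + 1 ∧ T ≤ p ^ a := by
  have hnN : N ≤ n * N := Nat.le_mul_of_pos_left N hn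
  have hlt : n * N / 2 < p ^ (n * N / 2) := Nat.lt_pow_self hp
  refine ⟨n * N / 2, (n * N + 1) / 2, ?_, by omega, by omega, by omega⟩
  rw [← pow_mul]
  congr 1
  omega

theorem exists_map_map_algebraMap_eq {σ F : Type*} (K : Type*) [Field F] [Field K] [Finite K]
    [Algebra F K] (P : MvPolynomial σ F) : ∃ i : K →+* AlgebraicClosure F,
      MvPolynomial.map i (MvPolynomial.map (algebraMap F K) P) =
        MvPolynomial.map (algebraMap F (AlgebraicClosure F)) P := by
  have : Module.Finite F K := Module.Finite.of_finite
  refine ⟨(IsAlgClosed.lift : K →ₐ[F] AlgebraicClosure F), ?_⟩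
  rw [MvPolynomial.map_map, AlgHom.comp_algebraMap]

end Uniformity

/-- Let `C` be an absolutely irreducible plane algebraic curve of
degree `4` over `𝔽_q` with simple tangency.  Then there are constants `c, ε > 0` (and an
`O(√q)`-constant `δ`) such that, after replacing `𝔽_q` by any sufficiently large finite
extension `𝔽_{q^N}`, the set `P = C(𝔽_{q^N})` has `c·q^N + O(√(q^N))` elements, spans at
least `ε·(q^N)²` lines containing exactly `4` points of `P` (`4`-rich lines), and
contains no five collinear points. -/
theorem statement11
    (F : Type) [Field F] [Fintype F]
    (K : ℕ → Type) [∀ N, Field (K N)] [∀ N, Fintype (K N)] [∀ N, Algebra F (K N)]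
    (hcard : ∀ N, 1 ≤ N → Fintype.card (K N) = Fintype.card F ^ N)
    (P : MvPolynomial (Fin 3) F)
    (hP0 : P ≠ 0) (hhom : P.IsHomogeneous 4)
    (hirr : Irreducible (MvPolynomial.map (algebraMap F (AlgebraicClosure F)) P))
    (htan : SimpleTangencyPlane 4
      (MvPolynomial.map (algebraMap F (AlgebraicClosure F)) P)) :
    ∃ c ε δ : ℝ, 0 < c ∧ 0 < ε ∧ ∃ N₀ : ℕ, ∀ N ≥ N₀,
      -- `C(𝔽_{q^N})` has `c·q^N + O(√(q^N))` points
      |(Nat.card {x : P2 (K N) //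
            OnCurve (MvPolynomial.map (algebraMap F (K N)) P) x} : ℝ) -
          c * (Fintype.card F : ℝ) ^ N| ≤ δ * Real.sqrt ((Fintype.card F : ℝ) ^ N) ∧
      -- there are at least `ε·(q^N)²` 4-rich lines
      ε * ((Fintype.card F : ℝ) ^ N) ^ 2 ≤
        (Nat.card {L : P2 (K N) // Nat.card {x : P2 (K N) //
            OnCurve (MvPolynomial.map (algebraMap F (K N)) P) x ∧ Incid L x} = 4} : ℝ) ∧
      -- no five points of `C(𝔽_{q^N})` are collinear
      ∀ L : P2 (K N), Nat.card {x : P2 (K N) //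
          OnCurve (MvPolynomial.map (algebraMap F (K N)) P) x ∧ Incid L x} ≤ 4 := by
  obtain ⟨n, hp, hcardF⟩ := FiniteField.card F (ringChar F)
  set p := ringChar F
  have : Fact p.Prime := ⟨hp⟩
  have : CharP (AlgebraicClosure F) p :=
    charP_of_injective_algebraMap (algebraMap F (AlgebraicClosure F)).injective p
  obtain ⟨T, hrich⟩ := exists_forall_card_sq_le_mul_ncard_richLines p hirr (hhom.map _) htan
  refine ⟨1, 1 / 96, curveCountConstant 4 p * p, one_pos, by norm_num,
    2 * (T + curveCountConstant 4 p) + 1, fun N hN => ?_⟩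
  obtain ⟨a, b, hexp, hab, hba, hT⟩ :=
    exists_balanced_exponents hp.one_lt n.pos (show 2 * (T + curveCountConstant 4 p) ≤ N by omega)
  have hK : Fintype.card (K N) = p ^ (a + b) := by rw [hcard N (by omega), hcardF, hexp]
  have hpab : p ^ a ≤ p ^ b := Nat.pow_le_pow_right hp.pos hab
  obtain ⟨i, hi⟩ := exists_map_map_algebraMap_eq (K N) P
  have hPK := hhom.map (algebraMap F (K N))
  rw [← hi] at hirr htan
  obtain ⟨r, hr⟩ := exists_pderiv_ne_zero_of_simpleTangencyPlane_map i htan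
  simp only [← Nat.cast_pow, ← hcard N (by omega)]
  refine ⟨?_, ?_, fun L => ?_⟩
  · rw [one_mul]
    exact abs_ncard_curve_sub_card_le hK hab hba (by omega) hirr hPK (by norm_num) hr
  · rw [one_div, inv_mul_le_iff₀ (by norm_num)]
    exact_mod_cast hrich (K N) i _ a b hPK hi hK hab hba (by omega)
  · exact ncard_curve_inter_line_le i hirr hPK (by norm_num) L.rep_nonzero

end IncidenceProb
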